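/- For any countable acylindrically hyperbolic group G, there exists a generating set S of G such that the Cayley graph Γ(G,S) is hyperbolic, the Gromov boundary ∂Γ(G,S) has more than 2 points, the natural action of G on Γ(G,S) is acylindrical, and the orbit equivalence relation of the natural action of G on ∂Γ(G,S) is a hyperfinite countable Borel equivalence relation. -/

import Mathlib

open scoped ENNReal

noncomputable section

namespace ArXiv

/-! ### Gromov products, hyperbolicity and the Gromov boundary,
for a general distance function -/

variable {α : Type*}

/-- The Gromov product of `x` and `y` at `o` with respect to the distance function `d`. -/
def gprod (d : α → α → ℝ) (x y o : α) : ℝ := (d x o + d y o - d x y) / 2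

/-- The four-point δ-hyperbolicity condition. -/
def HyperbolicWith (d : α → α → ℝ) (δ : ℝ) : Prop :=
  ∀ w x y z : α, min (gprod d x y w) (gprod d y z w) - δ ≤ gprod d x z w

/-- Gromov hyperbolicity of the distance function `d`. -/
def IsHyperbolic (d : α → α → ℝ) : Prop := ∃ δ : ℝ, 0 ≤ δ ∧ HyperbolicWith d δ

/-- A sequence converges to infinity: the Gromov products at some (equivalently, any)
basepoint tend to infinity. -/
def ConvInf (d : α → α → ℝ) (x : ℕ → α) : Prop :=
  ∀ o : α, ∀ R : ℝ, ∃ N : ℕ, ∀ i, N ≤ i → ∀ j, N ≤ j → R ≤ gprod d (x i) (x j) o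

/-- Sequences converging to infinity. -/
abbrev BSeq (d : α → α → ℝ) := {x : ℕ → α // ConvInf d x}

/-- The equivalence of sequences converging to infinity defining the Gromov boundary. -/
def BRel (d : α → α → ℝ) (x y : BSeq d) : Prop :=
  ∀ o : α, ∀ R : ℝ, ∃ N : ℕ, ∀ i, N ≤ i → ∀ j, N ≤ j → R ≤ gprod d (x.1 i) (y.1 j) o

/-- The (sequential) Gromov boundary of `(α, d)`. -/
abbrev Bdry (d : α → α → ℝ) := Quot (BRel d)

/-- The extension of the Gromov product at `o` to boundary points. -/
def bgp (d : α → α → ℝ) (o : α) (ξ η : Bdry d) : EReal :=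
  sSup {r : EReal | ∃ x y : BSeq d, Quot.mk (BRel d) x = ξ ∧ Quot.mk (BRel d) y = η ∧
    r = Filter.liminf
      (fun pq : ℕ × ℕ => ((gprod d (x.1 pq.1) (y.1 pq.2) o : ℝ) : EReal)) Filter.atTop}

/-- The canonical topology on the Gromov boundary, generated by the sets
`{η | (ξ,η)_o > n}`. -/
def bdryTop (d : α → α → ℝ) : TopologicalSpace (Bdry d) :=
  TopologicalSpace.generateFrom
    {U : Set (Bdry d) | ∃ (ξ : Bdry d) (o : α) (n : ℝ), U = {η | (n : EReal) < bgp d o ξ η}}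

/-! ### Cayley graphs, acylindrical actions, and hyperfinite CBERs -/

variable {G : Type*} [Group G]

/-- The graph metric of the Cayley graph `Γ(G,S)`: the word metric with respect to
`S ∪ S⁻¹`. -/
def wdist (S : Set G) (g h : G) : ℝ :=
  sInf {r : ℝ | ∃ L : List G, (∀ x ∈ L, x ∈ S ∨ x⁻¹ ∈ S) ∧ g * L.prod = h ∧
    r = (L.length : ℝ)}

/-- The natural (left multiplication) action of `G` on `(G, d)` is acylindrical:
for every `ε > 0` there are `R, N > 0` such that for all `x, y` with `d(x,y) ≥ R`
the set `{g | d(x,gx) ≤ ε ∧ d(y,gy) ≤ ε}` has at most `N` elements. -/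
def AcylDist (d : G → G → ℝ) : Prop :=
  ∀ ε : ℝ, 0 < ε → ∃ R : ℝ, 0 < R ∧ ∃ N : ℕ, 0 < N ∧ ∀ x y : G, R ≤ d x y →
    {g : G | d x (g * x) ≤ ε ∧ d y (g * y) ≤ ε}.Finite ∧
    {g : G | d x (g * x) ≤ ε ∧ d y (g * y) ≤ ε}.ncard ≤ N

/-- `η` is the image of `ξ` under the natural action of `g ∈ G` on the Gromov boundary
of `(G, d)` (the action extending left multiplication). -/
def bAct (d : G → G → ℝ) (g : G) (ξ η : Bdry d) : Prop :=
  ∃ (x : BSeq d) (h : ConvInf d fun n => g * x.1 n),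
    Quot.mk (BRel d) x = ξ ∧ Quot.mk (BRel d) (⟨fun n => g * x.1 n, h⟩ : BSeq d) = η

/-- The orbit equivalence relation of the natural action of `G` on the Gromov
boundary of `(G, d)`. -/
def OrbRel (d : G → G → ℝ) (ξ η : Bdry d) : Prop :=
  ∃ g : G, bAct d g ξ η

/-- The equivalence relation `E` on `β` is a countable Borel equivalence relation with
respect to the σ-algebra `m`. -/
def IsCBER {β : Type*} (m : MeasurableSpace β) (E : β → β → Prop) : Prop :=
  Equivalence E ∧ @MeasurableSet (β × β) (m.prod m) {p : β × β | E p.1 p.2} ∧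
    ∀ x : β, {y : β | E x y}.Countable

/-- The equivalence relation `E` on `β` is hyperfinite: an increasing union of finite
Borel equivalence relations. -/
def IsHyperfinite {β : Type*} (m : MeasurableSpace β) (E : β → β → Prop) : Prop :=
  ∃ F : ℕ → β → β → Prop,
    (∀ n, Equivalence (F n)) ∧
    (∀ n, @MeasurableSet (β × β) (m.prod m) {p : β × β | F n p.1 p.2}) ∧
    (∀ n x, {y : β | F n x y}.Finite) ∧
    (∀ n x y, F n x y → F (n + 1) x y) ∧
    ∀ x y, E x y ↔ ∃ n, F n x y

/-!
Let `G` act acylindrically on a hyperbolic Cayley graph. A loxodromic element has a virtually cyclic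
elementary closure `H`. In the graph obtained by coning off the cosets of `H`, a geodesic crosses
every coset from which its endpoints look far apart. Following Hull and Osin, a coset *separates*
`x` from `y` if some nearest points of `x` and `y` on it are far apart. Let `S` be the set of the
`g` for which at most one coset separates `1` from `g`. The cosets separating two points are
linearly ordered by their distance from the first one, which makes `Γ(G, S)` hyperbolic and the
action on it acylindrical.

The action on `Γ(G, S)` is not proper, but a point has only finitely many nearest points on each
coset. A boundary point `ξ` is determined by its nearest points on all cosets, and its nearest
points on the cosets separating `1` from `ξ` form an infinite set `Y ξ ⊆ G`. Moving the base point
changes `Y ξ` by finitely many elements and shifts their distances to the base point by an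
eventually constant amount. So `Y` is equivariant up to finite sets. As in the work of Dougherty,
Jackson and Kechris on tail equivalence and of Marquis and Sabok on hyperbolic groups, refining `Y`
by a countable separating family of Borel sets exhibits the orbit equivalence relation as
hyperfinite.
-/

/-! ### Word metrics -/

section WordDist

/-- The word metric of `S` as a function to `ℕ`; it agrees with `wdist S` when `S` generates `G`,
see `wdist_eq_wordDist`. -/
def wordDist (S : Set G) (g h : G) : ℕ :=
  sInf {n : ℕ | ∃ L : List G, (∀ x ∈ L, x ∈ S ∨ x⁻¹ ∈ S) ∧ g * L.prod = h ∧ L.length = n}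

variable {S : Set G} {x y z : G}

theorem wordDist_le_length {L : List G} (hL : ∀ x ∈ L, x ∈ S ∨ x⁻¹ ∈ S) (hp : x * L.prod = y) :
    wordDist S x y ≤ L.length :=
  Nat.sInf_le ⟨L, hL, hp, rfl⟩

theorem wordDist_le_one_of_mem (h : x⁻¹ * y ∈ S) : wordDist S x y ≤ 1 :=
  wordDist_le_length (L := [x⁻¹ * y]) (by simp [h]) (by simp)

theorem wordDist_self (x : G) : wordDist S x x = 0 :=
  Nat.le_zero.1 (wordDist_le_length (L := []) (by simp) (by simp))

theorem wordDist_mul_left (g x y : G) : wordDist S (g * x) (g * y) = wordDist S x y := by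
  simp only [wordDist, mul_assoc, mul_right_inj]

variable (hS : Subgroup.closure S = ⊤)
include hS

theorem exists_list_length_eq_wordDist (x y : G) :
    ∃ L : List G, (∀ z ∈ L, z ∈ S ∨ z⁻¹ ∈ S) ∧ x * L.prod = y ∧ L.length = wordDist S x y := by
  have hmem : x⁻¹ * y ∈ Subgroup.closure S := hS ▸ Subgroup.mem_top _
  rw [← Subgroup.mem_toSubmonoid, Subgroup.closure_toSubmonoid] at hmem
  obtain ⟨L, hL, hprod⟩ := Submonoid.exists_list_of_mem_closure hmem
  simp only [Set.mem_union, Set.mem_inv] at hL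
  have hne : {n : ℕ | ∃ L : List G, (∀ z ∈ L, z ∈ S ∨ z⁻¹ ∈ S) ∧ x * L.prod = y ∧
      L.length = n}.Nonempty :=
    ⟨L.length, L, hL, by rw [hprod, mul_inv_cancel_left], rfl⟩
  exact Nat.sInf_mem hne

theorem wdist_eq_wordDist : wdist S = fun x y => (wordDist S x y : ℝ) := by
  funext x y
  obtain ⟨L, hL, hprod, hlen⟩ := exists_list_length_eq_wordDist hS x y
  refine IsLeast.csInf_eq ⟨⟨L, hL, hprod, by rw [hlen]⟩, ?_⟩
  rintro _ ⟨L', hL', hprod', rfl⟩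
  exact_mod_cast wordDist_le_length hL' hprod'

theorem eq_of_wordDist_eq_zero (h : wordDist S x y = 0) : x = y := by
  obtain ⟨L, -, hprod, hlen⟩ := exists_list_length_eq_wordDist hS x y
  obtain rfl : L = [] := List.length_eq_zero_iff.1 (hlen.trans h)
  simpa using hprod

theorem wordDist_triangle (x y z : G) : wordDist S x z ≤ wordDist S x y + wordDist S y z := by
  obtain ⟨L, hL, hprod, hlen⟩ := exists_list_length_eq_wordDist hS x y
  obtain ⟨L', hL', hprod', hlen'⟩ := exists_list_length_eq_wordDist hS y z
  rw [← hlen, ← hlen', ← List.length_append]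
  refine wordDist_le_length (fun w hw => (List.mem_append.1 hw).elim (hL w) (hL' w)) ?_
  rw [List.prod_append, ← mul_assoc, hprod, hprod']

theorem wordDist_comm (x y : G) : wordDist S x y = wordDist S y x := by
  suffices h : ∀ x y, wordDist S x y ≤ wordDist S y x from (h x y).antisymm (h y x)
  intro x y
  obtain ⟨L, hL, hprod, hlen⟩ := exists_list_length_eq_wordDist hS y x
  have hinv : ∀ z ∈ (L.map (·⁻¹)).reverse, z ∈ S ∨ z⁻¹ ∈ S := by
    intro z hz
    obtain ⟨w, hw, rfl⟩ := List.mem_map.1 (List.mem_reverse.1 hz)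
    rw [inv_inv]
    exact (hL w hw).symm
  have hle := wordDist_le_length (x := x) (y := y) hinv
    (by rw [← List.prod_inv_reverse, ← hprod, mul_inv_cancel_right])
  simpa [hlen] using hle

theorem exists_wordDist_eq_add {k : ℕ} (hk : k ≤ wordDist S x y) :
    ∃ z, wordDist S x z = k ∧ wordDist S x y = k + wordDist S z y := by
  obtain ⟨L, hL, hprod, hlen⟩ := exists_list_length_eq_wordDist hS x y
  have hleft : wordDist S x (x * (L.take k).prod) ≤ (L.take k).length :=
    wordDist_le_length (fun z hz => hL z (List.mem_of_mem_take hz)) rfl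
  have hright : wordDist S (x * (L.take k).prod) y ≤ (L.drop k).length :=
    wordDist_le_length (fun z hz => hL z (List.mem_of_mem_drop hz))
      (by rw [mul_assoc, ← List.prod_append, List.take_append_drop, hprod])
  have htri := wordDist_triangle hS x (x * (L.take k).prod) y
  rw [List.length_take] at hleft
  rw [List.length_drop] at hright
  exact ⟨x * (L.take k).prod, by omega, by omega⟩

theorem eq_or_mem_of_wordDist_le_one (h : wordDist S x y ≤ 1) :
    x = y ∨ x⁻¹ * y ∈ S ∨ y⁻¹ * x ∈ S := by
  obtain ⟨L, hL, hprod, hlen⟩ := exists_list_length_eq_wordDist hS x y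
  match L, hlen.trans_le h with
  | [], _ => exact Or.inl (by simpa using hprod)
  | [z], _ =>
    obtain rfl : z = x⁻¹ * y := by simp [← hprod]
    simpa using Or.inr (hL _ List.mem_cons_self)

end WordDist

/-- A left-invariant metric on `G` with values in `ℕ` in which any two points are joined by a
discrete geodesic, such as a word metric. -/
structure GraphDist (n : G → G → ℕ) : Prop where
  self : ∀ x, n x x = 0
  eq_of_eq_zero : ∀ {x y}, n x y = 0 → x = y
  comm : ∀ x y, n x y = n y x
  tri : ∀ x y z, n x z ≤ n x y + n y z
  inv : ∀ g x y, n (g * x) (g * y) = n x y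
  exists_between : ∀ {x y k}, k ≤ n x y → ∃ z, n x z = k ∧ n x y = k + n z y

theorem graphDist_wordDist {S : Set G} (hS : Subgroup.closure S = ⊤) : GraphDist (wordDist S) where
  self := wordDist_self
  eq_of_eq_zero := eq_of_wordDist_eq_zero hS
  comm := wordDist_comm hS
  tri := wordDist_triangle hS
  inv := wordDist_mul_left
  exists_between := exists_wordDist_eq_add hS

/-- The properties of a `GraphDist`, for a real-valued distance function. -/
structure GraphMetric (d : G → G → ℝ) : Prop where
  self : ∀ x, d x x = 0
  eq_of_eq_zero : ∀ {x y}, d x y = 0 → x = y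
  comm : ∀ x y, d x y = d y x
  tri : ∀ x y z, d x z ≤ d x y + d y z
  inv : ∀ g x y, d (g * x) (g * y) = d x y
  exists_between : ∀ {x y} {k : ℕ}, (k : ℝ) ≤ d x y → ∃ z, d x z = k ∧ d x y = k + d z y

theorem GraphDist.graphMetric {n : G → G → ℕ} (h : GraphDist n) :
    GraphMetric fun x y => (n x y : ℝ) where
  self x := by simp [h.self]
  eq_of_eq_zero hxy := h.eq_of_eq_zero (by exact_mod_cast hxy)
  comm x y := by simp [h.comm x y]
  tri x y z := by exact_mod_cast h.tri x y z
  inv g x y := by simp [h.inv]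
  exists_between hk := by
    obtain ⟨z, hxz, hzy⟩ := h.exists_between (Nat.cast_le.1 hk)
    exact ⟨z, by exact_mod_cast hxz, by exact_mod_cast hzy⟩

namespace GraphMetric

variable {d : G → G → ℝ} (hd : GraphMetric d)
include hd

theorem nonneg (x y : G) : 0 ≤ d x y := by
  linarith [hd.tri x y x, hd.self x, hd.comm x y]

theorem dist_eq_dist_one (x y : G) : d x y = d 1 (x⁻¹ * y) := by
  rw [← hd.inv x⁻¹, inv_mul_cancel]

theorem dist_one_inv (x : G) : d 1 x⁻¹ = d 1 x := by
  rw [← hd.inv x, mul_one, mul_inv_cancel, hd.comm]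

end GraphMetric

/-! ### Hyperbolicity -/

theorem gprod_comm {d : α → α → ℝ} (hd : ∀ x y, d x y = d y x) (x y o : α) :
    gprod d x y o = gprod d y x o := by
  simp only [gprod, hd x y, add_comm]

namespace HyperbolicWith

variable {d : α → α → ℝ} {δ : ℝ} (hδ : HyperbolicWith d δ)
include hδ

theorem four_point (x y z w : α) :
    d x z + d y w ≤ d x y + d z w + 2 * δ ∨ d x z + d y w ≤ d y z + d x w + 2 * δ := by
  have h := hδ w x y z
  rw [sub_le_iff_le_add, min_le_iff] at h
  simp only [gprod] at h
  exact h.imp (fun h => by linarith) fun h => by linarith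

theorem gprod_le_of_lt {x y z o : α} (h : gprod d x z o + δ < gprod d x y o) :
    gprod d y z o ≤ gprod d x z o + δ := by
  have hmin := hδ o x y z
  rw [sub_le_iff_le_add, min_le_iff] at hmin
  exact hmin.resolve_left (not_le.2 h)

end HyperbolicWith

/-! ### Loxodromic elements -/

section Loxodromic

variable {d : G → G → ℝ} {δ : ℝ}

theorem GraphMetric.exists_gprod_le_of_ne (hd : GraphMetric d) {ξ η : Bdry d} (hne : ξ ≠ η) :
    ∃ M : ℝ, ∀ L : ℝ, ∃ x y : G, L ≤ d 1 x ∧ L ≤ d 1 y ∧ gprod d x y 1 ≤ M := by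
  obtain ⟨x, rfl⟩ := Quot.exists_rep ξ
  obtain ⟨y, rfl⟩ := Quot.exists_rep η
  have hrel : ¬ BRel d x y := fun h => hne (Quot.sound h)
  simp only [BRel, not_forall, not_exists, not_le] at hrel
  obtain ⟨o, M, hM⟩ := hrel
  refine ⟨M, fun L => ?_⟩
  obtain ⟨N₁, hN₁⟩ := x.2 o L
  obtain ⟨N₂, hN₂⟩ := y.2 o L
  obtain ⟨i, hi, j, hj, hij⟩ := hM (max N₁ N₂)
  have hxi := hN₁ i ((le_max_left _ _).trans hi) i ((le_max_left _ _).trans hi)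
  have hyj := hN₂ j ((le_max_right _ _).trans hj) j ((le_max_right _ _).trans hj)
  have hinv : ∀ z, d 1 (o⁻¹ * z) = d z o := fun z => by rw [← hd.dist_eq_dist_one, hd.comm]
  simp only [gprod, hd.self] at hxi hyj hij
  refine ⟨o⁻¹ * x.1 i, o⁻¹ * y.1 j, by rw [hinv]; linarith, by rw [hinv]; linarith, ?_⟩
  simp only [gprod, hd.comm _ (1 : G), hinv, hd.inv]
  linarith

theorem GraphMetric.gprod_inv_one (hd : GraphMetric d) (x : G) :
    gprod d x x⁻¹ 1 = d 1 x - d 1 (x * x) / 2 := by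
  have hxx : d x x⁻¹ = d 1 (x * x) := by rw [hd.comm, hd.dist_eq_dist_one, inv_inv]
  rw [gprod, hd.comm x 1, hd.comm _ 1, hd.dist_one_inv, hxx]
  ring

theorem GraphMetric.gprod_mul_inv_one (hd : GraphMetric d) (x y : G) :
    gprod d x (x * y⁻¹) 1 = (d 1 x + d 1 (x * y⁻¹) - d 1 y) / 2 := by
  rw [gprod, hd.comm x 1, hd.comm _ 1, hd.dist_eq_dist_one x, inv_mul_cancel_left,
    hd.dist_one_inv]

/-- If every `a` had `d 1 (a * a)` small, then `(x⁻¹, x)` would be large for all `x`. Applied to two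
far points `x`, `y` with small product `(x, y)` this makes `(x⁻¹, y⁻¹)`, and hence `(g, g⁻¹)` for
`g = x * y⁻¹`, small, a contradiction. -/
theorem GraphMetric.exists_add_le_dist_mul_self (hd : GraphMetric d) (hδ : HyperbolicWith d δ)
    {ξ η : Bdry d} (hne : ξ ≠ η) (c : ℝ) : ∃ a : G, d 1 a + c ≤ d 1 (a * a) := by
  obtain ⟨M, hM⟩ := hd.exists_gprod_le_of_ne hne
  by_contra! hsmall
  obtain ⟨x, y, hx, hy, hxy⟩ := hM (max 0 c + 2 * max 0 M + 10 * max 0 δ + 1)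
  have := le_max_left 0 c
  have := le_max_right 0 c
  have := le_max_left 0 M
  have := le_max_right 0 M
  have := le_max_left 0 δ
  have := le_max_right 0 δ
  have hself (z : G) : (d 1 z - c) / 2 < gprod d z z⁻¹ 1 := by
    rw [hd.gprod_inv_one]
    linarith [hsmall z]
  have hx'y : gprod d x⁻¹ y 1 ≤ M + δ :=
    (hδ.gprod_le_of_lt (by linarith [hself x])).trans (by linarith)
  have hy'x' : gprod d y⁻¹ x⁻¹ 1 ≤ M + 2 * δ := by
    rw [gprod_comm hd.comm] at hx'y
    exact (hδ.gprod_le_of_lt (by linarith [hself y])).trans (by linarith)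
  set g := x * y⁻¹ with hg
  have hg_inv : g⁻¹ = y * x⁻¹ := by rw [hg, mul_inv_rev, inv_inv]
  have hlong : d 1 x + d 1 y ≤ d 1 g + 2 * M + 4 * δ := by
    have hg_dist : d y⁻¹ x⁻¹ = d 1 g := by rw [hd.comm, hd.dist_eq_dist_one, inv_inv]
    simp only [gprod, hd.comm _ (1 : G), hd.dist_one_inv, hg_dist] at hy'x'
    linarith
  have hgx : gprod d x g 1 = (d 1 x + d 1 g - d 1 y) / 2 := hd.gprod_mul_inv_one x y
  have hgy : gprod d y g⁻¹ 1 = (d 1 y + d 1 g - d 1 x) / 2 := by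
    rw [← hd.dist_one_inv g, hg_inv, hd.gprod_mul_inv_one]
  have hyg : gprod d g y 1 ≤ M + δ :=
    (hδ.gprod_le_of_lt (by linarith)).trans (by linarith)
  have hg'g : gprod d g⁻¹ g 1 ≤ M + 2 * δ := by
    rw [gprod_comm hd.comm] at hyg
    exact (hδ.gprod_le_of_lt (by linarith)).trans (by linarith)
  have := hself g
  rw [gprod_comm hd.comm] at hg'g
  linarith

/-- A loxodromic element of a group acting on itself with a hyperbolic metric, recognised by the
local condition that `d 1 (a * a)` exceeds `d 1 a` by more than the hyperbolicity constant allows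
for elements with bounded orbits. -/
structure IsLoxodromic (d : G → G → ℝ) (δ : ℝ) (a : G) : Prop where
  geo : GraphMetric d
  hyp : HyperbolicWith d δ
  δ_nonneg : 0 ≤ δ
  dist_sq : d 1 a + (3 * δ + 1) ≤ d 1 (a * a)

theorem exists_and_or_succ_of_forall_or {P Q : ℤ → Prop} {i j : ℤ} (hij : i ≤ j) (hi : P i)
    (hj : Q j) (hPQ : ∀ l, P l ∨ Q l) : ∃ l, i ≤ l ∧ l ≤ j ∧ P l ∧ (Q l ∨ l < j ∧ Q (l + 1)) := by
  by_contra! hcon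
  have hP : ∀ l, i ≤ l → l ≤ j → P l := by
    intro l hil
    induction l, hil using Int.leInduction with
    | base => exact fun _ => hi
    | succ l hil ih =>
      intro hlj
      exact (hPQ (l + 1)).resolve_right
        ((hcon l hil (by omega) (ih (by omega))).2 (by omega))
  exact (hcon j hij le_rfl (hP j hij le_rfl)).1 hj

namespace IsLoxodromic

variable {a : G} (h : IsLoxodromic d δ a)
include h

theorem dist_pow_pow_add (p q : ℕ) : d (a ^ p) (a ^ (p + q)) = d 1 (a ^ q) := by
  rw [h.geo.dist_eq_dist_one, pow_add, inv_mul_cancel_left]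

theorem dist_pow_add_le_dist_pow_succ (n : ℕ) :
    d 1 (a ^ n) + (δ + 1) ≤ d 1 (a ^ (n + 1)) := by
  have hδ := h.δ_nonneg
  have hsq := h.dist_sq
  induction n with
  | zero =>
    have htri := h.geo.tri 1 a (a * a)
    have hstep : d a (a * a) = d 1 a := by simpa using h.geo.inv a 1 a
    rw [pow_zero, h.geo.self, zero_add, zero_add, pow_one]
    linarith
  | succ n ih =>
    have hfour := h.hyp.four_point 1 (a ^ n) (a ^ (n + 1)) (a ^ (n + 2))
    rw [h.dist_pow_pow_add, h.dist_pow_pow_add, h.dist_pow_pow_add (n + 1) 1, pow_one,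
      pow_two] at hfour
    rcases hfour with hfour | hfour <;> linarith

theorem natCast_le_dist_pow (n : ℕ) : (n : ℝ) ≤ d 1 (a ^ n) := by
  induction n with
  | zero => simp [h.geo.self]
  | succ n ih =>
    push_cast
    linarith [h.dist_pow_add_le_dist_pow_succ n, h.δ_nonneg]

theorem dist_pow_add_dist_pow_le (p q : ℕ) :
    d 1 (a ^ p) + d 1 (a ^ q) ≤ d 1 (a ^ (p + q)) + (d 1 a + 2 * δ) := by
  have hδ := h.δ_nonneg
  have ha := h.geo.nonneg 1 a
  rcases q with _ | q
  · rw [pow_zero, h.geo.self, add_zero p]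
    linarith
  · have hfour := h.hyp.four_point 1 (a ^ p) (a ^ (p + 1)) (a ^ (p + (q + 1)))
    have hmid : d (a ^ (p + 1)) (a ^ (p + (q + 1))) = d 1 (a ^ q) := by
      rw [← h.dist_pow_pow_add (p + 1), add_right_comm, add_assoc]
    rw [h.dist_pow_pow_add, h.dist_pow_pow_add, hmid, pow_one] at hfour
    have hp := h.dist_pow_add_le_dist_pow_succ p
    have hq := h.dist_pow_add_le_dist_pow_succ q
    rcases hfour with hfour | hfour <;> linarith

theorem dist_zpow_zpow (i j : ℤ) : d (a ^ i) (a ^ j) = d 1 (a ^ (j - i).natAbs) := by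
  rw [h.geo.dist_eq_dist_one, ← zpow_neg, ← zpow_add, neg_add_eq_sub]
  rcases Int.natAbs_eq (j - i) with hij | hij
  · conv_lhs => rw [hij, zpow_natCast]
  · conv_lhs => rw [hij, zpow_neg, zpow_natCast, h.geo.dist_one_inv]

theorem natAbs_sub_le_dist_zpow (i j : ℤ) : ((j - i).natAbs : ℝ) ≤ d (a ^ i) (a ^ j) := by
  rw [h.dist_zpow_zpow]
  exact h.natCast_le_dist_pow _

theorem dist_zpow_succ (i : ℤ) : d (a ^ i) (a ^ (i + 1)) = d 1 a := by
  simp [h.dist_zpow_zpow]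

theorem dist_zpow_add_dist_zpow_le {i j k : ℤ} (hij : i ≤ j) (hjk : j ≤ k) :
    d (a ^ i) (a ^ j) + d (a ^ j) (a ^ k) ≤ d (a ^ i) (a ^ k) + (d 1 a + 2 * δ) := by
  have hik : (k - i).natAbs = (j - i).natAbs + (k - j).natAbs := by omega
  simp only [h.dist_zpow_zpow, hik]
  exact h.dist_pow_add_dist_pow_le _ _

/-- Each `a ^ l` is close to one of the two sides through `z` of the triangle `a ^ i`, `z`, `a ^ j`;
where the side changes, `a ^ l` is close to both, hence to the centre of the triangle. -/
theorem exists_dist_zpow_le_gprod_of_le {i j : ℤ} (hij : i ≤ j) (z : G) :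
    ∃ l : ℤ, d z (a ^ l) ≤ gprod d (a ^ i) (a ^ j) z + (2 * d 1 a + 4 * δ) := by
  have hδ := h.δ_nonneg
  have ha := h.geo.nonneg 1 a
  set s := d (a ^ i) z + d (a ^ j) z - d (a ^ i) (a ^ j)
  have hgprod : gprod d (a ^ i) (a ^ j) z = s / 2 := rfl
  obtain ⟨l, hil, hlj, hl, hl'⟩ := exists_and_or_succ_of_forall_or hij
    (P := fun l => d (a ^ l) z + d (a ^ j) z ≤ d (a ^ l) (a ^ j) + s + 2 * δ)
    (Q := fun l => d (a ^ i) z + d (a ^ l) z ≤ d (a ^ i) (a ^ l) + s + 2 * δ)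
    (by linarith) (by linarith) fun l => by
      rcases h.hyp.four_point (a ^ i) (a ^ l) (a ^ j) z with hl | hl
      · exact Or.inr (by linarith)
      · exact Or.inl (by linarith)
  have hl'' : d (a ^ i) z + d (a ^ l) z ≤ d (a ^ i) (a ^ l) + s + 2 * δ + 2 * d 1 a := by
    rcases hl' with hl' | ⟨-, hl'⟩
    · linarith
    · have hstep := h.dist_zpow_succ l
      have htri := h.geo.tri (a ^ l) (a ^ (l + 1)) z
      have htri' := h.geo.tri (a ^ i) (a ^ l) (a ^ (l + 1))
      linarith
  have hquasi := h.dist_zpow_add_dist_zpow_le hil hlj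
  refine ⟨l, ?_⟩
  rw [h.geo.comm, hgprod]
  rcases h.hyp.four_point (a ^ i) z (a ^ j) (a ^ l) with _ | _ <;>
    linarith [h.geo.comm z (a ^ l), h.geo.comm z (a ^ j), h.geo.comm (a ^ j) (a ^ l)]

theorem exists_dist_zpow_le_gprod (i j : ℤ) (z : G) :
    ∃ l : ℤ, d z (a ^ l) ≤ gprod d (a ^ i) (a ^ j) z + (2 * d 1 a + 4 * δ) := by
  rcases le_total i j with hij | hij
  · exact h.exists_dist_zpow_le_gprod_of_le hij z
  · rw [gprod_comm h.geo.comm]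
    exact h.exists_dist_zpow_le_gprod_of_le hij z

end IsLoxodromic

end Loxodromic

theorem conj_pow_eq_pow_of_mul_inv_eq {b c f : G} {k m : ℕ}
    (h : f * c ^ m * f⁻¹ * (b ^ m)⁻¹ = f * c ^ (m + k) * f⁻¹ * (b ^ (m + k))⁻¹) :
    f * c ^ k * f⁻¹ = b ^ k := by
  have h' : f * c ^ m * f⁻¹ * (b ^ m)⁻¹ =
      f * c ^ m * f⁻¹ * (f * c ^ k * f⁻¹) * (b ^ k)⁻¹ * (b ^ m)⁻¹ := by
    rw [h, add_comm, pow_add b, add_comm, pow_add c]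
    group
  rwa [mul_left_inj, mul_assoc _ _ (b ^ k)⁻¹, left_eq_mul, mul_inv_eq_one] at h'

theorem conj_zpow_zpow {a g : G} {k l : ℤ} (h : g * a ^ k * g⁻¹ = a ^ l) (m : ℤ) :
    g * a ^ (k * m) * g⁻¹ = a ^ (l * m) := by
  rw [zpow_mul, ← conj_zpow, h, ← zpow_mul]

/-- The elementary closure of `a`: the elements conjugating some positive power of `a` to itself or
to its inverse. -/
def elemClosure (a : G) : Subgroup G where
  carrier := {g | ∃ k : ℕ, 0 < k ∧ ∃ ε : ℤ, (ε = 1 ∨ ε = -1) ∧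
    g * a ^ (k : ℤ) * g⁻¹ = a ^ (ε * k)}
  one_mem' := ⟨1, one_pos, 1, Or.inl rfl, by simp⟩
  mul_mem' := by
    rintro g h ⟨k, hk, ε, hε, hg⟩ ⟨l, hl, ε', hε', hh⟩
    refine ⟨k * l, Nat.mul_pos hk hl, ε * ε', ?_, ?_⟩
    · rcases hε with rfl | rfl <;> rcases hε' with rfl | rfl <;> simp
    · have hh' := conj_zpow_zpow hh k
      have hg' := conj_zpow_zpow hg (ε' * l)
      calc g * h * a ^ ((k * l : ℕ) : ℤ) * (g * h)⁻¹
          = g * (h * a ^ ((l : ℤ) * k) * h⁻¹) * g⁻¹ := by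
            push_cast; rw [mul_comm (l : ℤ) k]; group
        _ = g * a ^ ((k : ℤ) * (ε' * l)) * g⁻¹ := by rw [hh']; congr 3; ring
        _ = a ^ (ε * ε' * (k * l : ℕ)) := by rw [hg']; push_cast; congr 1; ring
  inv_mem' := by
    rintro g ⟨k, hk, ε, hε, hg⟩
    refine ⟨k, hk, ε, hε, ?_⟩
    have hg' := conj_zpow_zpow hg ε
    have hεε : ε * k * ε = k := by rcases hε with rfl | rfl <;> ring
    rw [hεε] at hg'
    rw [← hg', mul_comm ε]
    group

theorem mem_elemClosure {a g : G} : g ∈ elemClosure a ↔ ∃ k : ℕ, 0 < k ∧ ∃ ε : ℤ,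
    (ε = 1 ∨ ε = -1) ∧ g * a ^ (k : ℤ) * g⁻¹ = a ^ (ε * k) := Iff.rfl

theorem zpow_mem_elemClosure (a : G) (i : ℤ) : a ^ i ∈ elemClosure a :=
  ⟨1, one_pos, 1, Or.inl rfl, by simp [← zpow_neg, ← zpow_add_one, ← zpow_add]⟩

theorem HyperbolicWith.bRel_of_frequently_le_gprod {d : α → α → ℝ} {δ : ℝ}
    (hδ : HyperbolicWith d δ) {x y : BSeq d}
    (hxy : ∀ (o : α) (R : ℝ) (N : ℕ), ∃ i ≥ N, ∃ j ≥ N, R ≤ gprod d (x.1 i) (y.1 j) o) :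
    BRel d x y := by
  intro o R
  obtain ⟨M, hM⟩ := x.2 o (R + 2 * max 0 δ)
  obtain ⟨N, hN⟩ := y.2 o (R + 2 * max 0 δ)
  obtain ⟨i₀, hi₀, j₀, hj₀, h₀⟩ := hxy o (R + 2 * max 0 δ) (max M N)
  refine ⟨max M N, fun i hi j hj => ?_⟩
  have hx := hM i ((le_max_left _ _).trans hi) i₀ ((le_max_left _ _).trans hi₀)
  have hy := hN j₀ ((le_max_right _ _).trans hj₀) j ((le_max_right _ _).trans hj)
  have hδ₀ := le_max_left 0 δ
  have hδ₁ := le_max_right 0 δ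
  have hx₀y : R + max 0 δ ≤ gprod d (x.1 i₀) (y.1 j) o := by
    linarith [hδ o (x.1 i₀) (y.1 j₀) (y.1 j), le_min h₀ hy]
  have hx' : R + max 0 δ ≤ gprod d (x.1 i) (x.1 i₀) o := by linarith
  linarith [hδ o (x.1 i) (x.1 i₀) (y.1 j), le_min hx' hx₀y]

/-! ### Elementary closures -/

section ElementaryClosure

variable {d : G → G → ℝ} {δ : ℝ} {a : G}

theorem GraphMetric.dist_mul_right_self (hd : GraphMetric d) (g x : G) : d g (g * x) = d 1 x := by
  simpa using hd.inv g 1 x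

theorem GraphMetric.gprod_le_gprod_add (hd : GraphMetric d) (x y o x' y' o' : G) :
    gprod d x y o ≤ gprod d x' y' o' + (d x x' + d y y' + d o o') := by
  unfold gprod
  linarith [hd.tri x x' o, hd.tri x' o' o, hd.tri y y' o, hd.tri y' o' o, hd.tri x' x y',
    hd.tri x y y', hd.comm x x', hd.comm o o']

theorem GraphMetric.dist_one_pow_le (hd : GraphMetric d) (a : G) (n : ℕ) :
    d 1 (a ^ n) ≤ n * d 1 a := by
  induction n with
  | zero => simp [hd.self]
  | succ n ih =>
    have htri := hd.tri 1 (a ^ n) (a ^ (n + 1))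
    rw [pow_succ, hd.dist_mul_right_self] at htri
    rw [pow_succ]
    push_cast
    linarith

namespace IsLoxodromic

theorem inv (h : IsLoxodromic d δ a) : IsLoxodromic d δ a⁻¹ :=
  ⟨h.geo, h.hyp, h.δ_nonneg, by
    rw [← mul_inv_rev, h.geo.dist_one_inv, h.geo.dist_one_inv]; exact h.dist_sq⟩

/-- For large `N` the point `g` is nearly between `g * a ^ (-N)` and `g * a ^ N`, which are at
distance `d 1 g` from powers of `a`. -/
theorem exists_dist_zpow_le (h : IsLoxodromic d δ a) {g : G} (hg : g ∈ elemClosure a) :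
    ∃ l : ℤ, d g (a ^ l) ≤ 3 * d 1 a + 7 * δ := by
  have hδ := h.δ_nonneg
  have ha := h.geo.nonneg 1 a
  obtain ⟨k, hk, ε, -, hconj⟩ := mem_elemClosure.1 hg
  obtain ⟨n, hn⟩ := exists_nat_gt (d 1 g + d 1 a + 6 * δ)
  have hclose (m : ℤ) : d (g * a ^ (k * m)) (a ^ (ε * k * m)) = d 1 g := by
    rw [← conj_zpow_zpow hconj m, h.geo.dist_mul_right_self, h.geo.dist_one_inv]
  have hfar (m : ℤ) (hm : m.natAbs = n) : n ≤ d g (g * a ^ (k * m)) := by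
    rw [h.geo.dist_mul_right_self, ← zpow_zero a]
    refine le_trans ?_ (h.natAbs_sub_le_dist_zpow _ _)
    rw [sub_zero, Int.natAbs_mul, hm, Int.natAbs_natCast]
    exact_mod_cast Nat.le_mul_of_pos_left n hk
  have hmiddle : gprod d (g * a ^ ((k : ℤ) * -n)) (g * a ^ ((k : ℤ) * n)) g
      ≤ (d 1 a + 2 * δ) / 2 := by
    have hkn : 0 ≤ (k : ℤ) * n := by positivity
    have := h.dist_zpow_add_dist_zpow_le (i := k * -n) (j := 0) (k := k * n) (by linarith) hkn
    rw [zpow_zero, h.geo.comm _ 1] at this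
    rw [gprod, h.geo.inv, h.geo.comm _ g, h.geo.comm _ g, h.geo.dist_mul_right_self,
      h.geo.dist_mul_right_self]
    linarith
  have hlarge (m : ℤ) (hm : m.natAbs = n) :
      n - d 1 g ≤ gprod d (g * a ^ (k * m)) (a ^ (ε * k * m)) g := by
    have htri := h.geo.tri g (a ^ (ε * k * m)) (g * a ^ (k * m))
    rw [h.geo.comm (a ^ (ε * k * m)), hclose] at htri
    rw [gprod, hclose]
    linarith [hfar m hm, h.geo.comm g (g * a ^ (k * m)), h.geo.comm g (a ^ (ε * k * m))]
  have hcross : gprod d (g * a ^ ((k : ℤ) * n)) (a ^ (ε * k * -n)) g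
      ≤ (d 1 a + 2 * δ) / 2 + δ := by
    rw [gprod_comm h.geo.comm]
    exact (h.hyp.gprod_le_of_lt (by linarith [hlarge (-n) (by simp)])).trans (by linarith)
  have hpowers : gprod d (a ^ (ε * k * n)) (a ^ (ε * k * -n)) g
      ≤ (d 1 a + 2 * δ) / 2 + 2 * δ :=
    (h.hyp.gprod_le_of_lt (by linarith [hlarge n (by simp)])).trans (by linarith)
  obtain ⟨l, hl⟩ := h.exists_dist_zpow_le_gprod (ε * k * n) (ε * k * -n) g
  exact ⟨l, by linarith⟩

theorem exists_dist_le_gprod (h : IsLoxodromic d δ a) (p q z : G)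
    (hpq : p⁻¹ * q ∈ elemClosure a) :
    ∃ c : G, p⁻¹ * c ∈ elemClosure a ∧ d z c ≤ gprod d p q z + (5 * d 1 a + 11 * δ) := by
  obtain ⟨j, hj⟩ := h.exists_dist_zpow_le hpq
  obtain ⟨l, hl⟩ := h.exists_dist_zpow_le_gprod 0 j (p⁻¹ * z)
  refine ⟨p * a ^ l, by simpa using zpow_mem_elemClosure a l, ?_⟩
  have hmove := h.geo.gprod_le_gprod_add 1 (a ^ j) (p⁻¹ * z) 1 (p⁻¹ * q) (p⁻¹ * z)
  have htrans : gprod d p q z = gprod d 1 (p⁻¹ * q) (p⁻¹ * z) := by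
    simp only [gprod, ← h.geo.inv p (_ * _), ← h.geo.inv p 1, mul_inv_cancel_left, mul_one]
  have hz : d z (p * a ^ l) = d (p⁻¹ * z) (a ^ l) := by
    rw [← h.geo.inv p (p⁻¹ * z), mul_inv_cancel_left]
  rw [h.geo.self, h.geo.self, h.geo.comm (a ^ j), ← htrans] at hmove
  rw [zpow_zero] at hl
  linarith

theorem zpow_injective (h : IsLoxodromic d δ a) : Function.Injective (fun i : ℤ => a ^ i) := by
  intro i j hij
  have hle := h.natAbs_sub_le_dist_zpow i j
  dsimp only at hij
  rw [hij, h.geo.self] at hle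
  have : (j - i).natAbs = 0 := by exact_mod_cast hle.antisymm (Nat.cast_nonneg _)
  omega

theorem infinite_elemClosure (h : IsLoxodromic d δ a) : (elemClosure a : Set G).Infinite :=
  (Set.infinite_range_of_injective h.zpow_injective).mono
    (Set.range_subset_iff.2 (zpow_mem_elemClosure a))

/-- Any finite set of such elements commutes with a common power of `a`, so moves far points on the
axis of `a` by a bounded amount. -/
theorem finite_commute_pow (h : IsLoxodromic d δ a) (hac : AcylDist d) (D : ℝ) :
    {g : G | (∃ k : ℕ, 0 < k ∧ Commute g (a ^ k)) ∧ d 1 g ≤ D}.Finite := by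
  obtain ⟨R, -, N, -, hN⟩ := hac (|D| + 1) (by positivity)
  by_contra hinf
  obtain ⟨F, hF, hcard⟩ := Set.Infinite.exists_subset_card_eq hinf (N + 1)
  choose! k hk hcomm using fun g (hg : g ∈ F) => (hF hg).1
  obtain ⟨n, hn⟩ := exists_nat_gt R
  set b := a ^ ((∏ g ∈ F, k g) * n) with hb
  have hfar : R ≤ d 1 b := by
    refine le_trans (hn.le.trans ?_) (h.natCast_le_dist_pow _)
    exact_mod_cast Nat.le_mul_of_pos_left n (Finset.prod_pos hk)
  have hcomm_b (g : G) (hg : g ∈ F) : Commute g b := by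
    obtain ⟨m, hm⟩ := Finset.dvd_prod_of_mem k hg
    rw [hb, hm, mul_assoc, pow_mul]
    exact (hcomm g hg).pow_right _
  obtain ⟨hfin, hle⟩ := hN 1 b hfar
  have hsub : (F : Set G) ⊆ {g : G | d 1 (g * 1) ≤ |D| + 1 ∧ d b (g * b) ≤ |D| + 1} := by
    intro g hg
    have hgD : d 1 g ≤ D := (hF hg).2
    have hD := le_abs_self D
    refine ⟨by rw [mul_one]; linarith, ?_⟩
    rw [(hcomm_b g hg).eq, h.geo.dist_mul_right_self]
    linarith
  have := (Set.ncard_le_ncard hsub hfin).trans hle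
  rw [Set.ncard_coe_finset, hcard] at this
  omega

/-- Two elements inverting a power of `a` differ by an element commuting with a power of `a`. -/
theorem finite_elemClosure_dist_le (h : IsLoxodromic d δ a) (hac : AcylDist d) (D : ℝ) :
    {g : G | g ∈ elemClosure a ∧ d 1 g ≤ D}.Finite := by
  set I := {g : G | (∃ k : ℕ, 0 < k ∧ g * a ^ (k : ℤ) * g⁻¹ = a ^ (-(k : ℤ))) ∧ d 1 g ≤ D}
  have hI : I.Finite := by
    rcases I.eq_empty_or_nonempty with hI | ⟨g₀, ⟨k₀, hk₀, hg₀⟩, hD₀⟩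
    · exact hI ▸ Set.finite_empty
    refine ((h.finite_commute_pow hac (2 * D)).image (g₀ * ·)).subset ?_
    rintro g ⟨⟨k, hk, hg⟩, hD⟩
    refine ⟨g₀⁻¹ * g, ⟨⟨k * k₀, Nat.mul_pos hk hk₀, ?_⟩, ?_⟩, by simp⟩
    · have hinv := conj_zpow_zpow hg k₀
      have hinv₀ := conj_zpow_zpow hg₀ k
      rw [neg_mul, mul_comm (k : ℤ), ← neg_mul, ← hinv₀, mul_comm (k₀ : ℤ), mul_inv_eq_iff_eq_mul,
        ← Nat.cast_mul, zpow_natCast] at hinv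
      rw [Commute, SemiconjBy, mul_assoc, hinv]
      group
    · rw [← h.geo.dist_eq_dist_one]
      linarith [h.geo.tri g₀ 1 g, h.geo.comm g₀ 1]
  refine ((h.finite_commute_pow hac D).union hI).subset ?_
  rintro g ⟨hg, hD⟩
  obtain ⟨k, hk, ε, rfl | rfl, hconj⟩ := mem_elemClosure.1 hg
  · refine Or.inl ⟨⟨k, hk, ?_⟩, hD⟩
    rw [one_mul, mul_inv_eq_iff_eq_mul, zpow_natCast] at hconj
    exact hconj
  · exact Or.inr ⟨⟨k, hk, by rwa [neg_one_mul] at hconj⟩, hD⟩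

theorem dist_pow_mul_pow_le {b c f : G} (hb : IsLoxodromic d δ b) (hc : IsLoxodromic d δ c)
    (hbc : ∀ n, d 1 (c ^ n) = d 1 (b ^ n)) {m m' t : ℕ} {κ : ℝ} (hf : d 1 f ≤ κ)
    (hend : d (b ^ m) (f * c ^ m') ≤ κ) (htm : t ≤ m) (htm' : t ≤ m') :
    d (b ^ t) (f * c ^ t) ≤ d 1 b + 4 * δ + 3 * κ := by
  have hd := hb.geo
  obtain ⟨s, rfl⟩ := Nat.exists_eq_add_of_le htm
  obtain ⟨s', rfl⟩ := Nat.exists_eq_add_of_le htm'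
  have hb_quasi := hb.dist_pow_add_dist_pow_le t s
  have hc_quasi := hc.dist_pow_add_dist_pow_le t s'
  have hc_one : d 1 c = d 1 b := by simpa using hbc 1
  have hft : d f (f * c ^ t) = d 1 (b ^ t) := by rw [hd.dist_mul_right_self, hbc]
  have hfm : d f (f * c ^ (t + s')) = d 1 (c ^ (t + s')) := hd.dist_mul_right_self _ _
  have htm_dist : d (f * c ^ t) (f * c ^ (t + s')) = d 1 (c ^ s') := by
    rw [hd.inv, hc.dist_pow_pow_add]
  have hbt := hb.dist_pow_pow_add t s
  set p := b ^ t
  set q := f * c ^ t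
  set u := b ^ (t + s)
  set v := f * c ^ (t + s')
  rw [hbc t] at hc_quasi
  rcases hb.hyp.four_point p 1 q u with hfour | hfour <;>
    linarith [hd.tri 1 f q, hd.tri q v u, hd.tri f u v, hd.tri f 1 u, hd.comm f 1, hd.comm u v,
      hd.comm p 1, hd.comm q 1, hd.nonneg 1 f]

/-- The elements `f * c ^ l * f⁻¹ * b ^ (-l)` with `l ≤ N` move two far apart points on the axis of
`b` by a bounded amount, so two of them coincide by acylindricity. -/
theorem exists_conj_pow_eq_pow (hac : AcylDist d) {r : ℝ} (hr : 0 ≤ r) :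
    ∃ T : ℕ, ∀ b c f : G, IsLoxodromic d δ b → (∀ t ≤ T, d (b ^ t) (f * c ^ t) ≤ r) →
      ∃ k > 0, f * c ^ k * f⁻¹ = b ^ k := by
  obtain ⟨R, -, N, -, hN⟩ := hac (2 * r + 1) (by positivity)
  obtain ⟨s, hs⟩ := exists_nat_gt R
  refine ⟨N + s, fun b c f hb htrack => ?_⟩
  set γ : ℕ → G := fun l => f * c ^ l * f⁻¹ * (b ^ l)⁻¹
  have hmove (l t : ℕ) (hl : l ≤ N) (hNt : N ≤ t) (ht : t ≤ N + s) :
      d (b ^ t) (γ l * b ^ t) ≤ 2 * r + 1 := by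
    obtain ⟨t', rfl⟩ := Nat.exists_eq_add_of_le (hl.trans hNt)
    have hγ : γ l * b ^ (l + t') = f * c ^ l * f⁻¹ * b ^ t' := by
      rw [pow_add, ← mul_assoc, inv_mul_cancel_right]
    have hf : f * c ^ (l + t') = f * c ^ l * f⁻¹ * (f * c ^ t') := by rw [pow_add]; group
    have htri := hb.geo.tri (b ^ (l + t')) (f * c ^ (l + t')) (γ l * b ^ (l + t'))
    rw [hγ] at htri ⊢
    rw [hf, hb.geo.inv, ← hf, hb.geo.comm (f * c ^ t')] at htri
    linarith [htrack (l + t') ht, htrack t' (by omega)]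
  have hfar : R ≤ d (b ^ N) (b ^ (N + s)) := by
    rw [hb.dist_pow_pow_add]
    exact hs.le.trans (hb.natCast_le_dist_pow s)
  obtain ⟨hfin, hcard⟩ := hN _ _ hfar
  obtain ⟨x, y, hxy, hγ⟩ : ∃ x y, x < y ∧ γ x = γ y := by
    obtain ⟨x, -, y, -, hxy, hγ⟩ := Finset.exists_ne_map_eq_of_card_lt_of_maps_to
      (s := Finset.range (N + 1)) (t := hfin.toFinset) (f := γ)
      (by rw [← Set.ncard_eq_toFinset_card _ hfin, Finset.card_range]; omega) fun l hl => by
        rw [Finset.coe_range, Set.mem_Iio] at hl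
        rw [Set.Finite.coe_toFinset]
        exact ⟨hmove l N (by omega) le_rfl (by omega), hmove l _ (by omega) (by omega) le_rfl⟩
    rcases hxy.lt_or_gt with hxy | hxy
    exacts [⟨x, y, hxy, hγ⟩, ⟨y, x, hxy, hγ.symm⟩]
  obtain ⟨k, rfl⟩ := Nat.exists_eq_add_of_lt hxy
  refine ⟨k + 1, k.succ_pos, ?_⟩
  exact conj_pow_eq_pow_of_mul_inv_eq (m := x) hγ

theorem exists_pow_natAbs_eq_zpow (a : G) (m : ℤ) :
    ∃ ε : ℤ, (ε = 1 ∨ ε = -1) ∧ (a ^ ε) ^ m.natAbs = a ^ m := by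
  obtain ⟨n, rfl | rfl⟩ := m.eq_nat_or_neg
  · exact ⟨1, Or.inl rfl, by simp⟩
  · exact ⟨-1, Or.inr rfl, by simp⟩

theorem exists_mem_elemClosure_of_dist_zpow_le (h : IsLoxodromic d δ a) (hac : AcylDist d) {κ : ℝ}
    (hκ : 0 ≤ κ) : ∃ T : ℕ, ∀ (f : G) (m m' : ℤ), d 1 f ≤ κ → d (a ^ m) (f * a ^ m') ≤ κ →
      T ≤ m.natAbs → T ≤ m'.natAbs → f ∈ elemClosure a := by
  have hδ := h.δ_nonneg
  have ha := h.geo.nonneg 1 a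
  obtain ⟨T, hT⟩ := exists_conj_pow_eq_pow (δ := δ) hac (r := d 1 a + 4 * δ + 3 * κ) (by positivity)
  refine ⟨T, fun f m m' hf hend hm hm' => ?_⟩
  have hsign {ε : ℤ} (hε : ε = 1 ∨ ε = -1) :
      IsLoxodromic d δ (a ^ ε) ∧ ∀ n, d 1 ((a ^ ε) ^ n) = d 1 (a ^ n) := by
    rcases hε with rfl | rfl
    · simpa using h
    · simpa [h.geo.dist_one_inv] using h.inv
  obtain ⟨ε, hε, hεm⟩ := exists_pow_natAbs_eq_zpow a m
  obtain ⟨ε', hε', hεm'⟩ := exists_pow_natAbs_eq_zpow a m'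
  obtain ⟨hb, hb_dist⟩ := hsign hε
  obtain ⟨hc, hc_dist⟩ := hsign hε'
  obtain ⟨k, hk, hconj⟩ := hT (a ^ ε) (a ^ ε') f hb fun t ht => by
    have hb_one : d 1 (a ^ ε) = d 1 a := by simpa using hb_dist 1
    rw [← hb_one]
    exact hb.dist_pow_mul_pow_le hc (fun n => by rw [hb_dist, hc_dist]) hf
      (by rwa [hεm, hεm']) (ht.trans hm) (ht.trans hm')
  refine mem_elemClosure.2 ⟨k, hk, ε * ε', ?_, ?_⟩
  · rcases hε with rfl | rfl <;> rcases hε' with rfl | rfl <;> simp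
  · rw [← zpow_natCast, ← zpow_natCast, ← zpow_mul, ← zpow_mul] at hconj
    have hconj' := conj_zpow_zpow hconj ε'
    have hεε : ε' * k * ε' = k := by rcases hε' with rfl | rfl <;> ring
    rwa [hεε, mul_right_comm] at hconj'

theorem exists_forall_mem_elemClosure_of_le (h : IsLoxodromic d δ a) (hac : AcylDist d) (κ : ℝ) :
    ∃ T : ℝ, ∀ u v u' v' : G, u⁻¹ * v ∈ elemClosure a → u'⁻¹ * v' ∈ elemClosure a →
      d u u' ≤ κ → d v v' ≤ κ → T ≤ d u v → u⁻¹ * u' ∈ elemClosure a := by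
  have hδ := h.δ_nonneg
  have ha_pos : 0 < d 1 a := by
    have := h.natCast_le_dist_pow 1
    rw [pow_one, Nat.cast_one] at this
    linarith
  set r := 3 * d 1 a + 7 * δ
  have hκ := le_abs_self κ
  obtain ⟨T, hT⟩ := h.exists_mem_elemClosure_of_dist_zpow_le hac (κ := |κ| + 2 * r) (by positivity)
  refine ⟨T * d 1 a + r + 2 * |κ|, fun u v u' v' huv huv' hu hv hfar => ?_⟩
  obtain ⟨m, hm⟩ := h.exists_dist_zpow_le huv
  obtain ⟨m', hm'⟩ := h.exists_dist_zpow_le huv'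
  have hlong {x y : G} {l : ℤ} (hl : d (x⁻¹ * y) (a ^ l) ≤ r) (hxy : T * d 1 a + r ≤ d x y) :
      T ≤ l.natAbs := by
    have htri := h.geo.tri 1 (a ^ l) (x⁻¹ * y)
    have hle : d 1 (a ^ l) ≤ l.natAbs * d 1 a := by
      have hl₀ := h.dist_zpow_zpow 0 l
      rw [zpow_zero, sub_zero] at hl₀
      exact hl₀ ▸ h.geo.dist_one_pow_le a _
    rw [← h.geo.dist_eq_dist_one, h.geo.comm (a ^ l)] at htri
    have hT_le : (T : ℝ) * d 1 a ≤ l.natAbs * d 1 a := by linarith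
    exact_mod_cast le_of_mul_le_mul_right hT_le ha_pos
  refine hT (u⁻¹ * u') m m' ?_ ?_ (hlong hm ?_) (hlong hm' ?_)
  · rw [← h.geo.dist_eq_dist_one]
    linarith
  · have hvv' : d (u⁻¹ * v) (u⁻¹ * v') = d v v' := h.geo.inv _ _ _
    have hv'm' : d (u⁻¹ * v') (u⁻¹ * u' * a ^ m') = d (u'⁻¹ * v') (a ^ m') := by
      rw [← h.geo.inv (u⁻¹ * u') (u'⁻¹ * v')]; congr 1; group
    linarith [h.geo.tri (a ^ m) (u⁻¹ * v) (u⁻¹ * u' * a ^ m'), h.geo.comm (a ^ m) (u⁻¹ * v),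
      h.geo.tri (u⁻¹ * v) (u⁻¹ * v') (u⁻¹ * u' * a ^ m')]
  · linarith [abs_nonneg κ]
  · linarith [h.geo.tri u u' v, h.geo.tri u' v' v, h.geo.comm v v']

theorem min_dist_zpow_le_gprod (h : IsLoxodromic d δ a) {i j : ℤ} (hij : 0 ≤ i * j) :
    min (d 1 (a ^ i)) (d 1 (a ^ j)) ≤ gprod d (a ^ i) (a ^ j) 1 + (d 1 a + 2 * δ) / 2 := by
  wlog hle : i ≤ j generalizing i j
  · rw [gprod_comm h.geo.comm, min_comm]
    exact this (mul_comm i j ▸ hij) (le_of_not_ge hle)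
  have hmin := min_le_left (d 1 (a ^ i)) (d 1 (a ^ j))
  have hmin' := min_le_right (d 1 (a ^ i)) (d 1 (a ^ j))
  have hi := h.geo.comm 1 (a ^ i)
  have hj := h.geo.comm 1 (a ^ j)
  rw [gprod]
  rcases mul_nonneg_iff.1 hij with ⟨hi₀, -⟩ | ⟨-, hj₀⟩
  · have := h.dist_zpow_add_dist_zpow_le hi₀ hle
    rw [zpow_zero] at this
    linarith
  · have := h.dist_zpow_add_dist_zpow_le hle hj₀
    rw [zpow_zero] at this
    linarith

theorem bRel_of_frequently_mul_nonneg (h : IsLoxodromic d δ a) {r : ℝ} {ι : G → ℤ}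
    (hι : ∀ g, d g (a ^ ι g) ≤ r) {x y : BSeq d}
    (hxy : ∀ N : ℕ, ∃ i ≥ N, ∃ j ≥ N, 0 ≤ ι (x.1 i) * ι (y.1 j)) : BRel d x y := by
  refine h.hyp.bRel_of_frequently_le_gprod fun o R N => ?_
  set C := R + 2 * r + d o 1 + (d 1 a + 2 * δ) / 2 with hC
  obtain ⟨M₁, hM₁⟩ := x.2 1 (C + r)
  obtain ⟨M₂, hM₂⟩ := y.2 1 (C + r)
  obtain ⟨i, hi, j, hj, hij⟩ := hxy (max N (max M₁ M₂))
  simp only [ge_iff_le, max_le_iff] at hi hj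
  refine ⟨i, hi.1, j, hj.1, ?_⟩
  have hx := hM₁ i hi.2.1 i hi.2.1
  have hy := hM₂ j hj.2.2 j hj.2.2
  simp only [gprod, h.geo.self] at hx hy
  have hxi := hι (x.1 i)
  have hyj := hι (y.1 j)
  have hpowers := h.min_dist_zpow_le_gprod hij
  have hmove := h.geo.gprod_le_gprod_add (a ^ ι (x.1 i)) (a ^ ι (y.1 j)) 1 (x.1 i) (y.1 j) o
  have hmin : C ≤ min (d 1 (a ^ ι (x.1 i))) (d 1 (a ^ ι (y.1 j))) := by
    refine le_min ?_ ?_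
    · linarith [h.geo.tri (x.1 i) (a ^ ι (x.1 i)) 1, h.geo.comm 1 (a ^ ι (x.1 i))]
    · linarith [h.geo.tri (y.1 j) (a ^ ι (y.1 j)) 1, h.geo.comm 1 (a ^ ι (y.1 j))]
  linarith [h.geo.comm (x.1 i) (a ^ ι (x.1 i)), h.geo.comm (y.1 j) (a ^ ι (y.1 j)),
    h.geo.comm o 1, hC]

/-- If the whole group were close to the axis of `a`, every boundary point would be one of its two
ends. -/
theorem elemClosure_ne_top (h : IsLoxodromic d δ a) {ξ η ζ : Bdry d} (hξη : ξ ≠ η) (hξζ : ξ ≠ ζ)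
    (hηζ : η ≠ ζ) : elemClosure a ≠ ⊤ := by
  intro htop
  choose ι hι using fun g : G => h.exists_dist_zpow_le (g := g) (htop ▸ Subgroup.mem_top g)
  have hside (x : BSeq d) : ∃ σ : Bool, ∀ N, ∃ i ≥ N, 0 ≤ (cond σ 1 (-1)) * ι (x.1 i) := by
    by_contra! hcon
    obtain ⟨N, hN⟩ := hcon true
    obtain ⟨M, hM⟩ := hcon false
    have hpos := hN (max N M) (le_max_left _ _)
    have hneg := hM (max N M) (le_max_right _ _)
    simp only [cond_true, cond_false] at hpos hneg
    omega
  choose σ hσ using hside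
  have hrel (x y : BSeq d) (hxy : σ x = σ y) : Quot.mk (BRel d) x = Quot.mk (BRel d) y := by
    refine Quot.sound (h.bRel_of_frequently_mul_nonneg hι fun N => ?_)
    obtain ⟨i, hi, hxi⟩ := hσ x N
    obtain ⟨j, hj, hyj⟩ := hσ y N
    refine ⟨i, hi, j, hj, ?_⟩
    rw [hxy] at hxi
    have hmul := mul_nonneg hxi hyj
    cases hs : σ y <;> rw [hs] at hmul <;> simpa using hmul
  obtain ⟨x, rfl⟩ := Quot.exists_rep ξ
  obtain ⟨y, rfl⟩ := Quot.exists_rep η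
  obtain ⟨z, rfl⟩ := Quot.exists_rep ζ
  have hxy : σ x = !σ y := Bool.eq_not.2 (mt (hrel x y) hξη)
  have hzy : σ z = !σ y := Bool.eq_not.2 (Ne.symm (mt (hrel y z) hηζ))
  exact hξζ (hrel x z (hxy.trans hzy.symm))

end IsLoxodromic

/-- An infinite proper subgroup `H` of `G` that is hyperbolically embedded in `(G, d)`: bounded sets
meet it in finite sets, its cosets are `κ`-quasiconvex, and distinct cosets stay close to each other
only along bounded sets. -/
structure HypEmbedded (d : G → G → ℝ) (δ : ℝ) (H : Subgroup G) (κ : ℝ) : Prop where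
  geo : GraphMetric d
  hyp : HyperbolicWith d δ
  δ_nonneg : 0 ≤ δ
  κ_nonneg : 0 ≤ κ
  ne_top : H ≠ ⊤
  infinite : (H : Set G).Infinite
  finite_dist_le : ∀ D : ℝ, {g : G | g ∈ H ∧ d 1 g ≤ D}.Finite
  quasiconvex : ∀ p q z : G, p⁻¹ * q ∈ H → ∃ c : G, p⁻¹ * c ∈ H ∧ d z c ≤ gprod d p q z + κ
  separated : ∀ r : ℝ, ∃ T : ℝ, ∀ u v u' v' : G, u⁻¹ * v ∈ H → u'⁻¹ * v' ∈ H → d u u' ≤ r →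
    d v v' ≤ r → T ≤ d u v → u⁻¹ * u' ∈ H

theorem exists_hypEmbedded (hd : GraphMetric d) (hδ : HyperbolicWith d δ) (hδ₀ : 0 ≤ δ)
    (hac : AcylDist d) (hthree : ∃ ξ η ζ : Bdry d, ξ ≠ η ∧ ξ ≠ ζ ∧ η ≠ ζ) :
    ∃ (H : Subgroup G) (κ : ℝ), HypEmbedded d δ H κ := by
  obtain ⟨ξ, η, ζ, hξη, hξζ, hηζ⟩ := hthree
  obtain ⟨a, ha⟩ := hd.exists_add_le_dist_mul_self hδ hξη (3 * δ + 1)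
  have h : IsLoxodromic d δ a := ⟨hd, hδ, hδ₀, ha⟩
  have ha₀ := hd.nonneg 1 a
  exact ⟨elemClosure a, 5 * d 1 a + 11 * δ, hd, hδ, hδ₀, by positivity,
    h.elemClosure_ne_top hξη hξζ hηζ, h.infinite_elemClosure, h.finite_elemClosure_dist_le hac,
    h.exists_dist_le_gprod, h.exists_forall_mem_elemClosure_of_le hac⟩

end ElementaryClosure

section LogarithmicChains

variable {P : ℕ → ℕ → ℝ} {δ : ℝ}

theorem exists_adjacent_le_of_le_add_two_pow (hδ : 0 ≤ δ)
    (hP : ∀ i j k, P i j ≤ P i k + δ ∨ P j k ≤ P i k + δ) (k : ℕ) {i j : ℕ} (hij : i < j)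
    (hj : j ≤ i + 2 ^ k) : ∃ l, i ≤ l ∧ l < j ∧ P l (l + 1) ≤ P i j + k * δ := by
  induction k generalizing i j with
  | zero =>
    obtain rfl : j = i + 1 := by rw [pow_zero] at hj; omega
    exact ⟨i, le_rfl, by omega, by simp⟩
  | succ k ih =>
    push_cast
    rw [pow_succ] at hj
    rcases le_or_gt j (i + 2 ^ k) with hle | hlt
    · obtain ⟨l, hil, hlj, hl⟩ := ih hij hle
      exact ⟨l, hil, hlj, by linarith⟩
    · have hpos : 0 < 2 ^ k := by positivity
      rcases hP i (i + 2 ^ k) j with h | h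
      · obtain ⟨l, hil, hlj, hl⟩ := ih (j := i + 2 ^ k) (by omega) le_rfl
        exact ⟨l, hil, by omega, by linarith⟩
      · obtain ⟨l, hil, hlj, hl⟩ := ih hlt (by omega)
        exact ⟨l, by omega, hlj, by linarith⟩

theorem exists_adjacent_le_of_two_pow_lt (hδ : 0 ≤ δ)
    (hP : ∀ i j k, P i j ≤ P i k + δ ∨ P j k ≤ P i k + δ) {k n : ℕ} (m : ℕ) (hkn : 2 ^ k < n)
    (hn : n ≤ 2 ^ (k + m)) :
    ∃ l j, k ≤ j ∧ 2 ^ j ≤ l ∧ l < n ∧ P l (l + 1) ≤ P (2 ^ k) n + (2 * j + 1 - k) * δ := by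
  induction m generalizing k with
  | zero => rw [add_zero] at hn; omega
  | succ m ih =>
    have : 2 ^ (k + 1) = 2 ^ k + 2 ^ k := by ring
    have hpos : 0 < 2 ^ k := by positivity
    rcases le_or_gt n (2 ^ (k + 1)) with hle | hlt
    · obtain ⟨l, hkl, hln, hl⟩ := exists_adjacent_le_of_le_add_two_pow hδ hP k hkn (by omega)
      exact ⟨l, k, le_rfl, hkl, hln, by linarith⟩
    · rcases hP (2 ^ k) (2 ^ (k + 1)) n with h | h
      · obtain ⟨l, hkl, hln, hl⟩ := exists_adjacent_le_of_le_add_two_pow hδ hP k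
          (i := 2 ^ k) (j := 2 ^ (k + 1)) (by omega) (by omega)
        exact ⟨l, k, le_rfl, hkl, by omega, by linarith⟩
      · obtain ⟨l, j, hkj, hjl, hln, hl⟩ := ih hlt (by rwa [add_right_comm, add_assoc])
        push_cast at hl
        exact ⟨l, j, by omega, hjl, hln, by linarith⟩

theorem exists_forall_add_mul_lt_two_pow (A B : ℝ) :
    ∃ k : ℕ, ∀ j ≥ k, A + B * j < (2 : ℝ) ^ j := by
  have hlittle : (fun j : ℕ => A + B * j) =o[Filter.atTop] fun j : ℕ => (2 : ℝ) ^ j := by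
    have hA := (isLittleO_pow_const_const_pow_of_one_lt (R := ℝ) 0 one_lt_two).const_mul_left A
    have hB := (isLittleO_pow_const_const_pow_of_one_lt (R := ℝ) 1 one_lt_two).const_mul_left B
    simpa using hA.add hB
  obtain ⟨k, hk⟩ := Filter.eventually_atTop.1 (hlittle.def (c := 1 / 2) (by norm_num))
  refine ⟨k, fun j hj => ?_⟩
  have hpos : (0 : ℝ) < 2 ^ j := by positivity
  have hle := hk j hj
  rw [Real.norm_eq_abs, Real.norm_of_nonneg hpos.le] at hle
  linarith [le_abs_self (A + B * j)]

end LogarithmicChains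

/-! ### Projections to cosets -/

section Projections

variable {H : Subgroup G} {d : G → G → ℝ} {n : G → G → ℕ} {δ κ : ℝ} {C : G ⧸ H} {x y : G}

/-- The distance from a point to a coset. -/
def cosetDist (n : G → G → ℕ) (x : G) (C : G ⧸ H) : ℕ :=
  sInf {k : ℕ | ∃ w : G, (w : G ⧸ H) = C ∧ n x w = k}

/-- The set of points of `C` that are nearest to `x`. -/
def nearest (n : G → G → ℕ) (C : G ⧸ H) (x : G) : Set G :=
  {u : G | (u : G ⧸ H) = C ∧ n x u = cosetDist n x C}

theorem cosetDist_le (n : G → G → ℕ) (x : G) {w : G} (hw : (w : G ⧸ H) = C) :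
    cosetDist n x C ≤ n x w :=
  Nat.sInf_le ⟨w, hw, rfl⟩

theorem nearest_nonempty (n : G → G → ℕ) (C : G ⧸ H) (x : G) : (nearest n C x).Nonempty := by
  obtain ⟨w, hw⟩ := QuotientGroup.mk_surjective C
  obtain ⟨u, hu, hux⟩ := Nat.sInf_mem (s := {k | ∃ w : G, (w : G ⧸ H) = C ∧ n x w = k})
    ⟨_, w, hw, rfl⟩
  exact ⟨u, hu, hux⟩

/-- A system of equivariant pseudometrics `ρ C`, one for each coset `C` of `H`, measuring how far
apart two points appear when seen from `C`. Points that look far apart from `C` are joined in the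
coned-off graph, with distance `n`, by a geodesic crossing `C` in a single edge. -/
structure ProjectionSystem (H : Subgroup G) (d : G → G → ℝ) (n : G → G → ℕ)
    (ρ : G ⧸ H → G → G → ℝ) (K : ℝ) : Prop where
  geo : GraphMetric d
  graph : GraphDist n
  one_le : 1 ≤ K
  nonneg : ∀ C x y, 0 ≤ ρ C x y
  self : ∀ C x, ρ C x x = 0
  comm : ∀ C x y, ρ C x y = ρ C y x
  tri : ∀ C x y z, ρ C x z ≤ ρ C x y + ρ C y z
  smul : ∀ (g : G) C x y, ρ (g • C) (g * x) (g * y) = ρ C x y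
  eq_dist : ∀ (C : G ⧸ H) (u v : G), (u : G ⧸ H) = C → (v : G ⧸ H) = C → ρ C u v = d u v
  dist_eq_of_lt : ∀ C f g, K < ρ C f g → n f g = cosetDist n f C + 1 + cosetDist n g C
  le_of_mem_nearest : ∀ C f u, u ∈ nearest n C f → ρ C f u ≤ K
  le_of_mk_eq : ∀ (C : G ⧸ H) (x y : G), (x : G ⧸ H) = y → (x : G ⧸ H) ≠ C → ρ C x y ≤ K
  le_of_dist_le_one : ∀ C x y, d x y ≤ 1 → ρ C x y ≤ K
  finite_dist_le : ∀ D : ℝ, {g : G | g ∈ H ∧ d 1 g ≤ D}.Finite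
  infinite : (H : Set G).Infinite
  ne_top : H ≠ ⊤

/-- `n` is the distance in the graph obtained from that of `d` by joining any two elements of a
coset of `H` by an edge. -/
structure ConeOff (d : G → G → ℝ) (H : Subgroup G) (n : G → G → ℕ) : Prop where
  graph : GraphDist n
  le_dist : ∀ x y, (n x y : ℝ) ≤ d x y
  dist_le_one_or_mk_eq : ∀ x y, n x y ≤ 1 → d x y ≤ 1 ∨ (x : G ⧸ H) = y
  le_one_of_mk_eq : ∀ x y : G, (x : G ⧸ H) = y → n x y ≤ 1

theorem GraphDist.exists_geodesic (hn : GraphDist n) (x y : G) : ∃ s : ℕ → G, s 0 = y ∧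
    s (n x y) = x ∧ (∀ i, n (s i) (s (i + 1)) ≤ 1) ∧ ∀ i ≤ n x y, n x (s i) + i = n x y := by
  generalize hN : n x y = N
  induction N generalizing y with
  | zero =>
    refine ⟨fun _ => y, rfl, (hn.eq_of_eq_zero hN).symm, fun i => by simp [hn.self],
      fun i hi => ?_⟩
    rw [Nat.le_zero.1 hi, hN]
  | succ N ih =>
    obtain ⟨m, hxm, hmy⟩ := hn.exists_between (x := x) (y := y) (k := N) (by omega)
    obtain ⟨s, hs₀, hsN, hstep, hs⟩ := ih m hxm
    refine ⟨fun i => Nat.casesOn i y s, rfl, hsN, ?_, ?_⟩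
    · rintro (_ | i)
      · change n y (s 0) ≤ 1
        rw [hs₀, hn.comm]
        omega
      · exact hstep i
    · rintro (_ | i) hi
      · exact hN
      · have := hs i (by omega)
        change n x (s i) + (i + 1) = N + 1
        omega

theorem ConeOff.dist_le_cosetDist_add_one_add_cosetDist (B : ConeOff d H n) (C : G ⧸ H) (x y : G) :
    n x y ≤ cosetDist n x C + 1 + cosetDist n y C := by
  obtain ⟨u, huC, hu⟩ := nearest_nonempty n C x
  obtain ⟨v, hvC, hv⟩ := nearest_nonempty n C y
  have htri := B.graph.tri x u y
  have htri' := B.graph.tri u v y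
  have huv := B.le_one_of_mk_eq u v (huC.trans hvC.symm)
  have hcomm := B.graph.comm v y
  omega

namespace HypEmbedded

variable (E : HypEmbedded d δ H κ)

include E in
theorem exists_forall_dist_one_le (D : G ⧸ H) :
    ∃ t : G, (t : G ⧸ H) = D ∧ ∀ w : G, (w : G ⧸ H) = D → d 1 t ≤ d 1 w := by
  obtain ⟨g, rfl⟩ := QuotientGroup.mk_surjective D
  have hfin : {h : G | h ∈ H ∧ d 1 (g * h) ≤ d 1 g}.Finite := by
    refine (E.finite_dist_le (2 * d 1 g)).subset fun h hh => ⟨hh.1, ?_⟩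
    have htri := E.geo.tri g 1 (g * h)
    rw [E.geo.dist_mul_right_self, E.geo.comm g] at htri
    linarith [hh.2]
  obtain ⟨h, ⟨hH, hle⟩, hmin⟩ := Set.exists_min_image _ (fun h => d 1 (g * h)) hfin
    ⟨1, H.one_mem, by rw [mul_one]⟩
  refine ⟨g * h, QuotientGroup.mk_mul_of_mem g hH, fun w hw => ?_⟩
  rcases le_total (d 1 w) (d 1 g) with hlow | hhigh
  · have := hmin (g⁻¹ * w) ⟨QuotientGroup.eq.1 hw.symm, by rwa [mul_inv_cancel_left]⟩
    rwa [mul_inv_cancel_left] at this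
  · exact hle.trans hhigh

/-- An equivariant choice of a nearest point of `C` to `x`. -/
def proj (C : G ⧸ H) (x : G) : G :=
  x * (E.exists_forall_dist_one_le (x⁻¹ • C)).choose

theorem mk_proj (C : G ⧸ H) (x : G) : (E.proj C x : G ⧸ H) = C := by
  have h := (E.exists_forall_dist_one_le (x⁻¹ • C)).choose_spec.1
  change x • ((E.exists_forall_dist_one_le (x⁻¹ • C)).choose : G ⧸ H) = C
  rw [h, smul_inv_smul]

theorem dist_proj_le (x : G) {w : G} (hw : (w : G ⧸ H) = C) : d x (E.proj C x) ≤ d x w := by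
  rw [proj, E.geo.dist_mul_right_self, E.geo.dist_eq_dist_one x w]
  exact (E.exists_forall_dist_one_le (x⁻¹ • C)).choose_spec.2 (x⁻¹ * w) (by rw [← hw]; rfl)

theorem proj_smul (g : G) (C : G ⧸ H) (x : G) : E.proj (g • C) (g * x) = g * E.proj C x := by
  simp only [proj, mul_inv_rev, mul_smul, inv_smul_smul, mul_assoc]

theorem proj_of_mk_eq (hx : (x : G ⧸ H) = C) : E.proj C x = x := by
  have h := E.dist_proj_le x hx
  rw [E.geo.self] at h
  exact (E.geo.eq_of_eq_zero (h.antisymm (E.geo.nonneg _ _))).symm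

theorem dist_proj_add_dist_proj_le (x : G) {c : G} (hc : (c : G ⧸ H) = C) :
    d x (E.proj C x) + d c (E.proj C x) ≤ d x c + 2 * (κ + δ + 1) := by
  have := E.κ_nonneg
  have := E.δ_nonneg
  set p := E.proj C x
  have hpC : (p : G ⧸ H) = C := E.mk_proj C x
  set t := gprod d x c p with ht
  rw [gprod] at ht
  have ht₀ : 0 ≤ t := by linarith [E.geo.tri x p c, E.geo.comm c p]
  have ht_le : t ≤ d p x := by linarith [E.geo.tri c x p, E.geo.comm c x, E.geo.comm p x]
  have hfloor := Nat.floor_le ht₀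
  have hfloor' := Nat.lt_floor_add_one t
  obtain ⟨z, hpz, hzx⟩ := E.geo.exists_between (hfloor.trans ht_le)
  obtain ⟨c', hc', hzc'⟩ := E.quasiconvex p c z (QuotientGroup.eq.1 (hpC.trans hc.symm))
  have hnear := E.dist_proj_le x ((QuotientGroup.eq.2 hc').symm.trans hpC)
  rw [gprod] at hzc'
  rcases E.hyp.four_point z x c p with hfour | hfour <;>
    linarith [E.geo.tri x z c', E.geo.comm z x, E.geo.comm z p, E.geo.comm z c, E.geo.comm x p,
      E.geo.comm c p]

theorem dist_proj_add_dist_proj_le_of_lt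
    (h : 2 * (κ + δ + 1) + δ < d (E.proj C x) (E.proj C y)) :
    d x (E.proj C x) + d y (E.proj C x) ≤ d x y + 2 * (κ + δ + 1) + 2 * δ := by
  have hx := E.dist_proj_add_dist_proj_le x (E.mk_proj C y)
  have hy := E.dist_proj_add_dist_proj_le y (E.mk_proj C x)
  set p := E.proj C x
  set q := E.proj C y
  rcases E.hyp.four_point x y q p with hfour | hfour <;>
    linarith [E.geo.comm p q, E.geo.comm q y, E.geo.comm p y]

theorem dist_proj_proj_le_of_dist_le_one (h : d x y ≤ 1) :
    d (E.proj C x) (E.proj C y) ≤ 2 * (κ + δ + 1) + 2 * δ + 2 := by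
  have := E.κ_nonneg
  have hδ := E.δ_nonneg
  by_contra! hlt
  have hx := E.dist_proj_add_dist_proj_le_of_lt (C := C) (x := x) (y := y) (by linarith)
  have hy := E.dist_proj_add_dist_proj_le_of_lt (C := C) (x := y) (y := x)
    (by rw [E.geo.comm]; linarith)
  set p := E.proj C x
  set q := E.proj C y
  linarith [E.geo.tri p x q, E.geo.tri p y q, E.geo.comm p x, E.geo.comm p y, E.geo.comm x y]

/-- If the projections to `C` of two points of another coset were far apart, they would both be
close to that coset, contradicting separation. -/
theorem exists_dist_proj_proj_le_of_mk_eq : ∃ c : ℝ, ∀ (C : G ⧸ H) (x y : G),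
    (x : G ⧸ H) = y → (x : G ⧸ H) ≠ C → d (E.proj C x) (E.proj C y) ≤ c := by
  obtain ⟨T, hT⟩ := E.separated (κ + δ + 1 + δ + κ)
  refine ⟨max T (2 * (κ + δ + 1) + δ), fun C x y hxy hxC => ?_⟩
  by_contra! hlt
  rw [max_lt_iff] at hlt
  have hx := E.dist_proj_add_dist_proj_le_of_lt hlt.2
  have hy := E.dist_proj_add_dist_proj_le_of_lt (C := C) (x := y) (y := x)
    (by rw [E.geo.comm]; exact hlt.2)
  obtain ⟨c, hxc, hc⟩ := E.quasiconvex x y (E.proj C x) (QuotientGroup.eq.1 hxy)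
  obtain ⟨c', hxc', hc'⟩ := E.quasiconvex x y (E.proj C y) (QuotientGroup.eq.1 hxy)
  rw [gprod] at hc hc'
  rw [← QuotientGroup.eq] at hxc hxc'
  have hclose := hT (E.proj C x) (E.proj C y) c c'
    (QuotientGroup.eq.1 ((E.mk_proj C x).trans (E.mk_proj C y).symm))
    (QuotientGroup.eq.1 (hxc.symm.trans hxc')) (by linarith)
    (by linarith [E.geo.comm x y]) hlt.1.le
  exact hxC (hxc.trans ((QuotientGroup.eq.2 hclose).symm.trans (E.mk_proj C x)))

variable (B : ConeOff d H n)
include E B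

theorem exists_dist_proj_proj_le_of_le_one : ∃ c ≥ 1, ∀ (C : G ⧸ H) (x y : G), n x y ≤ 1 →
    ¬((x : G ⧸ H) = C ∧ (y : G ⧸ H) = C) → d (E.proj C x) (E.proj C y) ≤ c := by
  have hκ := E.κ_nonneg
  have hδ := E.δ_nonneg
  obtain ⟨c, hc⟩ := E.exists_dist_proj_proj_le_of_mk_eq
  refine ⟨max c (2 * (κ + δ + 1) + 2 * δ + 2), le_max_of_le_right (by linarith),
    fun C x y hxy hC => ?_⟩
  rcases B.dist_le_one_or_mk_eq x y hxy with hd | hmk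
  · exact (E.dist_proj_proj_le_of_dist_le_one hd).trans (le_max_right _ _)
  · exact (hc C x y hmk fun hxC => hC ⟨hxC, hmk ▸ hxC⟩).trans (le_max_left _ _)

theorem dist_le_gprod_add (h : n x y ≤ 1) (z : G) : (n z x : ℝ) ≤ gprod d x y z + κ + 1 := by
  rcases B.dist_le_one_or_mk_eq x y h with hd | hmk
  · rw [gprod]
    linarith [B.le_dist z x, E.geo.tri z y x, E.geo.comm z x, E.geo.comm z y, E.geo.comm x y,
      E.κ_nonneg]
  · obtain ⟨w, hw, hzw⟩ := E.quasiconvex x y z (QuotientGroup.eq.1 hmk)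
    have hle := B.le_dist z w
    have htri : (n z x : ℝ) ≤ n z w + 1 := by
      exact_mod_cast (B.graph.tri z w x).trans
        (Nat.add_le_add_left (B.le_one_of_mk_eq w x (QuotientGroup.eq.2 hw).symm) _)
    linarith

theorem lt_gprod_of_forall_lt {s : ℕ → G} {z : G} {N k : ℕ} {A : ℝ}
    (hstep : ∀ i, n (s i) (s (i + 1)) ≤ 1) (hfar : ∀ i ≤ N, i < n z (s i)) (hkN : 2 ^ k < N)
    (hk : ∀ j ≥ k, A + κ + 1 + δ + 2 * δ * j < (2 : ℝ) ^ j) :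
    A < gprod d (s (2 ^ k)) (s N) z := by
  have hδ := E.δ_nonneg
  by_contra! hle
  obtain ⟨l, j, hkj, hjl, hlN, hl⟩ := exists_adjacent_le_of_two_pow_lt
    (P := fun i j => gprod d (s i) (s j) z) hδ (fun i j k => by
      have := E.hyp z (s i) (s j) (s k)
      rcases min_choice (gprod d (s i) (s j) z) (gprod d (s j) (s k) z) with hm | hm
      · exact Or.inl (by linarith)
      · exact Or.inr (by linarith)) N hkN
    (Nat.lt_two_pow_self.le.trans (Nat.pow_le_pow_right two_pos (by omega)))
  have hzl := E.dist_le_gprod_add B (hstep l) z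
  have hjz : (2 : ℝ) ^ j ≤ n z (s l) := by
    exact_mod_cast hjl.trans (hfar l hlN.le).le
  have hkδ : 0 ≤ k * δ := by positivity
  linarith [hk j hkj]

/-- Follow a geodesic of the coned-off graph from `y` to `x`. Its `i`-th vertex is at distance more
than `i` from `C`, while it would have to come within `O(log i)` of `C` for some large `i` if the
projection moved much. -/
theorem exists_dist_proj_proj_le_of_lt_cosetDist : ∃ c ≥ 0, ∀ (C : G ⧸ H) (x y : G),
    n x y < cosetDist n x C → d (E.proj C x) (E.proj C y) ≤ c := by
  obtain ⟨c, hc₁, hc⟩ := E.exists_dist_proj_proj_le_of_le_one B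
  have hκ := E.κ_nonneg
  have hδ := E.δ_nonneg
  have hc₀ : 0 ≤ c := zero_le_one.trans hc₁
  obtain ⟨k, hk⟩ := exists_forall_add_mul_lt_two_pow (κ + δ + 1 + δ + κ + 1 + δ) (2 * δ)
  refine ⟨2 ^ k * c + (2 * (κ + δ + 1) + δ), by positivity, fun C x y hfar => ?_⟩
  obtain ⟨s, hs₀, hsN, hstep, hs⟩ := B.graph.exists_geodesic x y
  set N := n x y
  have hout (i : ℕ) (hi : i ≤ N) (w : G) (hw : (w : G ⧸ H) = C) : i < n w (s i) := by
    have hxw := cosetDist_le n x hw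
    have htri := B.graph.tri x (s i) w
    rw [B.graph.comm (s i) w] at htri
    have := hs i hi
    omega
  have hshort (i : ℕ) (hi : i ≤ N) : d (E.proj C (s 0)) (E.proj C (s i)) ≤ i * c := by
    induction i with
    | zero => simp [E.geo.self]
    | succ i ih =>
      have hi' := hc C (s i) (s (i + 1)) (hstep i) fun h => by
        simpa [B.graph.self] using hout i (by omega) (s i) h.1
      push_cast
      linarith [ih (by omega), E.geo.tri (E.proj C (s 0)) (E.proj C (s i)) (E.proj C (s (i + 1)))]
  rw [hs₀] at hshort
  rcases le_or_gt N (2 ^ k) with hle | hlt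
  · have hN := hshort N le_rfl
    rw [hsN, E.geo.comm] at hN
    have : (N : ℝ) * c ≤ 2 ^ k * c := mul_le_mul_of_nonneg_right (by exact_mod_cast hle) hc₀
    linarith
  · by_contra! hcon
    have hk_short := hshort (2 ^ k) hlt.le
    push_cast at hk_short
    have hproj := E.dist_proj_add_dist_proj_le_of_lt (C := C) (x := x) (y := s (2 ^ k)) (by
      linarith [E.geo.tri (E.proj C x) (E.proj C (s (2 ^ k))) (E.proj C y),
        E.geo.comm (E.proj C (s (2 ^ k))) (E.proj C y)])
    have hlog := E.lt_gprod_of_forall_lt B hstep (fun i hi => hout i hi _ (E.mk_proj C x)) hlt hk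
    rw [hsN, gprod] at hlog
    linarith [E.geo.comm (s (2 ^ k)) x]

omit B in
theorem exists_between_dist_proj_le (hn : GraphDist n) {c : ℝ} (hc₀ : 0 ≤ c)
    (hc : ∀ (C : G ⧸ H) (x y : G), n x y < cosetDist n x C → d (E.proj C x) (E.proj C y) ≤ c)
    (C : G ⧸ H) (f g : G) : ∃ y, n f g = n f y + n y g ∧
      n f y = min (cosetDist n f C - 1) (n f g) ∧ d (E.proj C f) (E.proj C y) ≤ c ∧
      ((y : G ⧸ H) = C → cosetDist n f C = 0) := by
  obtain ⟨y, hfy, hfg⟩ := hn.exists_between (min_le_right (cosetDist n f C - 1) (n f g))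
  refine ⟨y, by omega, hfy, ?_, fun hy => ?_⟩
  · rcases Nat.eq_zero_or_pos (cosetDist n f C) with h₀ | h₀
    · rwa [hn.eq_of_eq_zero (show n f y = 0 by omega), E.geo.self]
    · exact hc C f y (by omega)
  · have := cosetDist_le n f hy
    omega

omit B in
theorem dist_proj_proj_le_of_le_two (hn : GraphDist n) {c : ℝ} (hc₀ : 0 ≤ c)
    (hc : ∀ x y, n x y ≤ 1 → ¬((x : G ⧸ H) = C ∧ (y : G ⧸ H) = C) →
      d (E.proj C x) (E.proj C y) ≤ c) (h : n x y ≤ 2) (hx : (x : G ⧸ H) = C → n x y ≤ 1)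
    (hy : (y : G ⧸ H) = C → n x y ≤ 1)
    (hxy : (x : G ⧸ H) = C → (y : G ⧸ H) = C → n x y = 0) :
    d (E.proj C x) (E.proj C y) ≤ 2 * c := by
  rcases le_or_gt (n x y) 1 with hle | hlt
  · by_cases hC : (x : G ⧸ H) = C ∧ (y : G ⧸ H) = C
    · rw [hn.eq_of_eq_zero (hxy hC.1 hC.2), E.geo.self]
      positivity
    · linarith [hc x y hle hC]
  · obtain ⟨m, hxm, hmy⟩ := hn.exists_between hlt.le
    have hxm_le := hc x m hxm.le fun hC => absurd (hx hC.1) (by omega)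
    have hmy_le := hc m y (by omega) fun hC => absurd (hy hC.2) (by omega)
    linarith [E.geo.tri (E.proj C x) (E.proj C m) (E.proj C y)]

omit B in
/-- A geodesic from `f` to `g` that is too short to cross `C` consists of a part near `f` and a
part near `g`, both with small projection to `C`, and of at most two further edges. -/
theorem dist_proj_proj_le_of_le_add (hn : GraphDist n) {c c₀ : ℝ} (hc_nonneg : 0 ≤ c)
    (hc : ∀ (C : G ⧸ H) (x y : G), n x y ≤ 1 → ¬((x : G ⧸ H) = C ∧ (y : G ⧸ H) = C) →
      d (E.proj C x) (E.proj C y) ≤ c) (hc₀_nonneg : 0 ≤ c₀)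
    (hc₀ : ∀ (C : G ⧸ H) (x y : G), n x y < cosetDist n x C → d (E.proj C x) (E.proj C y) ≤ c₀)
    (h : n x y ≤ cosetDist n x C + cosetDist n y C) :
    d (E.proj C x) (E.proj C y) ≤ 2 * c₀ + 2 * c := by
  obtain ⟨x', hsplit, hxx', hproj_x, hx'C⟩ :=
    E.exists_between_dist_proj_le hn hc₀_nonneg hc₀ C x y
  obtain ⟨y', hsplit', hyy', hproj_y, hy'C⟩ :=
    E.exists_between_dist_proj_le hn hc₀_nonneg hc₀ C y x'
  have hy_comm := hn.comm y x'
  have hy'_comm := hn.comm y' x'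
  have hmid : d (E.proj C x') (E.proj C y') ≤ 2 * c :=
    E.dist_proj_proj_le_of_le_two hn hc_nonneg (hc C) (by omega)
      (fun hx' => by have := hx'C hx'; omega) (fun hy' => by have := hy'C hy'; omega)
      (fun hx' hy' => by have := hx'C hx'; have := hy'C hy'; omega)
  linarith [E.geo.tri (E.proj C x) (E.proj C x') (E.proj C y),
    E.geo.tri (E.proj C x') (E.proj C y') (E.proj C y), E.geo.comm (E.proj C y) (E.proj C y')]

theorem exists_projectionSystem : ∃ ρ K, ProjectionSystem H d n ρ K := by
  obtain ⟨c, hc₁, hc⟩ := E.exists_dist_proj_proj_le_of_le_one B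
  obtain ⟨c₀, hc₀_nonneg, hc₀⟩ := E.exists_dist_proj_proj_le_of_lt_cosetDist B
  refine ⟨fun C x y => d (E.proj C x) (E.proj C y), 2 * c₀ + 2 * c + 1,
    { geo := E.geo
      graph := B.graph
      one_le := by linarith
      nonneg := fun C x y => E.geo.nonneg _ _
      self := fun C x => E.geo.self _
      comm := fun C x y => E.geo.comm _ _
      tri := fun C x y z => E.geo.tri _ _ _
      smul := fun g C x y => by simp only [E.proj_smul, E.geo.inv]
      eq_dist := fun C u v hu hv => by simp only [E.proj_of_mk_eq hu, E.proj_of_mk_eq hv]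
      dist_eq_of_lt := fun C f g hK => ?_
      le_of_mem_nearest := fun C f u hu => ?_
      le_of_mk_eq := fun C x y hxy hxC => ?_
      le_of_dist_le_one := fun C x y hxy => ?_
      finite_dist_le := E.finite_dist_le
      infinite := E.infinite
      ne_top := E.ne_top }⟩
  · refine (B.dist_le_cosetDist_add_one_add_cosetDist C f g).antisymm ?_
    by_contra! hlt
    linarith [E.dist_proj_proj_le_of_le_add B.graph (by linarith) hc hc₀_nonneg hc₀
      (show n f g ≤ cosetDist n f C + cosetDist n g C by omega)]
  · have := E.dist_proj_proj_le_of_le_add B.graph (by linarith) hc hc₀_nonneg hc₀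
      (hu.2.le.trans (Nat.le_add_right _ (cosetDist n u C)))
    linarith
  · linarith [hc C x y (B.le_one_of_mk_eq x y hxy) fun h => hxC h.1]
  · by_cases h : (x : G ⧸ H) = C ∧ (y : G ⧸ H) = C
    · rw [E.proj_of_mk_eq h.1, E.proj_of_mk_eq h.2]
      linarith
    · have hn : n x y ≤ 1 := by exact_mod_cast (B.le_dist x y).trans hxy
      linarith [hc C x y hn h]

end HypEmbedded

end Projections

theorem exists_lt_lt_of_two_lt_encard {ι : Type*} {T : Set ι} {f : ι → ℕ} (hf : T.InjOn f)
    (hT : 2 < T.encard) : ∃ a ∈ T, ∃ b ∈ T, ∃ c ∈ T, f a < f b ∧ f b < f c := by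
  have h3 : (3 : ℕ) ≤ (f '' T).encard := by
    rw [hf.encard_image]
    exact Order.add_one_le_of_lt hT
  obtain ⟨s, hsT, hs⟩ := Set.exists_subset_encard_eq h3
  obtain ⟨t, rfl⟩ := (Set.finite_of_encard_le_coe hs.le).exists_finset_coe
  rw [Set.encard_coe_eq_coe_finsetCard, Nat.cast_inj] at hs
  let e := t.orderEmbOfFin hs
  have hmem (i : Fin 3) : ∃ a ∈ T, f a = e i := hsT (t.orderEmbOfFin_mem hs i)
  obtain ⟨a, ha, hea⟩ := hmem 0
  obtain ⟨b, hb, heb⟩ := hmem 1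
  obtain ⟨c, hc, hec⟩ := hmem 2
  refine ⟨a, ha, b, hb, c, hc, ?_, ?_⟩
  · rw [hea, heb]
    exact e.strictMono (by decide)
  · rw [heb, hec]
    exact e.strictMono (by decide)

/-! ### Separating cosets -/

section Separation

variable {H : Subgroup G} {d : G → G → ℝ} {n : G → G → ℕ} {ρ : G ⧸ H → G → G → ℝ} {K : ℝ}
  {C C' : G ⧸ H} {x y z u w w' : G}

/-- The coset `C` separates `x` from `y`: some of the points of `C` nearest to `x` and to `y` are
far apart (Hull and Osin). -/
def Separates (d : G → G → ℝ) (n : G → G → ℕ) (K : ℝ) (C : G ⧸ H) (x y : G) : Prop :=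
  ∃ u ∈ nearest n C x, ∃ v ∈ nearest n C y, 100 * K < d u v

/-- At most one coset of `H` separates `x` from `y`. -/
def AtMostOneSep (H : Subgroup G) (d : G → G → ℝ) (n : G → G → ℕ) (K : ℝ) (x y : G) : Prop :=
  {C : G ⧸ H | Separates d n K C x y}.Subsingleton

/-- The set of points of `C'` that are nearest to the coset `C`. -/
def nearestTo (n : G → G → ℕ) (C' C : G ⧸ H) : Set G :=
  {w : G | (w : G ⧸ H) = C' ∧ ∀ w₂ : G, (w₂ : G ⧸ H) = C' → cosetDist n w C ≤ cosetDist n w₂ C}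

theorem Separates.congr_right (h : Separates d n K C x y) (he : nearest n C y = nearest n C z) :
    Separates d n K C x z := by
  obtain ⟨u, hu, v, hv, huv⟩ := h
  exact ⟨u, hu, v, he ▸ hv, huv⟩

theorem Separates.congr_left (h : Separates d n K C x y) (he : nearest n C x = nearest n C z) :
    Separates d n K C z y := by
  obtain ⟨u, hu, v, hv, huv⟩ := h
  exact ⟨u, he ▸ hu, v, hv, huv⟩

theorem mk_mul_eq_smul_iff {g : G} : ((g * u : G) : G ⧸ H) = g • C ↔ (u : G ⧸ H) = C :=
  smul_left_cancel_iff (x := (u : G ⧸ H)) g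

theorem GraphDist.cosetDist_smul (hn : GraphDist n) (g : G) (C : G ⧸ H) (x : G) :
    cosetDist n (g * x) (g • C) = cosetDist n x C := by
  refine congrArg sInf (Set.ext fun k => ⟨?_, ?_⟩)
  · rintro ⟨w, hw, hxw⟩
    exact ⟨g⁻¹ * w, mk_mul_eq_smul_iff.1 (by rwa [mul_inv_cancel_left]),
      by rw [← hxw, ← hn.inv g x, mul_inv_cancel_left]⟩
  · rintro ⟨w, hw, hxw⟩
    exact ⟨g * w, mk_mul_eq_smul_iff.2 hw, by rw [hn.inv, hxw]⟩

theorem GraphDist.mul_mem_nearest_smul_iff (hn : GraphDist n) (g : G) (C : G ⧸ H) (x u : G) :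
    g * u ∈ nearest n (g • C) (g * x) ↔ u ∈ nearest n C x := by
  simp only [nearest, Set.mem_ofPred_eq, hn.cosetDist_smul, hn.inv, mk_mul_eq_smul_iff]

namespace ProjectionSystem

variable (P : ProjectionSystem H d n ρ K)
include P

theorem pos : 0 < K :=
  zero_lt_one.trans_le P.one_le

theorem separates_smul (g : G) (h : Separates d n K C x y) :
    Separates d n K (g • C) (g * x) (g * y) := by
  obtain ⟨u, hu, v, hv, huv⟩ := h
  exact ⟨g * u, (P.graph.mul_mem_nearest_smul_iff g C x u).2 hu, g * v,
    (P.graph.mul_mem_nearest_smul_iff g C y v).2 hv, by rwa [P.geo.inv]⟩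

theorem separates_symm (h : Separates d n K C x y) : Separates d n K C y x := by
  obtain ⟨u, hu, v, hv, huv⟩ := h
  exact ⟨v, hv, u, hu, by rwa [P.geo.comm]⟩

theorem lt_of_separates (h : Separates d n K C x y) : 98 * K < ρ C x y := by
  obtain ⟨u, hu, v, hv, huv⟩ := h
  linarith [P.le_of_mem_nearest C x u hu, P.le_of_mem_nearest C y v hv,
    P.eq_dist C u v hu.1 hv.1, P.tri C u x v, P.tri C x y v, P.comm C u x]

theorem separates_of_lt (h : 102 * K < ρ C x y) : Separates d n K C x y := by
  obtain ⟨u, hu⟩ := nearest_nonempty n C x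
  obtain ⟨v, hv⟩ := nearest_nonempty n C y
  refine ⟨u, hu, v, hv, ?_⟩
  linarith [P.le_of_mem_nearest C x u hu, P.le_of_mem_nearest C y v hv,
    P.eq_dist C u v hu.1 hv.1, P.tri C x u y, P.tri C u v y, P.comm C y v]

theorem nearest_ne_of_separates (h : Separates d n K C x y) : nearest n C x ≠ nearest n C y := by
  intro he
  obtain ⟨u, hu⟩ := nearest_nonempty n C x
  linarith [P.lt_of_separates h, P.pos, P.le_of_mem_nearest C x u hu,
    P.le_of_mem_nearest C y u (he ▸ hu), P.tri C x u y, P.comm C y u]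

theorem not_separates_self (C : G ⧸ H) (x : G) : ¬Separates d n K C x x :=
  fun h => P.nearest_ne_of_separates h rfl

theorem not_separates_of_mem_nearest (hu : u ∈ nearest n C x) : ¬Separates d n K C x u :=
  fun h => by linarith [P.lt_of_separates h, P.le_of_mem_nearest C x u hu, P.pos]

theorem dist_eq_of_two_mul_lt (hne : C ≠ C') (hw' : (w' : G ⧸ H) = C') (h : 2 * K < ρ C x w')
    (hw : (w : G ⧸ H) = C') : n x w = cosetDist n x C + 1 + cosetDist n w C := by
  refine P.dist_eq_of_lt C x w ?_
  have hww' := P.le_of_mk_eq C w w' (hw.trans hw'.symm) (by rw [hw]; exact hne.symm)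
  linarith [P.tri C x w w']

theorem cosetDist_lt_cosetDist (hne : C ≠ C') (hw' : (w' : G ⧸ H) = C')
    (h : 2 * K < ρ C x w') : cosetDist n x C < cosetDist n x C' := by
  obtain ⟨u, huC, hu⟩ := nearest_nonempty n C' x
  have := P.dist_eq_of_two_mul_lt hne hw' h huC
  omega

/-- The Behrstock inequality. -/
theorem le_or_le_of_ne (hne : C ≠ C') (x : G) (hw : (w : G ⧸ H) = C) (hw' : (w' : G ⧸ H) = C') :
    ρ C x w' ≤ 2 * K ∨ ρ C' x w ≤ 2 * K := by
  by_contra! h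
  exact (P.cosetDist_lt_cosetDist hne hw' h.1).asymm (P.cosetDist_lt_cosetDist hne.symm hw h.2)

theorem nearest_eq_nearestTo (hne : C ≠ C') (hw' : (w' : G ⧸ H) = C') (h : 2 * K < ρ C x w') :
    nearest n C' x = nearestTo n C' C := by
  have hdist (w : G) (hw : (w : G ⧸ H) = C') := P.dist_eq_of_two_mul_lt hne hw' h hw
  ext u
  constructor
  · rintro ⟨huC, hu⟩
    refine ⟨huC, fun w hw => ?_⟩
    have := hdist u huC
    have := hdist w hw
    have := cosetDist_le n x hw
    omega
  · rintro ⟨huC, hu⟩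
    obtain ⟨v, hvC, hv⟩ := nearest_nonempty n C' x
    have := hdist u huC
    have := hdist v hvC
    have := hu v hvC
    have := cosetDist_le n x huC
    exact ⟨huC, by omega⟩

theorem nearest_eq_nearest (hne : C ≠ C') (hw' : (w' : G ⧸ H) = C') (hw : (w : G ⧸ H) = C')
    (hx : 2 * K < ρ C x w') (hy : 2 * K < ρ C y w) : nearest n C' x = nearest n C' y := by
  rw [P.nearest_eq_nearestTo hne hw' hx, P.nearest_eq_nearestTo hne hw hy]

theorem le_of_cosetDist_le (hne : C ≠ C') (hle : cosetDist n x C ≤ cosetDist n x C')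
    (hw : (w : G ⧸ H) = C) : ρ C' x w ≤ 2 * K := by
  by_contra! h
  exact hle.not_gt (P.cosetDist_lt_cosetDist hne.symm hw h)

theorem le_of_cosetDist_le_of_lt (hne : C ≠ C') (h' : 10 * K < ρ C' x y)
    (hle : cosetDist n x C ≤ cosetDist n x C') (hw' : (w' : G ⧸ H) = C') :
    ρ C y w' ≤ 2 * K := by
  obtain ⟨w, hw⟩ := QuotientGroup.mk_surjective C
  have hxw := P.le_of_cosetDist_le hne hle hw
  refine (P.le_or_le_of_ne hne y hw hw').resolve_right fun hyw => ?_
  linarith [P.pos, P.tri C' x w y, P.comm C' w y]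

theorem injOn_cosetDist (x y : G) :
    {C : G ⧸ H | Separates d n K C x y}.InjOn (cosetDist n x) := by
  intro C hC C' hC' he
  by_contra hne
  obtain ⟨w', hw'⟩ := QuotientGroup.mk_surjective C'
  have hlt := P.lt_of_separates hC
  have hlt' := P.lt_of_separates hC'
  have hy := P.le_of_cosetDist_le_of_lt hne (by linarith [P.pos]) he.le hw'
  refine (P.cosetDist_lt_cosetDist hne hw' ?_).ne he
  linarith [P.pos, P.tri C x w' y, P.comm C w' y]

theorem separates_or_separates {C₁ C₂ C₃ : G ⧸ H} (h₁ : Separates d n K C₁ x y)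
    (h₂ : Separates d n K C₂ x y) (h₃ : Separates d n K C₃ x y)
    (h₁₂ : cosetDist n x C₁ < cosetDist n x C₂) (h₂₃ : cosetDist n x C₂ < cosetDist n x C₃)
    (z : G) : Separates d n K C₁ x z ∨ Separates d n K C₃ z y := by
  have hne₁₂ : C₁ ≠ C₂ := fun h => h₁₂.ne (congrArg _ h)
  have hne₂₃ : C₂ ≠ C₃ := fun h => h₂₃.ne (congrArg _ h)
  obtain ⟨w₁, hw₁⟩ := QuotientGroup.mk_surjective C₁
  obtain ⟨w₃, hw₃⟩ := QuotientGroup.mk_surjective C₃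
  have hlt₂ := P.lt_of_separates h₂
  have hlt₃ := P.lt_of_separates h₃
  have hK := P.pos
  have hx := P.le_of_cosetDist_le hne₁₂ h₁₂.le hw₁
  have hy := P.le_of_cosetDist_le_of_lt hne₂₃ (by linarith : 10 * K < ρ C₃ x y) h₂₃.le hw₃
  have hxw₁y := P.tri C₂ x w₁ y
  have hxw₃y := P.tri C₂ x w₃ y
  have hyw₁ := P.comm C₂ w₁ y
  have hyw₃ := P.comm C₂ w₃ y
  by_cases hz : 2 * K < ρ C₂ z w₁
  · exact Or.inl (h₁.congr_right (P.nearest_eq_nearest hne₁₂.symm hw₁ hw₁ (by linarith) hz))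
  · refine Or.inr (h₃.congr_left (P.nearest_eq_nearest hne₂₃ hw₃ hw₃ (by linarith) ?_))
    linarith [P.tri C₂ w₁ z y, P.tri C₂ z w₃ y, P.comm C₂ w₁ z]

theorem encard_separates_not_separates_le (x y z : G) :
    {C : G ⧸ H | Separates d n K C x y ∧ ¬Separates d n K C x z ∧ ¬Separates d n K C z y}.encard
      ≤ 2 := by
  by_contra! h
  obtain ⟨A, hA, B, hB, D, hD, hAB, hBD⟩ := exists_lt_lt_of_two_lt_encard
    ((P.injOn_cosetDist x y).mono fun C hC => hC.1) h
  exact (P.separates_or_separates hA.1 hB.1 hD.1 hAB hBD z).elim hA.2.1 hD.2.2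

theorem ne_and_separates_of_mem_nearest (hC : Separates d n K C x y) (hu : u ∈ nearest n C x)
    (h : Separates d n K C' x u) : C' ≠ C ∧ Separates d n K C' x y := by
  have hne : C' ≠ C := by
    rintro rfl
    exact P.not_separates_of_mem_nearest hu h
  have hlt := P.lt_of_separates hC
  have hlt' := P.lt_of_separates h
  have hK := P.pos
  obtain ⟨u', hu', v, hv, huv⟩ := h
  have hxv : ρ C x v ≤ 2 * K :=
    (P.le_or_le_of_ne hne.symm x hu.1 hv.1).resolve_right (by linarith)
  have hx : nearest n C x = nearestTo n C C' := P.nearest_eq_nearestTo hne hu.1 (by linarith)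
  have hy : nearest n C' y = nearestTo n C' C :=
    P.nearest_eq_nearestTo hne.symm hv.1 (by linarith [P.tri C x v y, P.comm C v y])
  refine ⟨hne, u', hu', v, hy ▸ ⟨hv.1, fun w₂ hw₂ => ?_⟩, huv⟩
  obtain ⟨w, hwC, hw⟩ := nearest_nonempty n C w₂
  have hvC := cosetDist_le n v hu.1
  have hvu := hv.2
  have huw : cosetDist n u C' ≤ cosetDist n w C' := (hx ▸ hu).2 w hwC
  have hww₂ := cosetDist_le n w hw₂
  have hcomm := P.graph.comm w w₂
  have hcomm' := P.graph.comm u v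
  omega

/-- If `x'` looked like `u` from the last of three cosets separating `x` from `u`, the other two
would both separate `x` from `x'`. -/
theorem nearest_eq_of_two_lt_encard {x' : G} (hx' : AtMostOneSep H d n K x x')
    (hu : u ∈ nearest n C x) (h : 2 < {A : G ⧸ H | Separates d n K A x u}.encard) :
    nearest n C x = nearest n C x' := by
  obtain ⟨A, hA, B, hB, D, hD, hAB, hBD⟩ := exists_lt_lt_of_two_lt_encard (P.injOn_cosetDist x u) h
  have hK := P.pos
  have hlt := P.lt_of_separates hD
  have hDC : D ≠ C := by
    rintro rfl
    exact P.not_separates_of_mem_nearest hu hD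
  by_cases hfar : 2 * K < ρ D x' u
  · exact P.nearest_eq_nearest hDC hu.1 hu.1 (by linarith) hfar
  have hsep {A : G ⧸ H} (hA : Separates d n K A x u) (hAD : cosetDist n x A < cosetDist n x D) :
      Separates d n K A x x' := by
    have hne : A ≠ D := fun h => hAD.ne (congrArg _ h)
    obtain ⟨w, hw⟩ := QuotientGroup.mk_surjective A
    have hxw := P.le_of_cosetDist_le hne hAD.le hw
    have hxwu := P.tri D x w u
    have hwu := P.comm D w u
    exact hA.congr_right (P.nearest_eq_nearest hne.symm hw hw (by linarith)
      (by linarith [P.tri D w x' u, P.comm D w x']))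
  exact absurd (congrArg _ (hx' (hsep hA (hAB.trans hBD)) (hsep hB hBD))) hAB.ne

theorem atMostOneSep_of_mk_eq (h : (x : G ⧸ H) = y) : AtMostOneSep H d n K x y := by
  refine Set.subsingleton_of_forall_eq (x : G ⧸ H) fun C hC => by_contra fun hne => ?_
  linarith [P.le_of_mk_eq C x y h (Ne.symm hne), P.lt_of_separates hC, P.pos]

/-- A property holding at `x` but not at `z` is lost at an edge of the chain through the cosets
separating `x` from `z`. -/
theorem exists_atMostOneSep (Q : G → Prop) (hx : Q x) (hz : ¬Q z) :
    ∃ p q : G, AtMostOneSep H d n K p q ∧ Q p ∧ ¬Q q ∧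
      (q = z ∨ Separates d n K (q : G ⧸ H) x z) := by
  induction hN : n x z using Nat.strong_induction_on generalizing x z with | _ N ih =>
  by_cases hs : AtMostOneSep H d n K x z
  · exact ⟨x, z, hs, hx, hz, Or.inl rfl⟩
  obtain ⟨C, hC, -, -, -⟩ := Set.not_subsingleton_iff.1 hs
  obtain ⟨u, hu⟩ := nearest_nonempty n C x
  obtain ⟨v, hv⟩ := nearest_nonempty n C z
  have hdist := P.dist_eq_of_lt C x z (by linarith [P.lt_of_separates hC, P.pos])
  have hxu := hu.2
  have hzv := hv.2
  rw [P.graph.comm] at hzv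
  by_cases hQu : Q u
  · by_cases hQv : Q v
    · obtain ⟨p, q, hpq, hp, hq, hqz⟩ := ih (n v z) (by omega) hQv hz rfl
      exact ⟨p, q, hpq, hp, hq, hqz.imp_right fun h => P.separates_symm
        (P.ne_and_separates_of_mem_nearest (P.separates_symm hC) hv (P.separates_symm h)).2⟩
    · exact ⟨u, v, P.atMostOneSep_of_mk_eq (hu.1.trans hv.1.symm), hQu, hQv,
        Or.inr (hv.1.symm ▸ hC)⟩
  · obtain ⟨p, q, hpq, hp, hq, rfl | hqu⟩ := ih (n x u) (by omega) hx hQu rfl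
    · exact ⟨p, q, hpq, hp, hq, Or.inr (hu.1.symm ▸ hC)⟩
    · exact ⟨p, q, hpq, hp, hq, Or.inr (P.ne_and_separates_of_mem_nearest hC hu hqu).2⟩

end ProjectionSystem

end Separation

section SepMetric

variable {H : Subgroup G} {d : G → G → ℝ} {n : G → G → ℕ} {ρ : G ⧸ H → G → G → ℝ} {K : ℝ}
  {m : G → G → ℕ} {C : G ⧸ H} {p x y z : G}

/-- The graph distance `m` whose edges join the points separated by at most one coset. -/
structure SepMetric (H : Subgroup G) (d : G → G → ℝ) (n : G → G → ℕ) (ρ : G ⧸ H → G → G → ℝ)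
    (K : ℝ) (m : G → G → ℕ) : Prop where
  system : ProjectionSystem H d n ρ K
  graph : GraphDist m
  le_one_iff : ∀ x y, m x y ≤ 1 ↔ AtMostOneSep H d n K x y

namespace ProjectionSystem

variable (P : ProjectionSystem H d n ρ K)
include P

theorem atMostOneSep_symm (h : AtMostOneSep H d n K x y) : AtMostOneSep H d n K y x :=
  h.anti fun _ => P.separates_symm

theorem atMostOneSep_mul_left (g : G) (h : AtMostOneSep H d n K x y) :
    AtMostOneSep H d n K (g * x) (g * y) := by
  intro C hC C' hC'
  have hC := P.separates_smul g⁻¹ hC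
  have hC' := P.separates_smul g⁻¹ hC'
  rw [inv_mul_cancel_left, inv_mul_cancel_left] at hC hC'
  exact (smul_left_cancel_iff g⁻¹).1 (h hC hC')

theorem atMostOneSep_of_dist_le_one (h : d x y ≤ 1) : AtMostOneSep H d n K x y :=
  fun C hC => by linarith [P.le_of_dist_le_one C x y h, P.lt_of_separates hC, P.pos]

theorem exists_sepMetric (hd : Subgroup.closure {g | d 1 g ≤ 1} = ⊤) :
    ∃ S : Set G, Subgroup.closure S = ⊤ ∧ SepMetric H d n ρ K (wordDist S) := by
  have hS : Subgroup.closure {g | AtMostOneSep H d n K 1 g} = ⊤ :=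
    top_le_iff.1 (hd ▸ Subgroup.closure_mono fun g => P.atMostOneSep_of_dist_le_one)
  refine ⟨_, hS, P, graphDist_wordDist hS, fun x y => ⟨fun h => ?_, fun h => ?_⟩⟩
  · rcases eq_or_mem_of_wordDist_le_one hS h with rfl | h | h
    · exact fun C hC => absurd hC (P.not_separates_self C x)
    · simpa only [mul_one, mul_inv_cancel_left] using P.atMostOneSep_mul_left x h
    · simpa only [mul_one, mul_inv_cancel_left] using
        P.atMostOneSep_symm (P.atMostOneSep_mul_left y h)
  · refine wordDist_le_one_of_mem ?_
    simpa only [Set.mem_ofPred_eq, inv_mul_cancel] using P.atMostOneSep_mul_left x⁻¹ h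

theorem dist_one_inv_mul_le_of_mem_nearest {u v : G} (hu : u ∈ nearest n C x)
    (hv : v ∈ nearest n C x) : u⁻¹ * v ∈ {h : G | h ∈ H ∧ d 1 h ≤ 2 * K} := by
  refine ⟨QuotientGroup.eq.1 (hu.1.trans hv.1.symm), ?_⟩
  rw [← P.geo.dist_eq_dist_one, ← P.eq_dist C u v hu.1 hv.1]
  linarith [P.le_of_mem_nearest C x u hu, P.le_of_mem_nearest C x v hv, P.tri C u x v,
    P.comm C u x]

theorem finite_nearest (C : G ⧸ H) (x : G) : (nearest n C x).Finite := by
  obtain ⟨u, hu⟩ := nearest_nonempty n C x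
  exact .of_injOn (fun v hv => P.dist_one_inv_mul_le_of_mem_nearest hu hv)
    (mul_right_injective u⁻¹).injOn (P.finite_dist_le _)

theorem ncard_nearest_le (C : G ⧸ H) (x : G) :
    (nearest n C x).ncard ≤ {h : G | h ∈ H ∧ d 1 h ≤ 2 * K}.ncard := by
  obtain ⟨u, hu⟩ := nearest_nonempty n C x
  exact Set.ncard_le_ncard_of_injOn _ (fun v hv => P.dist_one_inv_mul_le_of_mem_nearest hu hv)
    (mul_right_injective u⁻¹).injOn (P.finite_dist_le _)

end ProjectionSystem

namespace SepMetric

variable (D : SepMetric H d n ρ K m)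
include D

theorem dist_le_one_of_mk_eq (h : (x : G ⧸ H) = y) : m x y ≤ 1 :=
  (D.le_one_iff x y).2 (D.system.atMostOneSep_of_mk_eq h)

theorem dist_le_one_of_mem_nearest {u : G} (hC : Separates d n K C x y) (hu : u ∈ nearest n C x)
    (h : {C : G ⧸ H | Separates d n K C x y}.encard ≤ 2) : m x u ≤ 1 := by
  refine (D.le_one_iff x u).2 fun A hA B hB => by_contra fun hne => ?_
  obtain ⟨hAC, hA⟩ := D.system.ne_and_separates_of_mem_nearest hC hu hA
  obtain ⟨hBC, hB⟩ := D.system.ne_and_separates_of_mem_nearest hC hu hB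
  have hsub : {A, B, C} ⊆ {C : G ⧸ H | Separates d n K C x y} :=
    Set.insert_subset hA (Set.insert_subset hB (Set.singleton_subset_iff.2 hC))
  have hle := (Set.encard_le_encard hsub).trans h
  rw [Set.encard_insert_of_notMem (by simp [hne, hAC]), Set.encard_pair hBC] at hle
  exact absurd hle (by norm_num)

theorem two_lt_encard_separates (h : 3 < m x y) :
    2 < {C : G ⧸ H | Separates d n K C x y}.encard := by
  by_contra! hle
  by_cases hs : AtMostOneSep H d n K x y
  · have := (D.le_one_iff x y).2 hs
    omega
  obtain ⟨C, hC, -, -, -⟩ := Set.not_subsingleton_iff.1 hs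
  obtain ⟨u, hu⟩ := nearest_nonempty n C x
  obtain ⟨v, hv⟩ := nearest_nonempty n C y
  have hsymm : {C : G ⧸ H | Separates d n K C x y} = {C | Separates d n K C y x} :=
    Set.ext fun _ => ⟨D.system.separates_symm, D.system.separates_symm⟩
  have hxu := D.dist_le_one_of_mem_nearest hC hu hle
  have hyv := D.dist_le_one_of_mem_nearest (D.system.separates_symm hC) hv (hsymm ▸ hle)
  have huv := D.dist_le_one_of_mk_eq (hu.1.trans hv.1.symm)
  have htri := D.graph.tri x u y
  have htri' := D.graph.tri u v y
  have hcomm := D.graph.comm y v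
  omega

theorem nearest_eq_of_add_lt (hp : (p : G ⧸ H) = C) (h : m x y + 8 < m x p + m y p) :
    nearest n C x = nearest n C y := by
  induction hN : m x y generalizing x with
  | zero => rw [D.graph.eq_of_eq_zero hN]
  | succ N ih =>
    obtain ⟨x', hxx', hx'y⟩ := D.graph.exists_between (x := x) (y := y) (k := 1) (by omega)
    obtain ⟨u, hu⟩ := nearest_nonempty n C x
    have hup := D.dist_le_one_of_mk_eq (hu.1.trans hp.symm)
    have hxp := D.graph.tri x u p
    have hyp := D.graph.tri y x p
    have hcomm := D.graph.comm x y
    have hx'p := D.graph.tri x x' p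
    rw [D.system.nearest_eq_of_two_lt_encard ((D.le_one_iff x x').1 hxx'.le) hu
      (D.two_lt_encard_separates (by omega))]
    exact ih (by omega) (by omega)

theorem add_le_of_nearest_ne (hp : (p : G ⧸ H) = C) (h : nearest n C x ≠ nearest n C y) :
    m x p + m y p ≤ m x y + 8 :=
  not_lt.1 fun hlt => h (D.nearest_eq_of_add_lt hp hlt)

theorem add_le_or_add_le_of_separates (hp : (p : G ⧸ H) = C) (h : Separates d n K C x z) (y : G) :
    m x p + m y p ≤ m x y + 8 ∨ m y p + m z p ≤ m y z + 8 := by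
  by_cases hxy : nearest n C x = nearest n C y
  · exact Or.inr (D.add_le_of_nearest_ne hp (hxy ▸ D.system.nearest_ne_of_separates h))
  · exact Or.inl (D.add_le_of_nearest_ne hp hxy)

theorem add_le_add_of_edge {w p q : G} (hpq : m p q ≤ 1) (hyz : m y p + m z p ≤ m y z + 8)
    (hxw : m x q + m w q ≤ m x w + 8) : m x z + m y w ≤ m y z + m x w + 18 := by
  have := D.graph.tri x q p
  have := D.graph.tri w q p
  have := D.graph.comm q p
  have := D.graph.tri x p z
  have := D.graph.comm p z
  have := D.graph.tri y p w
  have := D.graph.comm p w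
  omega

/-- Walk from `y` to `w` along separating cosets, as long as the point reached is close to both
geodesics `yx` and `yz`. -/
theorem dist_add_dist_le (x y z w : G) :
    m x z + m y w ≤ m x y + m z w + 18 ∨ m x z + m y w ≤ m y z + m x w + 18 := by
  have hcomm := D.graph.comm
  have hself := D.graph.self
  by_cases hw : m y w + m x w ≤ m y x + 8 ∧ m y w + m z w ≤ m y z + 8
  · left
    have := D.graph.tri x w z
    have := hcomm w z
    have := hcomm y x
    omega
  obtain ⟨p, q, hpq, ⟨hpx, hpz⟩, hq, hqw⟩ := D.system.exists_atMostOneSep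
    (fun p => m y p + m x p ≤ m y x + 8 ∧ m y p + m z p ≤ m y z + 8)
    (by rw [hself, hcomm x, hcomm z]; omega) hw
  have hpq := (D.le_one_iff p q).2 hpq
  have hside (x : G) (hx : ¬m y q + m x q ≤ m y x + 8) : m x q + m w q ≤ m x w + 8 := by
    rcases hqw with rfl | hqw
    · rw [hself]
      omega
    · exact (D.add_le_or_add_le_of_separates rfl hqw x).resolve_left hx
  by_cases hx : m y q + m x q ≤ m y x + 8
  · left
    have := D.add_le_add_of_edge hpq hpx (hside z fun hz => hq ⟨hx, hz⟩)
    have := hcomm x y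
    have := hcomm x z
    omega
  · exact Or.inr (D.add_le_add_of_edge hpq hpz (hside x hx))

theorem hyperbolicWith_nine : HyperbolicWith (fun x y => (m x y : ℝ)) 9 := by
  intro w x y z
  simp only [gprod]
  rcases D.dist_add_dist_le x y z w with h | h
  · have h' : (m x z : ℝ) + m y w ≤ m x y + m z w + 18 := by exact_mod_cast h
    linarith [min_le_left (((m x w : ℝ) + m y w - m x y) / 2) ((m y w + m z w - m y z) / 2)]
  · have h' : (m x z : ℝ) + m y w ≤ m y z + m x w + 18 := by exact_mod_cast h
    linarith [min_le_right (((m x w : ℝ) + m y w - m x y) / 2) ((m y w + m z w - m y z) / 2)]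

theorem encard_separates_le (x y : G) :
    {C : G ⧸ H | Separates d n K C x y}.encard ≤ (3 * m x y : ℕ) := by
  induction hN : m x y generalizing x with
  | zero =>
    have hempty : {C : G ⧸ H | Separates d n K C x y} = ∅ :=
      Set.eq_empty_of_forall_notMem fun C =>
        D.graph.eq_of_eq_zero hN ▸ D.system.not_separates_self C x
    rw [hempty, Set.encard_empty]
    exact bot_le
  | succ N ih =>
    obtain ⟨x', hxx', hx'y⟩ := D.graph.exists_between (x := x) (y := y) (k := 1) (by omega)
    have hstep : {C : G ⧸ H | Separates d n K C x x'}.encard ≤ 1 :=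
      Set.encard_le_one_iff_subsingleton.2 ((D.le_one_iff x x').1 hxx'.le)
    have hsub : {C : G ⧸ H | Separates d n K C x y} ⊆
        ({C | Separates d n K C x x'} ∪ {C | Separates d n K C x' y}) ∪
        {C | Separates d n K C x y ∧ ¬Separates d n K C x x' ∧ ¬Separates d n K C x' y} := by
      intro C hC
      simp only [Set.mem_union, Set.mem_ofPred_eq] at hC ⊢
      tauto
    calc {C : G ⧸ H | Separates d n K C x y}.encard ≤ 1 + (3 * N : ℕ) + 2 :=
          (Set.encard_le_encard hsub).trans <| (Set.encard_union_le _ _).trans <| add_le_add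
            ((Set.encard_union_le _ _).trans (add_le_add hstep (ih x' (by omega))))
            (D.system.encard_separates_not_separates_le x y x')
      _ = (3 * (N + 1) : ℕ) := by exact_mod_cast (by omega : 1 + 3 * N + 2 = 3 * (N + 1))

theorem finite_separates (x y : G) : {C : G ⧸ H | Separates d n K C x y}.Finite :=
  Set.finite_of_encard_le_coe (D.encard_separates_le x y)

theorem encard_separates_within_le (x y : G) (B : ℕ) :
    {C : G ⧸ H | Separates d n K C x y ∧ ∀ p : G, (p : G ⧸ H) = C → m x p ≤ B}.encard
      ≤ (3 * B + 3 : ℕ) := by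
  set Q := {C : G ⧸ H | Separates d n K C x y ∧ ∀ p : G, (p : G ⧸ H) = C → m x p ≤ B}
  rcases Q.eq_empty_or_nonempty with hQ | hQ
  · simp [hQ]
  obtain ⟨L, ⟨hL, hLB⟩, hmax⟩ := Set.exists_max_image Q (cosetDist n x)
    ((D.finite_separates x y).subset fun C hC => hC.1) hQ
  obtain ⟨q, hq⟩ := QuotientGroup.mk_surjective L
  have hsub : Q ⊆ ({L} ∪ {C | Separates d n K C x q}) ∪
      {C | Separates d n K C x y ∧ ¬Separates d n K C x q ∧ ¬Separates d n K C q y} := by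
    intro C hC
    by_cases hCL : C = L
    · exact Or.inl (Or.inl hCL)
    by_cases hCxq : Separates d n K C x q
    · exact Or.inl (Or.inr hCxq)
    refine Or.inr ⟨hC.1, hCxq, fun hCqy => ?_⟩
    have hlt := D.system.lt_of_separates hL
    have hle := D.system.le_of_cosetDist_le_of_lt hCL (x := x) (y := y)
      (by linarith [D.system.pos]) (hmax C hC) hq
    linarith [D.system.lt_of_separates hCqy, D.system.comm C y q, D.system.pos]
  have hxq : {C : G ⧸ H | Separates d n K C x q}.encard ≤ (3 * B : ℕ) :=
    (D.encard_separates_le x q).trans (by exact_mod_cast Nat.mul_le_mul_left 3 (hLB q hq))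
  calc Q.encard ≤ 1 + (3 * B : ℕ) + 2 :=
        (Set.encard_le_encard hsub).trans <| (Set.encard_union_le _ _).trans <| add_le_add
          ((Set.encard_union_le _ _).trans (add_le_add (Set.encard_singleton L).le hxq))
          (D.system.encard_separates_not_separates_le x y q)
    _ = (3 * B + 3 : ℕ) := by exact_mod_cast (by omega : 1 + 3 * B + 2 = 3 * B + 3)

theorem exists_separates_mid {A : ℕ} (h : 2 * A + 4 ≤ m x y) : ∃ C : G ⧸ H,
    Separates d n K C x y ∧
      ∀ p : G, (p : G ⧸ H) = C → A ≤ m x p ∧ m x p ≤ A + 2 ∧ A ≤ m y p := by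
  have hself := D.graph.self x
  obtain ⟨p, q, hpq, hp, hq, rfl | hC⟩ :=
    D.system.exists_atMostOneSep (x := x) (z := y) (fun p => m x p ≤ A) (by omega) (by omega)
  all_goals
    have hpq := (D.le_one_iff p q).2 hpq
    have hxpq := D.graph.tri x p q
  · omega
  · refine ⟨q, hC, fun r hr => ?_⟩
    have hrq := D.dist_le_one_of_mk_eq hr
    have := D.graph.tri x r q
    have := D.graph.tri x q r
    have := D.graph.comm r q
    have := D.graph.tri x r y
    have := D.graph.comm r y
    omega

theorem nearest_eq_nearest_mul {g : G} (hp : (p : G ⧸ H) = C)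
    (h : m x (g * x) + 5 ≤ m x p) : nearest n C x = nearest n C (g * x) := by
  have := D.graph.tri x (g * x) p
  exact D.nearest_eq_of_add_lt hp (by omega)

theorem inv_smul_mem_separates_within {g : G} {e A : ℕ} (hA : e + 5 ≤ A)
    (hC : Separates d n K C x y)
    (hCA : ∀ p : G, (p : G ⧸ H) = C → A ≤ m x p ∧ m x p ≤ A + 2 ∧ A ≤ m y p)
    (hx : m x (g * x) ≤ e) (hy : m y (g * y) ≤ e) :
    Separates d n K (g⁻¹ • C) x y ∧
      ∀ p : G, (p : G ⧸ H) = g⁻¹ • C → m x p ≤ A + 2 + e := by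
  obtain ⟨q, hq⟩ := QuotientGroup.mk_surjective C
  have hqA := hCA q hq
  refine ⟨?_, fun p hp => ?_⟩
  · have hsep := D.system.separates_smul g⁻¹ <|
      (hC.congr_left (D.nearest_eq_nearest_mul (g := g) hq (by omega))).congr_right
        (D.nearest_eq_nearest_mul (g := g) hq (by omega))
    simpa only [inv_mul_cancel_left] using hsep
  · have hgp : ((g * p : G) : G ⧸ H) = C := by
      rw [← smul_inv_smul g C]
      exact mk_mul_eq_smul_iff.2 hp
    have := D.graph.inv g x p
    have := D.graph.tri (g * x) x (g * p)
    have := D.graph.comm (g * x) x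
    have := hCA _ hgp
    omega

/-- An element `g` moving `x` and `y` little is determined by the coset `g⁻¹ • C`, for a coset `C`
separating `x` from `y` far from both, and by the image of a point of `g⁻¹ • C` nearest to `x`. -/
theorem finite_ncard_le_of_dist_le {e A : ℕ} (hA : e + 5 ≤ A) (hxy : 2 * A + 4 ≤ m x y) :
    {g : G | m x (g * x) ≤ e ∧ m y (g * y) ≤ e}.Finite ∧
      {g : G | m x (g * x) ≤ e ∧ m y (g * y) ≤ e}.ncard ≤
        (3 * (A + 2 + e) + 3) * {h : G | h ∈ H ∧ d 1 h ≤ 2 * K}.ncard := by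
  obtain ⟨C, hC, hCA⟩ := D.exists_separates_mid hxy
  obtain ⟨q, hq⟩ := QuotientGroup.mk_surjective C
  have hle := D.encard_separates_within_le x y (A + 2 + e)
  set Q := {C : G ⧸ H | Separates d n K C x y ∧ ∀ p : G, (p : G ⧸ H) = C → m x p ≤ A + 2 + e}
  have hQ : Q.Finite := Set.finite_of_encard_le_coe hle
  rw [← hQ.cast_ncard_eq] at hle
  choose u hu using fun C : G ⧸ H => nearest_nonempty n C x
  set T := {g : G | m x (g * x) ≤ e ∧ m y (g * y) ≤ e}
  have hmaps : ∀ g ∈ T, (g⁻¹ • C, g * u (g⁻¹ • C)) ∈ Q ×ˢ nearest n C x := by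
    rintro g ⟨hx, hy⟩
    refine ⟨D.inv_smul_mem_separates_within hA hC hCA hx hy, ?_⟩
    have hqA := hCA q hq
    rw [D.nearest_eq_nearest_mul hq (g := g) (by omega)]
    simpa only [smul_inv_smul] using
      (D.system.graph.mul_mem_nearest_smul_iff g (g⁻¹ • C) x _).2 (hu (g⁻¹ • C))
  have hinj : Set.InjOn (fun g => (g⁻¹ • C, g * u (g⁻¹ • C))) T := by
    intro a _ b _ hab
    simp only [Prod.mk.injEq] at hab
    exact mul_right_cancel (hab.1 ▸ hab.2)
  have hfin := hQ.prod (D.system.finite_nearest C x)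
  refine ⟨.of_injOn hmaps hinj hfin, (Set.ncard_le_ncard_of_injOn _ hmaps hinj hfin).trans ?_⟩
  rw [Set.ncard_prod]
  exact Nat.mul_le_mul (by exact_mod_cast hle) (D.system.ncard_nearest_le C x)

theorem acylDist : AcylDist (fun x y => (m x y : ℝ)) := by
  intro ε hε
  simp only [← Nat.le_floor_iff hε.le]
  refine ⟨(2 * (⌊ε⌋₊ + 5) + 4 : ℕ), by positivity,
    (3 * (⌊ε⌋₊ + 5 + 2 + ⌊ε⌋₊) + 3) * {h : G | h ∈ H ∧ d 1 h ≤ 2 * K}.ncard + 1,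
    Nat.succ_pos _, fun x y hxy => ?_⟩
  have hcount := D.finite_ncard_le_of_dist_le le_rfl (Nat.cast_le.1 hxy)
  exact ⟨hcount.1, hcount.2.trans (Nat.le_succ _)⟩

end SepMetric

end SepMetric

section Transverse

variable {H : Subgroup G} {d : G → G → ℝ} {n : G → G → ℕ} {ρ : G ⧸ H → G → G → ℝ} {K : ℝ}
  {m : G → G → ℕ} {g h s t : G}

/-- `t` translates along a quasi-axis that crosses the subgroup `H`: from `H`, the elements `t⁻¹`
and `t` look far apart. -/
structure IsTransverse (ρ : G ⧸ H → G → G → ℝ) (K : ℝ) (t : G) : Prop where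
  notMem : t ∉ H
  lt_dist : 200 * K < ρ ((1 : G) : G ⧸ H) t⁻¹ t

theorem one_ne_mk (ht : t ∉ H) : ((1 : G) : G ⧸ H) ≠ t := fun h =>
  ht (by simpa only [inv_one, one_mul] using QuotientGroup.eq.1 h)

theorem one_eq_mk (hh : h ∈ H) : ((1 : G) : G ⧸ H) = h :=
  QuotientGroup.eq.2 (by simpa only [inv_one, one_mul] using hh)

namespace ProjectionSystem

variable (P : ProjectionSystem H d n ρ K)
include P

theorem dist_mk (g x y : G) : ρ (g : G ⧸ H) x y = ρ ((1 : G) : G ⧸ H) (g⁻¹ * x) (g⁻¹ * y) := by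
  rw [← P.smul g⁻¹ (g : G ⧸ H), MulAction.Quotient.smul_mk, smul_eq_mul, inv_mul_cancel]

theorem isTransverse_inv (ht : IsTransverse ρ K t) : IsTransverse ρ K t⁻¹ :=
  ⟨fun h => ht.notMem (inv_mem_iff.1 h), by rw [inv_inv, P.comm]; exact ht.lt_dist⟩

theorem dist_pow_le (ht : IsTransverse ρ K t) (k : ℕ) :
    ρ ((1 : G) : G ⧸ H) (t ^ (k + 1)) t ≤ 2 * K := by
  induction k with
  | zero => simpa only [zero_add, pow_one, P.self] using (by linarith [P.pos] : 0 ≤ 2 * K)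
  | succ k ih =>
    refine (P.le_or_le_of_ne (one_ne_mk ht.notMem) (t ^ (k + 1 + 1)) rfl rfl).resolve_right ?_
    rw [P.dist_mk, pow_succ' t, inv_mul_cancel_left, mul_one]
    linarith [ht.lt_dist, P.pos, P.tri ((1 : G) : G ⧸ H) t⁻¹ (t ^ (k + 1)) t,
      P.comm ((1 : G) : G ⧸ H) t⁻¹ (t ^ (k + 1))]

theorem lt_dist_pow (ht : IsTransverse ρ K t) (i j : ℕ) :
    102 * K < ρ ((t ^ (i + 1) : G) : G ⧸ H) 1 (t ^ (i + 1 + (j + 1))) := by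
  rw [P.dist_mk, mul_one, pow_add t (i + 1), inv_mul_cancel_left]
  have hi := P.dist_pow_le (P.isTransverse_inv ht) i
  rw [inv_pow] at hi
  linarith [ht.lt_dist, P.pos, P.dist_pow_le ht j,
    P.tri ((1 : G) : G ⧸ H) t⁻¹ (t ^ (i + 1))⁻¹ t,
    P.tri ((1 : G) : G ⧸ H) (t ^ (i + 1))⁻¹ (t ^ (j + 1)) t,
    P.comm ((1 : G) : G ⧸ H) (t ^ (i + 1))⁻¹ t⁻¹]

theorem separates_pow (ht : IsTransverse ρ K t) {i j : ℕ} (hij : i < j) :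
    Separates d n K ((t ^ (i + 1) : G) : G ⧸ H) 1 (t ^ (j + 1)) := by
  obtain ⟨k, rfl⟩ := Nat.exists_eq_add_of_lt hij
  exact P.separates_of_lt (by simpa only [add_assoc, add_comm 1] using P.lt_dist_pow ht i k)

theorem pow_notMem (ht : IsTransverse ρ K t) (k : ℕ) : t ^ (k + 1) ∉ H := by
  intro hk
  rcases k with _ | k
  · exact ht.notMem (by simpa only [zero_add, pow_one] using hk)
  have hlt := P.lt_dist_pow ht 0 k
  rw [zero_add, pow_one, add_comm 1] at hlt
  linarith [P.pos, P.le_of_mk_eq (t : G ⧸ H) 1 _ (one_eq_mk hk) (one_ne_mk ht.notMem)]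

theorem mk_pow_injective (ht : IsTransverse ρ K t) :
    Function.Injective fun i : ℕ => ((t ^ (i + 1) : G) : G ⧸ H) := by
  refine Function.Injective.of_lt_imp_ne fun i j hij he => ?_
  obtain ⟨k, rfl⟩ := Nat.exists_eq_add_of_lt hij
  refine P.pow_notMem ht k ?_
  rw [show i + k + 1 + 1 = i + 1 + (k + 1) by ring, pow_add t (i + 1)] at he
  simpa only [inv_mul_cancel_left] using QuotientGroup.eq.1 he

theorem dist_mul_self (hh : h ∈ H) (g : G) :
    ρ ((1 : G) : G ⧸ H) (h * g) h = ρ ((1 : G) : G ⧸ H) g 1 := by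
  nth_rw 1 [one_eq_mk hh, P.dist_mk, inv_mul_cancel_left, inv_mul_cancel]

theorem isTransverse_mul (hg : g ∉ H) (hh : h ∈ H)
    (hlt : 2 * ρ ((1 : G) : G ⧸ H) g 1 + ρ ((1 : G) : G ⧸ H) g⁻¹ 1 + 300 * K < d 1 h) :
    IsTransverse ρ K (h * g) := by
  refine ⟨fun hc => hg ((H.mul_mem_cancel_left hh).1 hc), ?_⟩
  have hinv : ρ ((1 : G) : G ⧸ H) (g⁻¹ * h⁻¹) g⁻¹ ≤ K := by
    rw [← mul_one g⁻¹, mul_assoc, one_mul, ← P.dist_mk]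
    have h₁ := (one_eq_mk (H.inv_mem hh)).symm
    exact P.le_of_mk_eq _ _ _ h₁ (h₁ ▸ one_ne_mk hg)
  rw [mul_inv_rev]
  linarith [P.pos, P.nonneg ((1 : G) : G ⧸ H) g 1, P.dist_mul_self hh g,
    P.eq_dist _ 1 h rfl (one_eq_mk hh).symm, P.tri ((1 : G) : G ⧸ H) 1 (g⁻¹ * h⁻¹) h,
    P.tri ((1 : G) : G ⧸ H) (g⁻¹ * h⁻¹) (h * g) h, P.tri ((1 : G) : G ⧸ H) 1 g⁻¹ (g⁻¹ * h⁻¹),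
    P.comm ((1 : G) : G ⧸ H) 1 g⁻¹, P.comm ((1 : G) : G ⧸ H) g⁻¹ (g⁻¹ * h⁻¹)]

theorem nearest_pow_ne (hs : IsTransverse ρ K s) (ht : IsTransverse ρ K t)
    (hlt : 106 * K < ρ ((1 : G) : G ⧸ H) s t) (a b : ℕ) :
    nearest n ((1 : G) : G ⧸ H) (s ^ (a + 1)) ≠ nearest n ((1 : G) : G ⧸ H) (t ^ (b + 1)) := by
  refine P.nearest_ne_of_separates (P.separates_of_lt ?_)
  linarith [P.dist_pow_le hs a, P.dist_pow_le ht b,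
    P.comm ((1 : G) : G ⧸ H) s (s ^ (a + 1)), P.tri ((1 : G) : G ⧸ H) s (s ^ (a + 1)) t,
    P.tri ((1 : G) : G ⧸ H) (s ^ (a + 1)) (t ^ (b + 1)) t]

theorem exists_forall_lt_dist (L : ℝ) {F : Set G} (hF : F.Finite) (hFH : ∀ f ∈ F, f ∈ H) :
    ∃ h ∈ H, ∀ f ∈ F, L < d f h := by
  by_contra! hcon
  refine P.infinite ((hF.biUnion fun f _ => (P.finite_dist_le L).image (f * ·)).subset ?_)
  intro g hg
  obtain ⟨f, hf, hd⟩ := hcon g hg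
  refine Set.mem_biUnion hf ⟨f⁻¹ * g, ⟨H.mul_mem (H.inv_mem (hFH f hf)) hg, ?_⟩,
    mul_inv_cancel_left f g⟩
  rwa [← P.geo.dist_eq_dist_one]

theorem exists_isTransverse_seq : ∃ t : ℕ → G, (∀ i, IsTransverse ρ K (t i)) ∧
    Pairwise fun i j => ∀ a b : ℕ, nearest n ((1 : G) : G ⧸ H) (t i ^ (a + 1)) ≠
      nearest n ((1 : G) : G ⧸ H) (t j ^ (b + 1)) := by
  obtain ⟨g, hg⟩ : ∃ g, g ∉ H := by
    by_contra! hH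
    exact P.ne_top ((Subgroup.eq_top_iff' H).2 hH)
  set o := ((1 : G) : G ⧸ H)
  set L := 2 * ρ o g 1 + ρ o g⁻¹ 1 + 300 * K
  have : Std.Symm fun x y => L < d x y := ⟨fun x y h => P.geo.comm x y ▸ h⟩
  obtain ⟨h, hh, hpair⟩ := exists_seq_of_forall_finset_exists' (fun h => h ∈ H ∧ L < d 1 h)
    (fun x y => L < d x y) fun s hs => by
      obtain ⟨h, hh, hlt⟩ := P.exists_forall_lt_dist L (s.finite_toSet.insert 1)
        (Set.forall_mem_insert.2 ⟨H.one_mem, fun f hf => (hs f hf).1⟩)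
      rw [Set.forall_mem_insert] at hlt
      exact ⟨h, ⟨hh, hlt.1⟩, hlt.2⟩
  have ht i := P.isTransverse_mul hg (hh i).1 (hh i).2
  refine ⟨fun i => h i * g, ht, fun i j hij => P.nearest_pow_ne (ht i) (ht j) ?_⟩
  have hlt : L < d (h i) (h j) := hpair hij
  linarith [P.pos, P.dist_mul_self (hh i).1 g, P.dist_mul_self (hh j).1 g,
    P.eq_dist o _ _ (one_eq_mk (hh i).1).symm (one_eq_mk (hh j).1).symm, P.nonneg o g⁻¹ 1,
    P.tri o (h i) (h i * g) (h j), P.tri o (h i * g) (h j * g) (h j), P.comm o (h i) (h i * g)]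

end ProjectionSystem

namespace SepMetric

variable (D : SepMetric H d n ρ K m)
include D

theorem le_dist_pow (ht : IsTransverse ρ K t) (i : ℕ) : i ≤ 3 * m 1 (t ^ (i + 1)) := by
  have hsub : (fun j : ℕ => ((t ^ (j + 1) : G) : G ⧸ H)) '' Set.Iio i ⊆
      {C : G ⧸ H | Separates d n K C 1 (t ^ (i + 1))} :=
    Set.image_subset_iff.2 fun j hj => D.system.separates_pow ht hj
  have hle := (Set.encard_le_encard hsub).trans (D.encard_separates_le _ _)
  rw [(D.system.mk_pow_injective ht).encard_image, ← (Set.finite_Iio i).cast_ncard_eq,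
    Set.ncard_Iio_nat] at hle
  exact_mod_cast hle

theorem le_gprod_pow (ht : IsTransverse ρ K t) {i j : ℕ} (hij : i ≤ j) :
    (i / 3 - 4 : ℝ) ≤ gprod (fun x y => (m x y : ℝ)) (t ^ (i + 1)) (t ^ (j + 1)) 1 := by
  have hi : (i : ℝ) ≤ 3 * m 1 (t ^ (i + 1)) := by exact_mod_cast D.le_dist_pow ht i
  have hle : m 1 (t ^ (i + 1)) + m (t ^ (j + 1)) (t ^ (i + 1)) ≤ m 1 (t ^ (j + 1)) + 8 := by
    rcases hij.lt_or_eq with hlt | rfl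
    · exact D.add_le_of_nearest_ne rfl
        (D.system.nearest_ne_of_separates (D.system.separates_pow ht hlt))
    · rw [D.graph.self]
      omega
  have hle' : (m 1 (t ^ (i + 1)) : ℝ) + m (t ^ (j + 1)) (t ^ (i + 1)) ≤
      m 1 (t ^ (j + 1)) + 8 := by exact_mod_cast hle
  simp only [gprod, D.graph.comm (t ^ (i + 1)), D.graph.comm (t ^ (j + 1)) 1]
  linarith

theorem convInf_pow (ht : IsTransverse ρ K t) :
    ConvInf (fun x y => (m x y : ℝ)) fun i => t ^ (i + 1) := by
  have hmin (i j : ℕ) : ((min i j : ℕ) / 3 - 4 : ℝ) ≤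
      gprod (fun x y => (m x y : ℝ)) (t ^ (i + 1)) (t ^ (j + 1)) 1 := by
    rcases le_total i j with hij | hij
    · simpa only [min_eq_left hij] using D.le_gprod_pow ht hij
    · rw [min_eq_right hij, gprod_comm D.graph.graphMetric.comm]
      exact D.le_gprod_pow ht hij
  intro o R
  obtain ⟨N, hN⟩ := exists_nat_ge (3 * (R + m 1 o + 4))
  refine ⟨N, fun i hi j hj => ?_⟩
  have hmove := D.graph.graphMetric.gprod_le_gprod_add (t ^ (i + 1)) (t ^ (j + 1)) 1
    (t ^ (i + 1)) (t ^ (j + 1)) o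
  have hNij : (N : ℝ) ≤ (min i j : ℕ) := by exact_mod_cast le_min hi hj
  simp only [D.graph.self, Nat.cast_zero] at hmove
  linarith [hmin i j]

end SepMetric

end Transverse

/-! ### Criteria for hyperfiniteness -/

section Hyperfinite

open Filter

variable {β : Type*} [MulAction G β] {e : ℕ → G} {A : ℕ → β → Set β} {N N' : ℕ}

/-- Every point of `S` is a translate of a point of `T` by one of `e 0, …, e N`. -/
def CoveredBy (e : ℕ → G) (N : ℕ) (S T : Set β) : Prop :=
  ∀ a ∈ S, ∃ l ≤ N, (e l)⁻¹ • a ∈ T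

theorem CoveredBy.mono {S T : Set β} (h : CoveredBy e N S T) (hN : N ≤ N') :
    CoveredBy e N' S T :=
  fun a ha => (h a ha).imp fun _ hl => ⟨hl.1.trans hN, hl.2⟩

theorem exists_coveredBy (he : Function.Surjective e) {x : β} {S T : Set β} (hS : S.Finite)
    (hSx : S ⊆ MulAction.orbit G x) (hT : T.Nonempty) (hTx : T ⊆ MulAction.orbit G x) :
    ∃ N, CoveredBy e N S T := by
  obtain ⟨b, hb⟩ := hT
  obtain ⟨h, rfl⟩ := hTx hb
  have hmove : ∀ a ∈ S, ∃ l, (e l)⁻¹ • a = h • x := by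
    intro a ha
    obtain ⟨g, rfl⟩ := hSx ha
    obtain ⟨l, hl⟩ := he (g * h⁻¹)
    exact ⟨l, by simp only [hl, smul_smul, mul_inv_rev, inv_inv, inv_mul_cancel_right]⟩
  choose! l hl using hmove
  obtain ⟨N, hN⟩ := (hS.image l).bddAbove
  exact ⟨N, fun a ha => ⟨l a, hN ⟨a, ha, rfl⟩, (hl a ha).symm ▸ hb⟩⟩

/-- The `N`-th finite approximation of the orbit equivalence relation attached to a sequence of
finite sets `A i x`: two points of an orbit are identified if their sequences agree from some
index `k ≤ N` on, and if up to `k` each set of either sequence is obtained from the next one with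
`e 0, …, e N`. The second condition makes the classes finite. -/
def StageRel (e : ℕ → G) (A : ℕ → β → Set β) (N : ℕ) (x y : β) : Prop :=
  x = y ∨ y ∈ MulAction.orbit G x ∧ ∃ k ≤ N, (∀ i ≥ k, A i x = A i y) ∧
    ∀ i < k, CoveredBy e N (A i x) (A (i + 1) x) ∧ CoveredBy e N (A i y) (A (i + 1) y)

theorem equivalence_stageRel (e : ℕ → G) (A : ℕ → β → Set β) (N : ℕ) :
    Equivalence (StageRel e A N) := by
  refine ⟨fun x => Or.inl rfl, ?_, ?_⟩
  · rintro x y (rfl | ⟨hxy, k, hk, heq, hcov⟩)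
    · exact Or.inl rfl
    · exact Or.inr ⟨MulAction.mem_orbit_symm.1 hxy, k, hk, fun i hi => (heq i hi).symm,
        fun i hi => (hcov i hi).symm⟩
  · rintro x y z (rfl | ⟨hxy, k, hk, heq, hcov⟩) (rfl | ⟨hyz, k', hk', heq', hcov'⟩)
    · exact Or.inl rfl
    · exact Or.inr ⟨hyz, k', hk', heq', hcov'⟩
    · exact Or.inr ⟨hxy, k, hk, heq, hcov⟩
    refine Or.inr ⟨MulAction.orbit_eq_iff.2 hxy ▸ hyz, max k k', max_le hk hk', fun i hi =>
      (heq i (le_of_max_le_left hi)).trans (heq' i (le_of_max_le_right hi)), fun i hi => ⟨?_, ?_⟩⟩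
    · rcases lt_or_ge i k with hik | hik
      · exact (hcov i hik).1
      · rw [heq i hik, heq (i + 1) (by omega)]
        exact (hcov' i (by omega)).1
    · rcases lt_or_ge i k' with hik | hik
      · exact (hcov' i hik).2
      · rw [← heq' i hik, ← heq' (i + 1) (by omega)]
        exact (hcov i (by omega)).2

theorem StageRel.mono {x y : β} (h : StageRel e A N x y) (hN : N ≤ N') :
    StageRel e A N' x y := by
  rcases h with rfl | ⟨hxy, k, hk, heq, hcov⟩
  · exact Or.inl rfl
  · exact Or.inr ⟨hxy, k, hk.trans hN, heq, fun i hi =>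
      ⟨(hcov i hi).1.mono hN, (hcov i hi).2.mono hN⟩⟩

theorem finite_setOf_coveredBy (hA : ∀ x, A 0 x = {x}) (j : ℕ) {T : Set β} (hT : T.Finite) :
    {y | A j y ⊆ T ∧ ∀ i < j, CoveredBy e N (A i y) (A (i + 1) y)}.Finite := by
  induction j generalizing T with
  | zero => exact hT.subset fun y hy => hy.1 (hA y ▸ rfl)
  | succ j ih =>
    have hT' : (⋃ l ∈ Set.Iic N, (fun b => e l • b) '' T).Finite :=
      (Set.finite_Iic N).biUnion fun l _ => hT.image _
    refine (ih hT').subset fun y ⟨hy, hcov⟩ => ⟨fun a ha => ?_, fun i hi => hcov i (by omega)⟩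
    obtain ⟨l, hl, hb⟩ := hcov j j.lt_succ_self a ha
    exact Set.mem_biUnion hl ⟨_, hy hb, smul_inv_smul _ _⟩

theorem finite_stageRel (hA : ∀ x, A 0 x = {x}) (hfin : ∀ i x, (A i x).Finite) (x : β) :
    {y | StageRel e A N x y}.Finite := by
  refine ((Set.finite_singleton x).union ((Set.finite_Iic N).biUnion fun k _ =>
    finite_setOf_coveredBy (e := e) (N := N) hA k (hfin k x))).subset ?_
  rintro y (rfl | ⟨-, k, hk, heq, hcov⟩)
  · exact Or.inl rfl
  · exact Or.inr (Set.mem_biUnion hk ⟨(heq k le_rfl).superset, fun i hi => (hcov i hi).2⟩)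

variable [MeasurableSpace β]

variable (G) in
/-- A Borel assignment of a sequence of finite nonempty subsets of its orbit to every point, such
that the sequences of two points of the same orbit eventually agree. -/
structure AsympInvariant (A : ℕ → β → Set β) : Prop where
  finite : ∀ i x, (A i x).Finite
  nonempty : ∀ i x, (A i x).Nonempty
  subset_orbit : ∀ i x, A i x ⊆ MulAction.orbit G x
  eventually_eq : ∀ (g : G) x, ∀ᶠ i in atTop, A i (g • x) = A i x
  measurable : ∀ i (g : G), Measurable fun x => g • x ∈ A i x

namespace AsympInvariant

theorem cons_singleton [MeasurableConstSMul G β] [MeasurableEq β] (hA : AsympInvariant G A) :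
    AsympInvariant G fun i x => i.casesOn {x} fun i => A i x where
  finite
    | 0, x => Set.finite_singleton x
    | i + 1, x => hA.finite i x
  nonempty
    | 0, x => Set.singleton_nonempty x
    | i + 1, x => hA.nonempty i x
  subset_orbit
    | 0, x => Set.singleton_subset_iff.2 (MulAction.mem_orbit_self x)
    | i + 1, x => hA.subset_orbit i x
  eventually_eq g x := by
    rw [← map_add_atTop_eq_nat 1]
    exact hA.eventually_eq g x
  measurable
    | 0, g => (measurable_const_smul g).eq measurable_id
    | i + 1, g => hA.measurable i g

theorem exists_stageRel (he : Function.Surjective e) (hA : AsympInvariant G A) (g : G) (x : β) :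
    ∃ N, StageRel e A N x (g • x) := by
  obtain ⟨k, hk⟩ := eventually_atTop.1 (hA.eventually_eq g x)
  have hcov i x := exists_coveredBy he (hA.finite i x) (hA.subset_orbit i x)
    (hA.nonempty (i + 1) x) (hA.subset_orbit (i + 1) x)
  choose M hM using hcov
  refine ⟨k + ∑ i ∈ Finset.range k, (M i x + M i (g • x)), Or.inr ⟨MulAction.mem_orbit x g, k,
    Nat.le_add_right _ _, fun i hi => (hk i hi).symm, fun i hi => ?_⟩⟩
  have hle : M i x + M i (g • x) ≤ ∑ i ∈ Finset.range k, (M i x + M i (g • x)) :=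
    Finset.single_le_sum (f := fun i => M i x + M i (g • x)) (fun _ _ => bot_le)
      (Finset.mem_range.2 hi)
  exact ⟨(hM i x).mono (by omega), (hM i (g • x)).mono (by omega)⟩

variable [Countable G]

theorem measurable_coveredBy (hA : AsympInvariant G A) (i : ℕ) :
    Measurable fun x => CoveredBy e N (A i x) (A (i + 1) x) := by
  have hiff (x : β) : CoveredBy e N (A i x) (A (i + 1) x) ↔
      ∀ g : G, g • x ∈ A i x → ∃ l ≤ N, ((e l)⁻¹ * g) • x ∈ A (i + 1) x := by
    simp only [mul_smul]
    refine ⟨fun h g => h _, fun h a ha => ?_⟩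
    obtain ⟨g, rfl⟩ := hA.subset_orbit i x ha
    exact h g ha
  simp only [hiff]
  exact .forall fun g => (hA.measurable i g).imp (.exists fun l =>
    measurable_const.and (hA.measurable (i + 1) _))

variable [MeasurableConstSMul G β]

theorem measurable_eq_smul (hA : AsympInvariant G A) (i : ℕ) (h : G) :
    Measurable fun x => A i x = A i (h • x) := by
  have hiff (x : β) : A i x = A i (h • x) ↔
      ∀ g : G, g • x ∈ A i x ↔ (g * h⁻¹) • h • x ∈ A i (h • x) := by
    simp only [smul_smul, inv_mul_cancel_right]
    refine ⟨fun heq g => heq ▸ Iff.rfl, fun hg => Set.ext fun a => ⟨fun ha => ?_, fun ha => ?_⟩⟩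
    · obtain ⟨g, rfl⟩ := hA.subset_orbit i x ha
      exact (hg g).1 ha
    · obtain ⟨g, rfl⟩ := hA.subset_orbit i _ ha
      simp only [smul_smul] at ha ⊢
      exact (hg _).2 ha
  simp only [hiff]
  exact .forall fun g => (hA.measurable i g).iff
    ((hA.measurable i (g * h⁻¹)).comp (measurable_const_smul h))

variable [MeasurableEq β]

theorem measurableSet_stageRel (hA : AsympInvariant G A) :
    MeasurableSet {p : β × β | StageRel e A N p.1 p.2} := by
  have hiff (p : β × β) : StageRel e A N p.1 p.2 ↔ p.1 = p.2 ∨ ∃ h : G, h • p.1 = p.2 ∧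
      ∃ k ≤ N, (∀ i ≥ k, A i p.1 = A i (h • p.1)) ∧ ∀ i < k,
        CoveredBy e N (A i p.1) (A (i + 1) p.1) ∧
        CoveredBy e N (A i (h • p.1)) (A (i + 1) (h • p.1)) := by
    refine or_congr_right ⟨?_, ?_⟩
    · rintro ⟨⟨h, hp⟩, hk⟩
      exact ⟨h, hp, by simpa only [hp] using hk⟩
    · rintro ⟨h, hp, hk⟩
      exact ⟨⟨h, hp⟩, by simpa only [hp] using hk⟩
  have hcov i : Measurable fun x => CoveredBy e N (A i x) (A (i + 1) x) :=
    hA.measurable_coveredBy i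
  have hset (h : G) : Measurable fun x => ∃ k ≤ N, (∀ i ≥ k, A i x = A i (h • x)) ∧ ∀ i < k,
      CoveredBy e N (A i x) (A (i + 1) x) ∧
      CoveredBy e N (A i (h • x)) (A (i + 1) (h • x)) :=
    .exists fun k => measurable_const.and <|
      .and (.forall fun i => measurable_const.imp (hA.measurable_eq_smul i h))
        (.forall fun i => measurable_const.imp
          ((hcov i).and ((hcov i).comp (measurable_const_smul h))))
  simp only [hiff]
  exact measurableSet_setOfPred.2 <| (measurable_fst.eq measurable_snd).or <| .exists fun h =>
    ((measurable_fst.const_smul h).eq measurable_snd).and ((hset h).comp measurable_fst)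

theorem isHyperfinite (hA : AsympInvariant G A) :
    IsHyperfinite inferInstance fun x y : β => y ∈ MulAction.orbit G x := by
  obtain ⟨e, he⟩ := exists_surjective_nat G
  have hA := hA.cons_singleton
  refine ⟨StageRel e _, equivalence_stageRel e _, fun N => hA.measurableSet_stageRel, fun N x =>
    finite_stageRel (fun x => rfl) hA.finite x, fun N x y h => h.mono N.le_succ, fun x y =>
    ⟨?_, ?_⟩⟩
  · rintro ⟨g, rfl⟩
    exact hA.exists_stageRel he g x
  · rintro ⟨N, rfl | ⟨hxy, -⟩⟩
    · exact MulAction.mem_orbit_self x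
    · exact hxy

end AsympInvariant

end Hyperfinite

section BitRefine

open Filter

theorem frequently_cofinite_mul_left {p : G → Prop} (g : G) :
    (∃ᶠ v in cofinite, p (g * v)) ↔ ∃ᶠ v in cofinite, p v := by
  refine ⟨(mul_right_injective g).tendsto_cofinite.frequently, fun h => ?_⟩
  refine (mul_right_injective g⁻¹).tendsto_cofinite.frequently (h.mono fun v hv => ?_)
  rwa [mul_inv_cancel_left]

theorem measurable_frequently_cofinite {ι β : Type*} [Countable ι] [MeasurableSpace β]
    {p : β → ι → Prop} (hp : ∀ i, Measurable fun x => p x i) :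
    Measurable fun x => ∃ᶠ i in cofinite, p x i := by
  have hiff (x : β) : (∃ᶠ i in cofinite, p x i) ↔ ∀ F : Finset ι, ∃ i, i ∉ F ∧ p x i := by
    refine ⟨fun h F => (h.and_eventually F.finite_toSet.eventually_cofinite_notMem).exists.imp
      fun i hi => hi.symm, fun h hfin => ?_⟩
    obtain ⟨i, hi, hpi⟩ := h (Set.Finite.toFinset hfin)
    exact hi ((Set.Finite.mem_toFinset hfin).2 (not_not.2 hpi))
  simp only [hiff]
  exact .forall fun F => .exists fun i => measurable_const.and (hp i)

theorem measurableEq_of_countablySeparated (β : Type*) [MeasurableSpace β]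
    [MeasurableSpace.CountablySeparated β] : MeasurableEq β := by
  obtain ⟨f, hf, hinj⟩ := MeasurableSpace.measurable_injection_nat_bool_of_countablySeparated β
  have hdiag : Set.diagonal β = {p | f p.1 = f p.2} := Set.ext fun p => hinj.eq_iff.symm
  exact ⟨hdiag ▸ measurableSet_eq_fun (hf.comp measurable_fst) (hf.comp measurable_snd)⟩

variable {β : Type*} [MulAction G β] {B : ℕ → Set β} {Y : β → Set G} {r : G → ℕ} {k : ℕ} {x : β}

/-- The subset of `Y x` obtained by deciding the bits `v⁻¹ • x ∈ B 0, …, v⁻¹ • x ∈ B (k - 1)` one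
after the other: a bit is required to hold if it holds for infinitely many of the remaining `v`,
and required to fail otherwise. -/
def bitRefine (B : ℕ → Set β) (Y : β → Set G) : ℕ → β → Set G
  | 0, x => Y x
  | k + 1, x => {v ∈ bitRefine B Y k x | v⁻¹ • x ∈ B k ↔
      ∃ᶠ w in cofinite, w ∈ bitRefine B Y k x ∧ w⁻¹ • x ∈ B k}

/-- The value of the `k`-th bit chosen by `bitRefine`. -/
def LimitBit (B : ℕ → Set β) (Y : β → Set G) (k : ℕ) (x : β) : Prop :=
  ∃ᶠ w in cofinite, w ∈ bitRefine B Y k x ∧ w⁻¹ • x ∈ B k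

theorem mem_bitRefine_iff {v : G} :
    v ∈ bitRefine B Y k x ↔ v ∈ Y x ∧ ∀ j < k, v⁻¹ • x ∈ B j ↔ LimitBit B Y j x := by
  induction k with
  | zero => simp only [bitRefine, not_lt_zero, false_imp_iff, implies_true, and_true]
  | succ k ih =>
    rw [Nat.forall_lt_succ_right, ← and_assoc, ← ih]
    rfl

theorem bitRefine_subset : bitRefine B Y k x ⊆ Y x :=
  fun _ hv => (mem_bitRefine_iff.1 hv).1

theorem infinite_bitRefine (hY : (Y x).Infinite) (k : ℕ) : (bitRefine B Y k x).Infinite := by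
  refine frequently_cofinite_iff_infinite.1 ?_
  induction k with
  | zero => exact frequently_cofinite_iff_infinite.2 hY
  | succ k ih =>
    by_cases hbit : LimitBit B Y k x
    · exact hbit.mono fun v hv => ⟨hv.1, iff_of_true hv.2 hbit⟩
    · exact (ih.and_eventually (not_frequently.1 hbit)).mono fun v hv =>
        ⟨hv.1, iff_of_false (fun h => hv.2 ⟨hv.1, h⟩) hbit⟩

theorem limitBit_smul {g : G} (h : ∀ᶠ v in cofinite, v ∈ Y x ↔ g * v ∈ Y (g • x)) (k : ℕ) :
    LimitBit B Y k (g • x) ↔ LimitBit B Y k x := by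
  induction k using Nat.strong_induction_on with
  | _ k ih =>
    unfold LimitBit
    rw [← frequently_cofinite_mul_left g]
    refine frequently_congr (h.mono fun v hv => ?_)
    simp only [mem_bitRefine_iff, mul_inv_rev, mul_smul, inv_smul_smul, hv]
    refine and_congr_left' (and_congr_right' (forall₂_congr fun j hj => ?_))
    rw [ih j hj]

theorem mem_bitRefine_smul_iff {g v : G} (h : ∀ᶠ v in cofinite, v ∈ Y x ↔ g * v ∈ Y (g • x))
    (hv : v ∈ Y x ↔ g * v ∈ Y (g • x)) (k : ℕ) :
    g * v ∈ bitRefine B Y k (g • x) ↔ v ∈ bitRefine B Y k x := by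
  simp only [mem_bitRefine_iff, mul_inv_rev, mul_smul, inv_smul_smul, hv, limitBit_smul h]

/-- The points of the orbit of `x` whose bits are the limiting ones; there is at most one if the
sets `B k` separate points. -/
def limitPoints (B : ℕ → Set β) (Y : β → Set G) (x : β) : Set β :=
  {z ∈ MulAction.orbit G x | ∀ k, z ∈ B k ↔ LimitBit B Y k x}

theorem limitPoints_smul {g : G} (h : ∀ᶠ v in cofinite, v ∈ Y x ↔ g * v ∈ Y (g • x)) :
    limitPoints B Y (g • x) = limitPoints B Y x := by
  simp only [limitPoints, limitBit_smul h, MulAction.orbit_smul]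

theorem eventually_notMem_bitRefine (hx : limitPoints B Y x = ∅) (v : G) :
    ∀ᶠ k in atTop, v ∉ bitRefine B Y k x := by
  by_contra hv
  refine (Set.eq_empty_iff_forall_notMem.1 hx) (v⁻¹ • x) ⟨MulAction.mem_orbit x v⁻¹, fun k => ?_⟩
  obtain ⟨i, hi, hvi⟩ := frequently_atTop.1 (not_eventually.1 hv) (k + 1)
  exact (mem_bitRefine_iff.1 (not_not.1 hvi)).2 k hi

/-- The elements of `bitRefine B Y k x` at which `r` is minimal. -/
def minRefine (B : ℕ → Set β) (Y : β → Set G) (r : G → ℕ) (k : ℕ) (x : β) : Set G :=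
  {v ∈ bitRefine B Y k x | ∀ w ∈ bitRefine B Y k x, r v ≤ r w}

open Classical in
/-- Finite subsets of the orbit of `x` which depend on `x` only through its orbit once `k` is
large: the point with the limiting bits if there is one, and otherwise the translates of `x` by
the elements of minimal rank among those with the right first `k` bits. -/
def orbitApprox (B : ℕ → Set β) (Y : β → Set G) (r : G → ℕ) (k : ℕ) (x : β) : Set β :=
  if (limitPoints B Y x).Nonempty then limitPoints B Y x
  else (fun v : G => v⁻¹ • x) '' minRefine B Y r k x

variable [MeasurableSpace β]

/-- A Borel assignment of an infinite set `Y x` of group elements to every point `x`, equivariant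
up to finite sets, together with a proper rank function `r` on the sets `Y x` which translation by
a group element shifts by a constant up to finite sets. -/
structure AlmostEquivariant (Y : β → Set G) (r : G → ℕ) : Prop where
  infinite : ∀ x, (Y x).Infinite
  finite_le : ∀ x c, {v | v ∈ Y x ∧ r v ≤ c}.Finite
  eventually_smul : ∀ (g : G) x, ∃ c : ℤ, ∀ᶠ v in cofinite,
    (v ∈ Y x ↔ g * v ∈ Y (g • x)) ∧ (v ∈ Y x → (r (g * v) : ℤ) = r v + c)
  measurable : ∀ v, Measurable fun x => v ∈ Y x

namespace AlmostEquivariant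

variable (h : AlmostEquivariant Y r)
include h

theorem nonempty_minRefine (k : ℕ) (x : β) : (minRefine B Y r k x).Nonempty := by
  obtain ⟨v, hv, hmin⟩ := (measure r).wf.has_min _
    (infinite_bitRefine (B := B) (h.infinite x) k).nonempty
  exact ⟨v, hv, fun w hw => not_lt.1 (hmin w hw)⟩

theorem finite_minRefine (k : ℕ) (x : β) : (minRefine B Y r k x).Finite := by
  obtain ⟨v, hv⟩ := h.nonempty_minRefine (B := B) k x
  exact (h.finite_le x (r v)).subset fun w hw => ⟨bitRefine_subset hw.1, hw.2 v hv.1⟩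

theorem eventually_mem_minRefine_smul_iff (g : G) (hx : limitPoints B Y x = ∅) :
    ∀ᶠ k in atTop, ∀ v, g * v ∈ minRefine B Y r k (g • x) ↔ v ∈ minRefine B Y r k x := by
  obtain ⟨c, hc⟩ := h.eventually_smul g x
  have hY : ∀ᶠ v in cofinite, v ∈ Y x ↔ g * v ∈ Y (g • x) := hc.mono fun v hv => hv.1
  have hgx : limitPoints B Y (g • x) = ∅ := limitPoints_smul hY ▸ hx
  have hx' := (eventually_all_finite hc).2 fun v _ => eventually_notMem_bitRefine hx v
  have hgx' := (eventually_all_finite hc).2 fun v _ => eventually_notMem_bitRefine hgx (g * v)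
  filter_upwards [hx', hgx'] with k hk hgk
  have hmem (v : G) : g * v ∈ bitRefine B Y k (g • x) ↔ v ∈ bitRefine B Y k x := by
    by_cases hv : (v ∈ Y x ↔ g * v ∈ Y (g • x)) ∧ (v ∈ Y x → (r (g * v) : ℤ) = r v + c)
    · exact mem_bitRefine_smul_iff hY hv.1 k
    · exact iff_of_false (hgk v hv) (hk v hv)
  have hrank (v : G) (hv : v ∈ bitRefine B Y k x) : (r (g * v) : ℤ) = r v + c := by
    by_contra hne
    exact hk v (fun hvc => hne (hvc.2 (bitRefine_subset hv))) hv
  refine fun v => (and_congr_left' (hmem v)).trans (and_congr_right fun hv => ?_)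
  rw [(mul_left_surjective g).forall]
  refine forall_congr' fun w => (imp_congr_left (hmem w)).trans (imp_congr_right fun hw => ?_)
  rw [← Nat.cast_le (α := ℤ), hrank v hv, hrank w hw, add_le_add_iff_right, Nat.cast_le]

theorem eventually_orbitApprox_smul (g : G) (x : β) :
    ∀ᶠ k in atTop, orbitApprox B Y r k (g • x) = orbitApprox B Y r k x := by
  obtain ⟨c, hc⟩ := h.eventually_smul g x
  have hlim : limitPoints B Y (g • x) = limitPoints B Y x :=
    limitPoints_smul (hc.mono fun v hv => hv.1)
  by_cases hne : (limitPoints B Y x).Nonempty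
  · exact Eventually.of_forall fun k => by
      rw [orbitApprox, orbitApprox, hlim, if_pos hne, if_pos hne]
  filter_upwards [h.eventually_mem_minRefine_smul_iff g (Set.not_nonempty_iff_eq_empty.1 hne)]
    with k hk
  rw [orbitApprox, orbitApprox, hlim, if_neg hne, if_neg hne]
  ext z
  constructor
  · rintro ⟨w, hw, rfl⟩
    refine ⟨g⁻¹ * w, (hk _).1 ((mul_inv_cancel_left g w).symm ▸ hw), ?_⟩
    simp only [mul_inv_rev, inv_inv, mul_smul]
  · rintro ⟨v, hv, rfl⟩
    exact ⟨g * v, (hk v).2 hv, by simp only [mul_inv_rev, mul_smul, inv_smul_smul]⟩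

variable [Countable G] [MeasurableConstSMul G β] (hB : ∀ k, MeasurableSet (B k))
include hB

theorem measurable_mem_bitRefine (k : ℕ) (v : G) :
    Measurable fun x => v ∈ bitRefine B Y k x := by
  have hbit (k : ℕ) (v : G) : Measurable fun x => v⁻¹ • x ∈ B k :=
    (measurableSet_setOfPred.1 (hB k)).comp (measurable_const_smul v⁻¹)
  induction k generalizing v with
  | zero => exact h.measurable v
  | succ k ih =>
    exact (ih v).and ((hbit k v).iff
      (measurable_frequently_cofinite fun w => (ih w).and (hbit k w)))

theorem measurable_limitBit (k : ℕ) : Measurable fun x => LimitBit B Y k x :=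
  measurable_frequently_cofinite fun w => (h.measurable_mem_bitRefine hB k w).and
    ((measurableSet_setOfPred.1 (hB k)).comp (measurable_const_smul w⁻¹))

theorem measurable_smul_mem_limitPoints (g : G) :
    Measurable fun x => g • x ∈ limitPoints B Y x := by
  simp only [limitPoints, Set.mem_ofPred_eq, MulAction.mem_orbit, true_and]
  exact .forall fun k => ((measurableSet_setOfPred.1 (hB k)).comp (measurable_const_smul g)).iff
    (h.measurable_limitBit hB k)

theorem measurable_mem_minRefine (k : ℕ) (v : G) :
    Measurable fun x => v ∈ minRefine B Y r k x :=
  (h.measurable_mem_bitRefine hB k v).and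
    (.forall fun w => (h.measurable_mem_bitRefine hB k w).imp measurable_const)

variable [MeasurableEq β]

theorem measurable_smul_mem_orbitApprox (k : ℕ) (g : G) :
    Measurable fun x => g • x ∈ orbitApprox B Y r k x := by
  have hne (x : β) : (limitPoints B Y x).Nonempty ↔ ∃ g : G, g • x ∈ limitPoints B Y x := by
    refine ⟨fun ⟨z, hz⟩ => ?_, fun ⟨g, hg⟩ => ⟨_, hg⟩⟩
    obtain ⟨g, rfl⟩ := hz.1
    exact ⟨g, hz⟩
  have hiff (x : β) : g • x ∈ orbitApprox B Y r k x ↔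
      ((∃ g : G, g • x ∈ limitPoints B Y x) ∧ g • x ∈ limitPoints B Y x) ∨
        (¬ ∃ g : G, g • x ∈ limitPoints B Y x) ∧
          ∃ v ∈ minRefine B Y r k x, v⁻¹ • x = g • x := by
    rw [← hne, orbitApprox]
    split_ifs with hx <;> simp only [hx, not_true, not_false_iff, true_and, false_and, or_false,
      false_or, Set.mem_image]
  have hex := Measurable.exists (h.measurable_smul_mem_limitPoints hB)
  simp only [hiff]
  exact (hex.and (h.measurable_smul_mem_limitPoints hB g)).or (hex.not.and (.exists fun v =>
    (h.measurable_mem_minRefine hB k v).and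
      ((measurable_const_smul v⁻¹).eq (measurable_const_smul g))))

theorem asympInvariant_orbitApprox (hsep : ∀ x y, (∀ k, x ∈ B k ↔ y ∈ B k) → x = y) :
    AsympInvariant G (orbitApprox B Y r) where
  finite k x := by
    unfold orbitApprox
    split_ifs
    · exact Set.Subsingleton.finite fun z hz z' hz' => hsep z z' fun k =>
        (hz.2 k).trans (hz'.2 k).symm
    · exact (h.finite_minRefine k x).image _
  nonempty k x := by
    unfold orbitApprox
    split_ifs with hx
    · exact hx
    · exact (h.nonempty_minRefine k x).image _
  subset_orbit k x := by
    unfold orbitApprox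
    split_ifs
    · exact fun z hz => hz.1
    · exact Set.image_subset_iff.2 fun v _ => MulAction.mem_orbit x v⁻¹
  eventually_eq := h.eventually_orbitApprox_smul
  measurable := h.measurable_smul_mem_orbitApprox hB

omit hB [MeasurableEq β] in
theorem isHyperfinite [MeasurableSpace.CountablySeparated β] :
    IsHyperfinite inferInstance fun x y : β => y ∈ MulAction.orbit G x := by
  obtain ⟨B, hB, hsep⟩ := exists_seq_separating β MeasurableSet.empty Set.univ
  have := measurableEq_of_countablySeparated β
  exact (h.asympInvariant_orbitApprox hB fun x y => hsep x trivial y trivial).isHyperfinite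

end AlmostEquivariant

end BitRefine

/-! ### The action on the Gromov boundary -/

section BoundaryAction

variable {d : G → G → ℝ} (hd : ∀ g x y, d (g * x) (g * y) = d x y)
include hd

theorem gprod_mul_left (g x y o : G) :
    gprod d (g * x) (g * y) o = gprod d x y (g⁻¹ * o) := by
  have ho (x : G) : d (g * x) o = d x (g⁻¹ * o) := by rw [← hd g x, mul_inv_cancel_left]
  simp only [gprod, hd, ho]

omit hd in
/-- The image of a sequence converging to infinity under left multiplication by `g`. -/
def translate (hd : ∀ g x y, d (g * x) (g * y) = d x y) (g : G) (z : BSeq d) : BSeq d :=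
  ⟨fun i => g * z.1 i, fun o R => by simpa only [gprod_mul_left hd] using z.2 (g⁻¹ * o) R⟩

theorem bRel_translate (g : G) {z w : BSeq d} (h : BRel d z w) :
    BRel d (translate hd g z) (translate hd g w) := fun o R => by
  simpa only [translate, gprod_mul_left hd] using h (g⁻¹ * o) R

omit hd in
/-- The image of a boundary point under `g`. -/
def bdryTranslate (hd : ∀ g x y, d (g * x) (g * y) = d x y) (g : G) : Bdry d → Bdry d :=
  Quot.map (translate hd g) fun _ _ => bRel_translate hd g

omit hd in
/-- The action of `G` on the boundary of `(G, d)` extending left multiplication. -/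
abbrev bdryAction (hd : ∀ g x y, d (g * x) (g * y) = d x y) : MulAction G (Bdry d) where
  smul := bdryTranslate hd
  one_smul := Quot.ind fun _ =>
    congrArg (Quot.mk _) (Subtype.ext (funext fun _ => one_mul _))
  mul_smul _ _ := Quot.ind fun _ =>
    congrArg (Quot.mk _) (Subtype.ext (funext fun _ => mul_assoc _ _ _))

theorem orbRel_eq :
    letI := bdryAction hd
    OrbRel d = fun ξ η => η ∈ MulAction.orbit G ξ := by
  refine funext₂ fun ξ η => propext ⟨?_, ?_⟩
  · rintro ⟨g, z, hz, rfl, rfl⟩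
    exact ⟨g, rfl⟩
  · rintro ⟨g, rfl⟩
    induction ξ using Quot.ind with
    | mk z => exact ⟨g, z, (translate hd g z).2, rfl, rfl⟩

end BoundaryAction

section SepMetricBoundary

open Filter

variable {H : Subgroup G} {d : G → G → ℝ} {n : G → G → ℕ} {ρ : G ⧸ H → G → G → ℝ} {K : ℝ}
  {m : G → G → ℕ} {C C' : G ⧸ H} {o p q u v x y : G} {z w : BSeq fun x y => (m x y : ℝ)}
  {ξ η : Bdry fun x y => (m x y : ℝ)}

namespace SepMetric

variable (D : SepMetric H d n ρ K m)

section Nearest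

include D

theorem nearest_eq_of_four_lt_gprod (hp : (p : G ⧸ H) = C)
    (h : 4 < gprod (fun x y => (m x y : ℝ)) x y p) : nearest n C x = nearest n C y := by
  refine D.nearest_eq_of_add_lt hp ?_
  unfold gprod at h
  exact_mod_cast (by linarith : (m x y : ℝ) + 8 < m x p + m y p)

theorem nearest_eq_of_add_four_lt_gprod (hp : (p : G ⧸ H) = C)
    (h : m o p + 4 < gprod (fun x y => (m x y : ℝ)) x y o) : nearest n C x = nearest n C y := by
  refine D.nearest_eq_of_four_lt_gprod hp ?_
  have hop := D.graph.graphMetric.gprod_le_gprod_add x y o x y p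
  simp only [D.graph.self, Nat.cast_zero, zero_add] at hop
  linarith

theorem le_dist_of_le_gprod_self {R : ℝ} (h : R ≤ gprod (fun x y => (m x y : ℝ)) x x o) :
    R ≤ m x o := by
  simpa [gprod, D.graph.self] using h

theorem exists_forall_nearest_eq (h : BRel (fun x y => (m x y : ℝ)) z w) (C : G ⧸ H) :
    ∃ N, ∀ i ≥ N, ∀ j ≥ N, nearest n C (z.1 i) = nearest n C (w.1 j) := by
  obtain ⟨p, hp⟩ := QuotientGroup.mk_surjective C
  obtain ⟨N, hN⟩ := h p 5
  exact ⟨N, fun i hi j hj => D.nearest_eq_of_four_lt_gprod hp (by linarith [hN i hi j hj])⟩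

theorem exists_separates_near
    (h : gprod (fun x y => (m x y : ℝ)) x y o + 9 < m y o) :
    ∃ q : G, Separates d n K (q : G ⧸ H) x y ∧
      m o q ≤ gprod (fun x y => (m x y : ℝ)) x y o + 9 := by
  have hsymm := D.graph.comm
  have hself := D.graph.self
  unfold gprod at h ⊢
  have hy : ¬m x y + m o y ≤ m x o + 8 := fun hle => by
    have : (m x y + m o y : ℝ) ≤ m x o + 8 := by exact_mod_cast hle
    rw [hsymm o y] at this
    linarith
  obtain ⟨p, q, hpq, hp, hq, hqy⟩ := D.system.exists_atMostOneSep
    (x := x) (fun p => m x p + m o p ≤ m x o + 8) (by rw [hself, hsymm o]; omega) hy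
  have hyq : m o q + m y q ≤ m o y + 8 := by
    rcases hqy with rfl | hsep
    · rw [hself]; omega
    · exact (D.add_le_or_add_le_of_separates rfl hsep o).resolve_left hq
  have hoq : (m o q : ℝ) ≤ (m x o + m y o - m x y) / 2 + 9 := by
    have := (D.le_one_iff p q).2 hpq
    have := D.graph.tri x p y
    have := D.graph.tri p q y
    have := D.graph.tri o p q
    rw [hsymm o y, hsymm y q] at hyq
    have : (2 * m o q + m x y : ℝ) ≤ m x o + m y o + 18 := by exact_mod_cast (by omega)
    linarith
  refine ⟨q, hqy.resolve_left ?_, hoq⟩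
  rintro rfl
  rw [hsymm] at hoq
  linarith

end Nearest

/-- The set of points of `C` nearest to the boundary point `ξ`: those that are eventually nearest
to the terms of the sequences converging to `ξ`. -/
def bdryNearest (C : G ⧸ H) : Bdry (fun x y => (m x y : ℝ)) → Set G :=
  Quot.lift (fun z => {u | ∀ᶠ i in atTop, u ∈ nearest n C (z.1 i)}) fun z w h => by
    obtain ⟨N, hN⟩ := D.exists_forall_nearest_eq h C
    exact Set.ext fun u => eventually_congr <|
      eventually_atTop.2 ⟨N, fun i hi => by rw [hN i hi i hi]⟩

theorem eventually_nearest_eq (C : G ⧸ H) (z : BSeq fun x y => (m x y : ℝ)) :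
    ∀ᶠ i in atTop, nearest n C (z.1 i) = D.bdryNearest C (Quot.mk _ z) := by
  obtain ⟨N, hN⟩ := D.exists_forall_nearest_eq (z := z) z.2 C
  refine eventually_atTop.2 ⟨N, fun i hi => Set.ext fun u => Iff.symm ?_⟩
  refine Iff.trans (eventually_congr ?_) eventually_const
  exact eventually_atTop.2 ⟨N, fun j hj => by rw [hN j hj i hi]⟩

theorem nearest_eq_bdryNearest (hp : (p : G ⧸ H) = C)
    (h : ∀ᶠ i in atTop, m o p + 4 < gprod (fun x y => (m x y : ℝ)) x (z.1 i) o) :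
    nearest n C x = D.bdryNearest C (Quot.mk _ z) := by
  obtain ⟨i, hi, hz⟩ := (h.and (D.eventually_nearest_eq C z)).exists
  exact (D.nearest_eq_of_add_four_lt_gprod hp hi).trans hz

theorem exists_nearest_eq_bdryNearest (C C' : G ⧸ H) (ξ : Bdry fun x y => (m x y : ℝ)) :
    ∃ y, nearest n C y = D.bdryNearest C ξ ∧ nearest n C' y = D.bdryNearest C' ξ := by
  induction ξ using Quot.ind with
  | mk z =>
    obtain ⟨i, hi⟩ := ((D.eventually_nearest_eq C z).and (D.eventually_nearest_eq C' z)).exists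
    exact ⟨z.1 i, hi⟩

theorem mk_eq_of_mem_bdryNearest (hu : u ∈ D.bdryNearest C ξ) : (u : G ⧸ H) = C := by
  obtain ⟨y, hy, -⟩ := D.exists_nearest_eq_bdryNearest C C ξ
  exact (hy ▸ hu : u ∈ nearest n C y).1

theorem mul_mem_bdryNearest_smul_iff (g : G) :
    g * u ∈ D.bdryNearest (g • C) (bdryTranslate D.graph.graphMetric.inv g ξ) ↔
      u ∈ D.bdryNearest C ξ := by
  induction ξ using Quot.ind with
  | mk z => exact eventually_congr <| .of_forall fun i =>
      D.system.graph.mul_mem_nearest_smul_iff g C (z.1 i) u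

/-- Sequences with bounded Gromov products are told apart by a coset close to the base point, on
which the nearest points have already stabilized. -/
theorem bdryNearest_injective : Function.Injective fun ξ C => D.bdryNearest C ξ := by
  intro ξ η h
  induction ξ using Quot.ind with | mk z => ?_
  induction η using Quot.ind with | mk w => ?_
  refine Quot.sound fun o R => ?_
  obtain ⟨N, hN⟩ := z.2 o (R + 20)
  obtain ⟨N', hN'⟩ := w.2 o (R + 20)
  refine ⟨max N N', fun i hi j hj => ?_⟩
  rw [max_le_iff] at hi hj
  by_contra! hlt
  have hj' := D.le_dist_of_le_gprod_self (hN' j hj.2 j hj.2)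
  obtain ⟨q, hq, hoq⟩ := D.exists_separates_near (x := z.1 i) (y := w.1 j) (o := o) (by linarith)
  refine D.system.nearest_ne_of_separates hq ?_
  calc nearest n (q : G ⧸ H) (z.1 i) = D.bdryNearest q (Quot.mk _ z) :=
        D.nearest_eq_bdryNearest rfl <|
          eventually_atTop.2 ⟨N, fun k hk => by linarith [hN i hi.1 k hk]⟩
    _ = D.bdryNearest q (Quot.mk _ w) := congrFun h q
    _ = nearest n (q : G ⧸ H) (w.1 j) := Eq.symm <| D.nearest_eq_bdryNearest rfl <|
          eventually_atTop.2 ⟨N', fun k hk => by linarith [hN' j hj.2 k hk]⟩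

include D in
theorem exists_three_bdry : ∃ ξ η ζ : Bdry fun x y => (m x y : ℝ), ξ ≠ η ∧ ξ ≠ ζ ∧ η ≠ ζ := by
  obtain ⟨t, ht, hne⟩ := D.system.exists_isTransverse_seq
  let ξ (i : ℕ) : Bdry fun x y => (m x y : ℝ) := Quot.mk _ ⟨_, D.convInf_pow (ht i)⟩
  have hξ {i j : ℕ} (hij : i ≠ j) : ξ i ≠ ξ j := fun h => by
    obtain ⟨a, ha⟩ := (D.eventually_nearest_eq ((1 : G) : G ⧸ H) ⟨_, D.convInf_pow (ht i)⟩).exists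
    obtain ⟨b, hb⟩ := (D.eventually_nearest_eq ((1 : G) : G ⧸ H) ⟨_, D.convInf_pow (ht j)⟩).exists
    exact hne hij a b (ha.trans ((congrArg _ h).trans hb.symm))
  exact ⟨ξ 0, ξ 1, ξ 2, hξ (by decide), hξ (by decide), hξ (by decide)⟩

/-- The coset `C` separates `x` from the boundary point `ξ`. -/
def BdrySeparates (C : G ⧸ H) (x : G) (ξ : Bdry fun x y => (m x y : ℝ)) : Prop :=
  ∃ u ∈ nearest n C x, ∃ v ∈ D.bdryNearest C ξ, 100 * K < d u v

theorem bdrySeparates_iff (h : nearest n C y = D.bdryNearest C ξ) :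
    D.BdrySeparates C x ξ ↔ Separates d n K C x y := by
  rw [BdrySeparates, ← h, Separates]

theorem bdrySeparates_smul_iff (g : G) :
    D.BdrySeparates (g • C) (g * x) (bdryTranslate D.graph.graphMetric.inv g ξ) ↔
      D.BdrySeparates C x ξ := by
  have hsurj := (Group.mulLeft_bijective g).surjective
  refine hsurj.exists.trans <| exists_congr fun u => and_congr
    (D.system.graph.mul_mem_nearest_smul_iff g C x u) <| hsurj.exists.trans <|
      exists_congr fun v => and_congr (D.mul_mem_bdryNearest_smul_iff g) ?_
  rw [D.system.geo.inv]

theorem injOn_cosetDist_bdry (x : G) (ξ : Bdry fun x y => (m x y : ℝ)) :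
    {C | D.BdrySeparates C x ξ}.InjOn (cosetDist n x) := by
  intro C hC C' hC' he
  obtain ⟨y, hy, hy'⟩ := D.exists_nearest_eq_bdryNearest C C' ξ
  exact D.system.injOn_cosetDist x y ((D.bdrySeparates_iff hy).1 hC)
    ((D.bdrySeparates_iff hy').1 hC') he

theorem exists_bdrySeparates_far (x : G) (ξ : Bdry fun x y => (m x y : ℝ)) (A : ℕ) :
    ∃ C, D.BdrySeparates C x ξ ∧ ∀ p : G, (p : G ⧸ H) = C → A ≤ m x p := by
  induction ξ using Quot.ind with | mk z => ?_
  obtain ⟨N, hN⟩ := z.2 x (2 * A + 8)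
  have hdist : 2 * A + 4 ≤ m x (z.1 N) := by
    have := D.le_dist_of_le_gprod_self (hN N le_rfl N le_rfl)
    rw [D.graph.comm]
    exact_mod_cast (by linarith : (2 * A + 4 : ℝ) ≤ m (z.1 N) x)
  obtain ⟨C, hC, hCx⟩ := D.exists_separates_mid hdist
  refine ⟨C, (D.bdrySeparates_iff ?_).2 hC, fun p hp => (hCx p hp).1⟩
  obtain ⟨p, hp⟩ := QuotientGroup.mk_surjective C
  refine D.nearest_eq_bdryNearest hp (o := x) (eventually_atTop.2 ⟨N, fun k hk => ?_⟩)
  have : (m x p : ℝ) ≤ A + 2 := by exact_mod_cast (hCx p hp).2.1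
  linarith [hN N le_rfl k hk]

theorem bdrySeparates_of_cosetDist_lt (h : D.BdrySeparates C x ξ)
    (hxy : n x y ≤ cosetDist n x C) (h' : D.BdrySeparates C' x ξ)
    (hlt : cosetDist n x C < cosetDist n x C') : D.BdrySeparates C' y ξ ∧
      (cosetDist n y C' : ℤ) = cosetDist n x C' + (cosetDist n y C - cosetDist n x C) := by
  obtain ⟨z, hz, hz'⟩ := D.exists_nearest_eq_bdryNearest C C' ξ
  obtain ⟨u, hu⟩ := nearest_nonempty n C' x
  rw [D.bdrySeparates_iff hz] at h
  rw [D.bdrySeparates_iff hz'] at h' ⊢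
  have P := D.system
  have hne : C ≠ C' := fun he => hlt.ne (congrArg _ he)
  have hK := P.pos
  have hxz := P.lt_of_separates h
  have hxz' := P.lt_of_separates h'
  have hρxy : ρ C x y ≤ K := not_lt.1 fun h => by
    have := P.dist_eq_of_lt C x y h
    omega
  have hzu := P.le_of_cosetDist_le_of_lt hne (by linarith) hlt.le hu.1
  have hxu : 3 * K < ρ C x u := by linarith [P.tri C x u z, P.comm C u z]
  have hyu : 2 * K < ρ C y u := by linarith [P.tri C x y u]
  have he := P.nearest_eq_nearest hne hu.1 hu.1 (x := x) (by linarith) hyu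
  refine ⟨h'.congr_left he, ?_⟩
  have hx := P.dist_eq_of_two_mul_lt hne hu.1 (x := x) (by linarith) hu.1
  have hy := P.dist_eq_of_two_mul_lt hne hu.1 hyu hu.1
  have hux := hu.2
  have huy := (he ▸ hu).2
  omega

/-- The points nearest to `ξ` on the cosets that separate `x` from `ξ`. -/
def gates (x : G) (ξ : Bdry fun x y => (m x y : ℝ)) : Set G :=
  {v | v ∈ D.bdryNearest (v : G ⧸ H) ξ ∧ D.BdrySeparates (v : G ⧸ H) x ξ}

theorem mul_mem_gates_iff (g : G) :
    g * v ∈ D.gates (g * x) (bdryTranslate D.graph.graphMetric.inv g ξ) ↔ v ∈ D.gates x ξ :=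
  and_congr (D.mul_mem_bdryNearest_smul_iff g (C := v)) (D.bdrySeparates_smul_iff g (C := v))

theorem infinite_gates (x : G) (ξ : Bdry fun x y => (m x y : ℝ)) : (D.gates x ξ).Infinite := by
  intro hfin
  obtain ⟨A, hA⟩ := (hfin.image (m x)).bddAbove
  obtain ⟨C, hC, hfar⟩ := D.exists_bdrySeparates_far x ξ (A + 1)
  obtain ⟨y, hy, -⟩ := D.exists_nearest_eq_bdryNearest C C ξ
  obtain ⟨v, hv⟩ := nearest_nonempty n C y
  obtain rfl := hv.1
  have := hfar v rfl
  have := hA ⟨v, ⟨hy ▸ hv, hC⟩, rfl⟩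
  omega

theorem finite_gates_cosetDist_le (x : G) (ξ : Bdry fun x y => (m x y : ℝ)) (c : ℕ) :
    {v | v ∈ D.gates x ξ ∧ cosetDist n x (v : G ⧸ H) ≤ c}.Finite := by
  have hcosets : {C | D.BdrySeparates C x ξ ∧ cosetDist n x C ≤ c}.Finite :=
    Set.Finite.of_injOn (fun C hC => hC.2)
      ((D.injOn_cosetDist_bdry x ξ).mono fun C hC => hC.1) (Set.finite_Iic c)
  refine (hcosets.biUnion (t := fun C => D.bdryNearest C ξ) fun C _ => ?_).subset
    fun v ⟨hv, hc⟩ => Set.mem_biUnion (show _ ∧ _ from ⟨hv.2, hc⟩) hv.1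
  obtain ⟨y, hy, -⟩ := D.exists_nearest_eq_bdryNearest C C ξ
  exact hy ▸ D.system.finite_nearest C y

theorem eventually_mem_gates (x y : G) (ξ : Bdry fun x y => (m x y : ℝ)) :
    ∃ c : ℤ, ∀ᶠ v : G in cofinite, v ∈ D.gates x ξ →
      v ∈ D.gates y ξ ∧ (cosetDist n y (v : G ⧸ H) : ℤ) = cosetDist n x (v : G ⧸ H) + c := by
  obtain ⟨v₀, hv₀, hlt⟩ : ∃ v ∈ D.gates x ξ, n x y < cosetDist n x (v : G ⧸ H) := by
    by_contra! hle
    exact D.infinite_gates x ξ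
      ((D.finite_gates_cosetDist_le x ξ (n x y)).subset fun v hv => ⟨hv, hle v hv⟩)
  refine ⟨cosetDist n y (v₀ : G ⧸ H) - cosetDist n x (v₀ : G ⧸ H), ?_⟩
  have hfin := D.finite_gates_cosetDist_le x ξ (cosetDist n x (v₀ : G ⧸ H))
  filter_upwards [hfin.eventually_cofinite_notMem] with v hfar hv
  have hsep := D.bdrySeparates_of_cosetDist_lt hv₀.2 hlt.le hv.2
    (not_le.1 fun hle => hfar ⟨hv, hle⟩)
  exact ⟨⟨hv.1, hsep.1⟩, hsep.2⟩

end SepMetric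

end SepMetricBoundary

/-! ### Borel structure on the boundary -/

section BorelOrbits

variable {β : Type*}

theorem isCBER_orbit [M : MeasurableSpace β] [MeasurableSpace.CountablySeparated β] [Countable G]
    [MulAction G β] [MeasurableConstSMul G β] :
    IsCBER M fun x y : β => y ∈ MulAction.orbit G x := by
  have := measurableEq_of_countablySeparated β
  refine ⟨⟨MulAction.mem_orbit_self, MulAction.mem_orbit_symm.1, ?_⟩, ?_,
    fun x => Set.countable_range _⟩
  · rintro x _ _ ⟨g, rfl⟩ ⟨g', rfl⟩
    exact ⟨g' * g, mul_smul g' g x⟩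
  · exact measurableSet_setOfPred.2 <| .exists fun g =>
      ((measurable_const_smul g).comp measurable_fst).eq measurable_snd

variable {E : β → β → Prop} {M M' : MeasurableSpace β}

theorem prod_measurableSpace_mono (h : M ≤ M') : M.prod M ≤ M'.prod M' :=
  sup_le_sup (MeasurableSpace.comap_mono h) (MeasurableSpace.comap_mono h)

theorem IsCBER.mono (hE : IsCBER M E) (h : M ≤ M') : IsCBER M' E :=
  ⟨hE.1, prod_measurableSpace_mono h _ hE.2.1, hE.2.2⟩

theorem IsHyperfinite.mono (hE : IsHyperfinite M E) (h : M ≤ M') : IsHyperfinite M' E :=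
  let ⟨F, hF, hmeas, hF'⟩ := hE
  ⟨F, hF, fun k => prod_measurableSpace_mono h _ (hmeas k), hF'⟩

end BorelOrbits

theorem coe_lt_bgp_self {d : α → α → ℝ} (o : α) (ξ : Bdry d) (r : ℝ) :
    (r : EReal) < bgp d o ξ ξ := by
  induction ξ using Quot.ind with | mk z => ?_
  obtain ⟨N, hN⟩ := z.2 o (r + 1)
  calc (r : EReal) < (r + 1 : ℝ) := EReal.coe_lt_coe_iff.2 (lt_add_one r)
    _ ≤ Filter.liminf (fun i : ℕ × ℕ => (gprod d (z.1 i.1) (z.1 i.2) o : EReal)) Filter.atTop := by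
        refine Filter.le_liminf_of_le (by isBoundedDefault) ?_
        filter_upwards [Filter.eventually_ge_atTop (N, N)] with i hi
        exact EReal.coe_le_coe_iff.2 (hN _ hi.1 _ hi.2)
    _ ≤ bgp d o (Quot.mk _ z) (Quot.mk _ z) := le_sSup ⟨z, z, rfl, rfl, rfl⟩

section BorelBoundary

open Filter Topology MeasureTheory

variable {H : Subgroup G} {d : G → G → ℝ} {n : G → G → ℕ} {ρ : G ⧸ H → G → G → ℝ} {K : ℝ}
  {m : G → G → ℕ} {C : G ⧸ H} {u v : G} {ξ η : Bdry fun x y => (m x y : ℝ)}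

namespace SepMetric

variable (D : SepMetric H d n ρ K m)

theorem bdryNearest_eq_of_four_lt_bgp (h : (4 : ℝ) < bgp (fun x y => (m x y : ℝ)) u ξ η) :
    D.bdryNearest (u : G ⧸ H) ξ = D.bdryNearest u η := by
  obtain ⟨_, ⟨z, w, rfl, rfl, rfl⟩, h⟩ := lt_sSup_iff.1 h
  have hlt := eventually_lt_of_lt_liminf h (by isBoundedDefault)
  rw [← prod_atTop_atTop_eq] at hlt
  have hzw := (D.eventually_nearest_eq (u : G ⧸ H) z).prod_mk (D.eventually_nearest_eq u w)
  obtain ⟨i, hi, hzi, hwi⟩ := (hlt.and hzw).exists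
  rw [← hzi, ← hwi]
  exact D.nearest_eq_of_four_lt_gprod rfl (EReal.coe_lt_coe_iff.1 hi)

/-- The set of boundary points having `u` among their nearest points on the coset of `u`. -/
def shadow (u : G) : Set (Bdry fun x y => (m x y : ℝ)) :=
  {ξ | u ∈ D.bdryNearest (u : G ⧸ H) ξ}

theorem isOpen_shadow (u : G) : IsOpen[bdryTop _] (D.shadow u) := by
  let := bdryTop fun x y => (m x y : ℝ)
  have hunion : D.shadow u =
      ⋃ ξ ∈ D.shadow u, {η | (4 : ℝ) < bgp (fun x y => (m x y : ℝ)) u ξ η} := by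
    refine Set.Subset.antisymm
      (fun ξ hξ => Set.mem_biUnion hξ (coe_lt_bgp_self u ξ 4)) (Set.iUnion₂_subset ?_)
    exact fun ξ hξ η hη => (D.bdryNearest_eq_of_four_lt_bgp hη).subset hξ
  rw [hunion]
  exact isOpen_biUnion fun ξ _ => TopologicalSpace.isOpen_generateFrom_of_mem ⟨ξ, u, 4, rfl⟩

/-- The σ-algebra generated by the shadows. It is countably generated when `G` is countable, unlike
possibly the Borel σ-algebra of the boundary, which contains it. -/
abbrev shadowMeasurableSpace : MeasurableSpace (Bdry fun x y => (m x y : ℝ)) :=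
  MeasurableSpace.generateFrom (Set.range D.shadow)

theorem shadowMeasurableSpace_le_borel : D.shadowMeasurableSpace ≤ @borel _ (bdryTop _) := by
  refine MeasurableSpace.generateFrom_le ?_
  rintro _ ⟨u, rfl⟩
  exact MeasurableSpace.measurableSet_generateFrom (D.isOpen_shadow u)

theorem mem_bdryNearest_iff :
    u ∈ D.bdryNearest C ξ ↔ (u : G ⧸ H) = C ∧ ξ ∈ D.shadow u :=
  ⟨fun hu => by
    obtain rfl := D.mk_eq_of_mem_bdryNearest hu
    exact ⟨rfl, hu⟩, fun ⟨hC, hu⟩ => hC ▸ hu⟩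

theorem measurable_mem_bdryNearest (u : G) (C : G ⧸ H) :
    Measurable[D.shadowMeasurableSpace] fun ξ => u ∈ D.bdryNearest C ξ := by
  let := D.shadowMeasurableSpace
  simp only [D.mem_bdryNearest_iff]
  exact measurable_const.and
    (measurableSet_setOfPred.1 (MeasurableSpace.measurableSet_generateFrom ⟨u, rfl⟩))

theorem measurableConstSMul_bdry :
    letI := bdryAction (d := fun x y => (m x y : ℝ)) D.graph.graphMetric.inv
    letI := D.shadowMeasurableSpace
    MeasurableConstSMul G (Bdry fun x y => (m x y : ℝ)) := by
  let := bdryAction (d := fun x y => (m x y : ℝ)) D.graph.graphMetric.inv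
  let := D.shadowMeasurableSpace
  refine ⟨fun g => measurable_generateFrom ?_⟩
  rintro _ ⟨u, rfl⟩
  have hpre : (g • ·) ⁻¹' D.shadow u = {ξ | g⁻¹ * u ∈ D.bdryNearest (g⁻¹ • (u : G ⧸ H)) ξ} := by
    ext ξ
    have := D.mul_mem_bdryNearest_smul_iff (u := g⁻¹ * u) (C := g⁻¹ • (u : G ⧸ H)) (ξ := ξ) g
    rwa [mul_inv_cancel_left, smul_inv_smul] at this
  rw [hpre]
  exact measurableSet_setOfPred.2 (D.measurable_mem_bdryNearest _ _)

variable [Countable G]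

theorem almostEquivariant_gates :
    letI := bdryAction (d := fun x y => (m x y : ℝ)) D.graph.graphMetric.inv
    letI := D.shadowMeasurableSpace
    AlmostEquivariant (D.gates 1) fun v => cosetDist n 1 (v : G ⧸ H) := by
  let := bdryAction (d := fun x y => (m x y : ℝ)) D.graph.graphMetric.inv
  let := D.shadowMeasurableSpace
  refine ⟨D.infinite_gates 1, D.finite_gates_cosetDist_le 1, fun g ξ => ?_, fun v => ?_⟩
  · obtain ⟨c, hc⟩ := D.eventually_mem_gates 1 g⁻¹ ξ
    obtain ⟨_, hc'⟩ := D.eventually_mem_gates g⁻¹ 1 ξ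
    refine ⟨c, ?_⟩
    filter_upwards [hc, hc'] with v hv hv'
    have hgates := D.mul_mem_gates_iff (x := g⁻¹) (v := v) (ξ := ξ) g
    have hdist := D.system.graph.cosetDist_smul g (v : G ⧸ H) g⁻¹
    rw [mul_inv_cancel] at hgates hdist
    exact ⟨⟨fun h => hgates.2 (hv h).1, fun h => (hv' (hgates.1 h)).1⟩,
      fun h => (congrArg _ hdist).trans (hv h).2⟩
  · exact (D.measurable_mem_bdryNearest v v).and <| .exists fun u => measurable_const.and <|
      .exists fun w => (D.measurable_mem_bdryNearest w v).and measurable_const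

theorem countablySeparated_bdry :
    letI := D.shadowMeasurableSpace
    MeasurableSpace.CountablySeparated (Bdry fun x y => (m x y : ℝ)) := by
  let := D.shadowMeasurableSpace
  refine ⟨⟨Set.range D.shadow, Set.countable_range _, ?_, fun ξ _ η _ h => ?_⟩⟩
  · rintro _ ⟨u, rfl⟩
    exact MeasurableSpace.measurableSet_generateFrom ⟨u, rfl⟩
  · refine D.bdryNearest_injective (funext fun C => Set.ext fun u => ?_)
    rw [D.mem_bdryNearest_iff, D.mem_bdryNearest_iff, h _ ⟨u, rfl⟩]

include D in
theorem isCBER_isHyperfinite_orbRel :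
    IsCBER (@borel _ (bdryTop _)) (OrbRel fun x y => (m x y : ℝ)) ∧
      IsHyperfinite (@borel _ (bdryTop _)) (OrbRel fun x y => (m x y : ℝ)) := by
  let := bdryAction (d := fun x y => (m x y : ℝ)) D.graph.graphMetric.inv
  let := D.shadowMeasurableSpace
  have := D.measurableConstSMul_bdry
  have := D.countablySeparated_bdry
  rw [orbRel_eq D.graph.graphMetric.inv]
  exact ⟨isCBER_orbit.mono D.shadowMeasurableSpace_le_borel,
    D.almostEquivariant_gates.isHyperfinite.mono D.shadowMeasurableSpace_le_borel⟩

end SepMetric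

end BorelBoundary

theorem coneOff_wordDist {X : Set G} (hX : Subgroup.closure X = ⊤) (H : Subgroup G) :
    ConeOff (fun x y => (wordDist X x y : ℝ)) H (wordDist (X ∪ H)) := by
  have hXH : Subgroup.closure (X ∪ H) = ⊤ :=
    top_le_iff.1 (hX ▸ Subgroup.closure_mono Set.subset_union_left)
  refine ⟨graphDist_wordDist hXH, fun x y => ?_, fun x y h => ?_, fun x y h =>
    wordDist_le_one_of_mem (Or.inr (QuotientGroup.eq.1 h))⟩
  · obtain ⟨L, hL, hprod, hlen⟩ := exists_list_length_eq_wordDist hX x y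
    rw [← hlen, Nat.cast_le]
    exact wordDist_le_length (fun z hz => (hL z hz).imp Or.inl Or.inl) hprod
  · rcases eq_or_mem_of_wordDist_le_one hXH h with rfl | (h | h) | (h | h)
    · exact Or.inr rfl
    · exact Or.inl (by exact_mod_cast wordDist_le_one_of_mem h)
    · exact Or.inr (QuotientGroup.eq.2 h)
    · rw [(graphDist_wordDist hX).comm]
      exact Or.inl (by exact_mod_cast wordDist_le_one_of_mem h)
    · exact Or.inr (QuotientGroup.eq.2 h).symm

theorem closure_wordDist_le_one {X : Set G} (hX : Subgroup.closure X = ⊤) :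
    Subgroup.closure {g : G | (wordDist X 1 g : ℝ) ≤ 1} = ⊤ := by
  refine top_le_iff.1 (hX ▸ Subgroup.closure_mono fun g hg => ?_)
  have hle : wordDist X 1 g ≤ 1 := wordDist_le_one_of_mem (by rwa [inv_one, one_mul])
  simpa using hle

/-- Theorem 1.1: every countable acylindrically hyperbolic group admits
a generating set `S` with `Γ(G,S)` hyperbolic, `|∂Γ(G,S)| > 2`, the action on
`Γ(G,S)` acylindrical, and the orbit equivalence relation of the action on
`∂Γ(G,S)` a hyperfinite countable Borel equivalence relation (with respect to the
Borel σ-algebra of the canonical topology on the boundary). -/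
theorem statement0 (G : Type*) [Group G] [Countable G]
    (hAH : ∃ X : Set G, Subgroup.closure X = ⊤ ∧ IsHyperbolic (wdist X) ∧
      (∃ a b c : Bdry (wdist X), a ≠ b ∧ a ≠ c ∧ b ≠ c) ∧ AcylDist (wdist X)) :
    ∃ S : Set G, Subgroup.closure S = ⊤ ∧ IsHyperbolic (wdist S) ∧
      (∃ a b c : Bdry (wdist S), a ≠ b ∧ a ≠ c ∧ b ≠ c) ∧ AcylDist (wdist S) ∧
      IsCBER (@borel _ (bdryTop (wdist S))) (OrbRel (wdist S)) ∧
      IsHyperfinite (@borel _ (bdryTop (wdist S))) (OrbRel (wdist S)) := by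
  obtain ⟨X, hX, ⟨δ, hδ₀, hδ⟩, hthree, hac⟩ := hAH
  rw [wdist_eq_wordDist hX] at hδ hthree hac
  obtain ⟨H, κ, E⟩ :=
    exists_hypEmbedded (graphDist_wordDist hX).graphMetric hδ hδ₀ hac hthree
  obtain ⟨ρ, K, P⟩ := E.exists_projectionSystem (coneOff_wordDist hX H)
  obtain ⟨S, hS, D⟩ := P.exists_sepMetric (closure_wordDist_le_one hX)
  refine ⟨S, hS, ?_⟩
  rw [wdist_eq_wordDist hS]
  exact ⟨⟨9, by norm_num, D.hyperbolicWith_nine⟩, D.exists_three_bdry, D.acylDist,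
    D.isCBER_isHyperfinite_orbRel⟩

end ArXiv
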